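/- Assume d ≥ 2, 2 < p < 2_s^⋆, and let (g_ε) be (s,γ)-admissible for some s > d/(d+1) and γ > 1. Set α₁ := (d+1)(1/2 − 1/p). Then there exist constants 0 < c' ≤ C' < ∞ and ε₀ ∈ (0,1), depending only on d, p, s, γ and the admissibility constants, such that for all ε ∈ (0, ε₀): c' ε^{1 − min(1,α₁)/γ} ≤ R^∘_ε(p) ≤ C' ε^{1 − min(1,α₁)/γ}. -/

import Mathlib

open MeasureTheory Real Filter
open scoped ENNReal FourierTransform RealInnerProductSpace Topology

noncomputable section

/-- Euclidean space `ℝ^d`. -/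
abbrev Rd (d : ℕ) : Type := EuclideanSpace ℝ (Fin d)

/-- `U` is the (distributional, hence `L²`-) Fourier transform of `u`:
it pairs against Schwartz functions the way the Fourier transform of `u` must. -/
def IsFT {d : ℕ} (U u : Rd d → ℂ) : Prop :=
  ∀ φ : SchwartzMap (Rd d) ℂ, ∫ ξ, U ξ * φ ξ = ∫ x, u x * 𝓕 (⇑φ) x

/-- An element of `H^s(ℝ^d)`: an `L²` function `toFun` together with its Fourier
transform `ft`, satisfying the `H^s` integrability condition. -/
structure HsFn (d : ℕ) (s : ℝ) where
  toFun : Rd d → ℂ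
  ft : Rd d → ℂ
  memL2 : MemLp toFun 2 volume
  ft_memL2 : MemLp ft 2 volume
  isFT : IsFT ft toFun
  memHs : Integrable (fun ξ : Rd d => ‖ft ξ‖ ^ 2 * (1 + ‖ξ‖ ^ 2) ^ s) volume

/-- The quadratic form `q_ε(u) = ∫ |û(ξ)|² g(|ξ|) dξ` (for a fixed symbol `g`). -/
def qeps {d : ℕ} {s : ℝ} (g : ℝ → ℝ) (u : HsFn d s) : ℝ :=
  ∫ ξ : Rd d, ‖u.ft ξ‖ ^ 2 * g ‖ξ‖

/-- The `L^p` norm (as a real number). -/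
def LpN {d : ℕ} (p : ℝ) (f : Rd d → ℂ) : ℝ :=
  (eLpNorm f (ENNReal.ofReal p) volume).toReal

/-- The set of values of the Rayleigh quotient `q_ε(u)/‖u‖_p²` over nonzero
`u ∈ H^s` satisfying the symmetry constraint `P`. -/
def RayleighSet (d : ℕ) (s p : ℝ) (g : ℝ → ℝ) (P : (Rd d → ℂ) → Prop) : Set ℝ :=
  {t | ∃ u : HsFn d s, P u.toFun ∧ ¬ u.toFun =ᵐ[volume] (fun _ => (0 : ℂ)) ∧
      MemLp u.toFun (ENNReal.ofReal p) volume ∧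
      t = qeps g u / LpN p u.toFun ^ 2}

/-- The Rayleigh quotient infimum. -/
def Rayleigh (d : ℕ) (s p : ℝ) (g : ℝ → ℝ) (P : (Rd d → ℂ) → Prop) : ℝ :=
  sInf (RayleighSet d s p g P)

/-- The Rayleigh quotient infimum is attained. -/
def Attained (d : ℕ) (s p : ℝ) (g : ℝ → ℝ) (P : (Rd d → ℂ) → Prop) : Prop :=
  ∃ u : HsFn d s, P u.toFun ∧ ¬ u.toFun =ᵐ[volume] (fun _ => (0 : ℂ)) ∧
      MemLp u.toFun (ENNReal.ofReal p) volume ∧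
      qeps g u / LpN p u.toFun ^ 2 = Rayleigh d s p g P

/-- A radial function. -/
def Radial {d : ℕ} (f : Rd d → ℂ) : Prop := ∀ x y : Rd d, ‖x‖ = ‖y‖ → f x = f y

/-- The squared norm of the first block of coordinates (the first `d - k` ones),
under the identification `ℝ^d = ℝ^{d-k} × ℝ^k`. -/
def blockSq (d k : ℕ) (x : Rd d) : ℝ := ∑ i : Fin d, if (i : ℕ) < d - k then x i ^ 2 else 0

/-- A `G_k = O(d-k) × O(k)`-symmetric function: it depends only on the norms of the
two blocks of coordinates. -/
def GkSymmetric (d k : ℕ) (f : Rd d → ℂ) : Prop :=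
  ∀ x y : Rd d, blockSq d k x = blockSq d k y → ‖x‖ = ‖y‖ → f x = f y

/-- An `(s,γ)`-admissible family of symbols, with admissibility constants `c, C`. -/
def IsAdmissible (s γ c C : ℝ) (g : ℝ → ℝ → ℝ) : Prop :=
  (∀ ε ∈ Set.Ioo (0:ℝ) 1, Measurable (g ε)) ∧
  (∀ ε ∈ Set.Ioo (0:ℝ) 1, ∀ r : ℝ, 0 < g ε r) ∧
  (∀ ε ∈ Set.Ioo (0:ℝ) 1, ∀ r : ℝ, 1/2 ≤ |r - 1| →
      c * (1 + |r| ^ (2*s)) ≤ g ε r ∧ g ε r ≤ C * (1 + |r| ^ (2*s))) ∧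
  (∀ ε ∈ Set.Ioo (0:ℝ) 1, ∀ r : ℝ, |r - 1| ≤ 1/2 →
      c * (ε + |r - 1| ^ γ) ≤ g ε r ∧ g ε r ≤ C * (ε + |r - 1| ^ γ))

/-- The `G_k`-symmetric Stein–Tomas exponent `2_⋆^k`. -/
def twoStarK (d k : ℕ) : ℝ :=
  2 * ((d : ℝ) + (min k (d - k) : ℕ)) / ((d : ℝ) - 2 + (min k (d - k) : ℕ))

/-- The interpolation parameter `α_k`. -/
def alphaK (d k : ℕ) (p : ℝ) : ℝ := (1/2 - 1/p) / (1/2 - 1/twoStarK d k)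

/-- The spherical shell `A_{ε,δ}` around the unit sphere (with `I_{ε,δ}` scale `ε^{1/γ}`). -/
def Aset (d : ℕ) (γ ε δ : ℝ) : Set (Rd d) :=
  {ξ | δ * ε ^ (1/γ) ≤ |‖ξ‖ - 1| ∧ |‖ξ‖ - 1| ≤ δ⁻¹ * ε ^ (1/γ)}

/-!
The lower bound rests on a Stein–Tomas estimate for the shell `||ξ| - 1| ≤ l` with the sharp power
of `l`. Put `w(ξ) = (l + i) + (l - i) |ξ|²`, so that `Re (1 / w)` is at least a constant times
`1 / l` on the shell. The multiplier `w^{-z}` is bounded on the line `Re z = 0`, while on the line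
`Re z = (d + 1) / 2` the kernel of `Γ(z) w^{-z} = ∫ t^{z-1} e^{-t w} dt`, a superposition of complex
Gaussians, is bounded uniformly in `l`, both up to admissible growth in `Im z`. Stein interpolation
at `z = 1` gives the estimate at the Stein–Tomas exponent. Summing it over dyadic shells against the
weight `ε + ||ξ| - 1|^γ`, using the Sobolev embedding away from the sphere and dualising yields the
lower bound. The upper bound comes from two test functions `𝓕⁻ 1_B`: `B` is the shell of thickness
`ε^{1/γ}` when `α₁ ≥ 1`, and a Knapp box of dimensions `ε^{1/γ} × ε^{1/(2γ)} × ⋯ × ε^{1/(2γ)}`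
tangent to the sphere otherwise.
-/

open scoped ComplexConjugate SchwartzMap

/-! ### The Fourier transform on `L¹ ∩ L²` -/

section Fourier

variable {V : Type*} [NormedAddCommGroup V] [InnerProductSpace ℝ V] [FiniteDimensional ℝ V]
  [MeasurableSpace V] [BorelSpace V]

theorem ae_eq_of_forall_integral_mul_schwartz_eq {U W : V → ℂ} (hU : LocallyIntegrable U)
    (hW : LocallyIntegrable W)
    (h : ∀ φ : 𝓢(V, ℂ), ∫ ξ, U ξ * φ ξ = ∫ ξ, W ξ * φ ξ) : U =ᵐ[volume] W := by
  refine ae_eq_of_integral_contDiff_smul_eq hU hW fun g hg hgc => ?_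
  have hgc' : HasCompactSupport fun x => (g x : ℂ) :=
    hgc.comp_left (g := fun r : ℝ => (r : ℂ)) Complex.ofReal_zero
  have hg' : ContDiff ℝ (⊤ : ℕ∞) fun x => (g x : ℂ) := Complex.ofRealCLM.contDiff.comp hg
  simpa [mul_comm] using h (hgc'.toSchwartzMap hg')

theorem integral_fourier_mul_eq {f g : V → ℂ} (hf : Integrable f) (hg : Integrable g) :
    ∫ ξ, 𝓕 f ξ * g ξ = ∫ x, f x * 𝓕 g x := by
  have h := VectorFourier.integral_bilin_fourierIntegral_eq_flip (μ := volume) (ν := volume)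
    (ContinuousLinearMap.mul ℂ ℂ) (L := innerₗ V) continuous_fourierChar continuous_inner hf hg
  simpa using! h

theorem continuous_fourier {f : V → ℂ} (hf : Integrable f) : Continuous (𝓕 f) :=
  VectorFourier.fourierIntegral_continuous continuous_fourierChar (by exact continuous_inner) hf

theorem norm_fourier_le_integral_norm (f : V → ℂ) (ξ : V) : ‖𝓕 f ξ‖ ≤ ∫ x, ‖f x‖ :=
  VectorFourier.norm_fourierIntegral_le_integral_norm _ _ _ _ _

theorem fourier_toLp_ae_eq_of_pairing {U u : V → ℂ} (hU : LocallyIntegrable U)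
    (hu : MemLp u 2) (h : ∀ φ : 𝓢(V, ℂ), ∫ ξ, U ξ * φ ξ = ∫ x, u x * 𝓕 (⇑φ) x) :
    (𝓕 (hu.toLp u) : Lp ℂ 2 (volume : Measure V)) =ᵐ[volume] U := by
  refine ae_eq_of_forall_integral_mul_schwartz_eq
    ((Lp.memLp _).locallyIntegrable (by norm_num)) hU fun φ => ?_
  have hpair := congrArg (fun T => T φ) (Lp.fourier_toTemperedDistribution_eq (hu.toLp u))
  simp only [TemperedDistribution.fourier_apply, Lp.toTemperedDistribution_apply, smul_eq_mul,
    mul_comm] at hpair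
  rw [h φ, ← hpair]
  refine integral_congr_ae ?_
  filter_upwards [hu.coeFn_toLp] with x hx
  rw [hx, SchwartzMap.fourier_coe]

theorem fourier_toLp_ae_eq_fourier {f : V → ℂ} (hf : Integrable f) (hf₂ : MemLp f 2) :
    (𝓕 (hf₂.toLp f) : Lp ℂ 2 (volume : Measure V)) =ᵐ[volume] 𝓕 f :=
  fourier_toLp_ae_eq_of_pairing (continuous_fourier hf).locallyIntegrable hf₂
    fun φ => integral_fourier_mul_eq hf φ.integrable

theorem memLp_two_fourier {f : V → ℂ} (hf : Integrable f) (hf₂ : MemLp f 2) : MemLp (𝓕 f) 2 :=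
  (memLp_congr_ae (fourier_toLp_ae_eq_fourier hf hf₂)).1 (Lp.memLp _)

theorem eLpNorm_two_fourier {f : V → ℂ} (hf : Integrable f) (hf₂ : MemLp f 2) :
    eLpNorm (𝓕 f) 2 volume = eLpNorm f 2 volume := by
  rw [← eLpNorm_congr_ae (fourier_toLp_ae_eq_fourier hf hf₂), ← eLpNorm_congr_ae hf₂.coeFn_toLp]
  have h := Lp.norm_fourier_eq (hf₂.toLp f)
  rw [Lp.norm_def, Lp.norm_def] at h
  exact (ENNReal.toReal_eq_toReal_iff' (Lp.eLpNorm_ne_top _) (Lp.eLpNorm_ne_top _)).1 h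

theorem fourierInv_eq_fourier_comp_neg_apply (f : V → ℂ) : 𝓕⁻ f = fun x => 𝓕 f (-x) :=
  funext (fourierInv_eq_fourier_neg f)

theorem norm_fourierInv_le_integral_norm (f : V → ℂ) (x : V) : ‖𝓕⁻ f x‖ ≤ ∫ ξ, ‖f ξ‖ := by
  rw [fourierInv_eq_fourier_neg]
  exact norm_fourier_le_integral_norm f (-x)

theorem memLp_two_fourierInv {f : V → ℂ} (hf : Integrable f) (hf₂ : MemLp f 2) :
    MemLp (𝓕⁻ f) 2 := by
  rw [fourierInv_eq_fourier_comp_neg_apply]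
  exact (memLp_two_fourier hf hf₂).comp_measurePreserving (Measure.measurePreserving_neg volume)

theorem eLpNorm_two_fourierInv {f : V → ℂ} (hf : Integrable f) (hf₂ : MemLp f 2) :
    eLpNorm (𝓕⁻ f) 2 volume = eLpNorm f 2 volume := by
  rw [fourierInv_eq_fourier_comp_neg_apply, ← eLpNorm_two_fourier hf hf₂]
  exact eLpNorm_comp_measurePreserving (memLp_two_fourier hf hf₂).1
    (Measure.measurePreserving_neg volume)

theorem integral_fourierInv_mul_eq {f g : V → ℂ} (hf : Integrable f) (hg : Integrable g) :
    ∫ x, 𝓕⁻ f x * g x = ∫ ξ, f ξ * 𝓕⁻ g ξ := by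
  have h := integral_fourier_mul_eq hf hg.comp_neg
  rw [← integral_neg_eq_self] at h
  simpa only [neg_neg, ← fourierInv_eq_fourier_neg, ← fourierInv_eq_fourier_comp_neg] using h

theorem conj_fourier_conj (f : V → ℂ) (ξ : V) : conj (𝓕 (fun x => conj (f x)) ξ) = 𝓕⁻ f ξ := by
  rw [fourier_eq', fourierInv_eq', ← integral_conj]
  congr 1; ext x
  simp [← Complex.exp_conj, map_ofNat]

theorem integrable_conj {f : V → ℂ} (hf : Integrable f) : Integrable fun x => conj (f x) :=
  memLp_one_iff_integrable.1 (memLp_one_iff_integrable.2 hf).star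

theorem integral_norm_sq_eq_toReal_eLpNorm_sq {α E : Type*} [MeasurableSpace α]
    [NormedAddCommGroup E] {μ : Measure α} {f : α → E} (hf : MemLp f 2 μ) :
    ∫ x, ‖f x‖ ^ 2 ∂μ = (eLpNorm f 2 μ).toReal ^ 2 := by
  have h0 : 0 ≤ ∫ x, ‖f x‖ ^ (2 : ℝ) ∂μ := integral_nonneg fun x => by positivity
  rw [hf.eLpNorm_eq_integral_rpow_norm two_ne_zero ENNReal.ofNat_ne_top, ENNReal.toReal_ofNat,
    ENNReal.toReal_ofReal (by positivity), ← rpow_natCast, ← rpow_mul h0]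
  simp

theorem integral_norm_sq_fourier {f : V → ℂ} (hf : Integrable f) (hf₂ : MemLp f 2) :
    ∫ ξ, ‖𝓕 f ξ‖ ^ 2 = ∫ x, ‖f x‖ ^ 2 := by
  rw [integral_norm_sq_eq_toReal_eLpNorm_sq (memLp_two_fourier hf hf₂),
    integral_norm_sq_eq_toReal_eLpNorm_sq hf₂, eLpNorm_two_fourier hf hf₂]

theorem fourier_mul_conj_fourier_eq_integral {m g : V → ℂ} (hm : Integrable m) (hg : Integrable g)
    (x : V) : 𝓕 (fun ξ => m ξ * conj (𝓕 g ξ)) x = ∫ y, conj (g y) * 𝓕 m (x - y) := by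
  let M : V → ℂ := fun ξ => Complex.exp (((-2 * π * ⟪ξ, x⟫ : ℝ) : ℂ) * Complex.I) * m ξ
  have hM : Integrable M := hm.bdd_mul (c := 1)
    (by fun_prop : Continuous _).aestronglyMeasurable
    (Eventually.of_forall fun ξ => (Complex.norm_exp_ofReal_mul_I _).le)
  have fourierInv_M (y : V) : 𝓕⁻ M y = 𝓕 m (x - y) := by
    rw [fourierInv_eq', fourier_eq']
    congr 1; ext ξ
    rw [smul_eq_mul, smul_eq_mul, ← mul_assoc, ← Complex.exp_add, inner_sub_right]
    congr 2; push_cast; ring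
  have conj_fourier (ξ : V) : conj (𝓕 g ξ) = 𝓕⁻ (fun x => conj (g x)) ξ := by
    simp [← conj_fourier_conj]
  simp_rw [← fourierInv_M]
  rw [← integral_fourierInv_mul_eq (integrable_conj hg) hM, fourier_eq']
  congr 1; ext ξ
  rw [← conj_fourier, smul_eq_mul]; ring

/-- The multiplier `m` acts as convolution with `𝓕 m`, which maps `L¹` to `L^∞`. -/
theorem norm_integral_mul_fourier_mul_conj_fourier_le {m f g : V → ℂ} {A : ℝ}
    (hm : Integrable m) (hA : ∀ x, ‖𝓕 m x‖ ≤ A) (hf : Integrable f) (hg : Integrable g) :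
    ‖∫ ξ, m ξ * (𝓕 f ξ * conj (𝓕 g ξ))‖ ≤ A * (∫ x, ‖f x‖) * ∫ x, ‖g x‖ := by
  have hmg : Integrable fun ξ => m ξ * conj (𝓕 g ξ) :=
    hm.mul_bdd (Complex.continuous_conj.comp (continuous_fourier hg)).aestronglyMeasurable
      (Eventually.of_forall fun ξ => by
        rw [RCLike.norm_conj]; exact norm_fourier_le_integral_norm g ξ)
  have fourier_mul_le (x : V) : ‖𝓕 (fun ξ => m ξ * conj (𝓕 g ξ)) x‖ ≤ A * ∫ y, ‖g y‖ := by
    rw [fourier_mul_conj_fourier_eq_integral hm hg, ← integral_const_mul]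
    refine norm_integral_le_of_norm_le (hg.norm.const_mul A) (Eventually.of_forall fun y => ?_)
    rw [norm_mul, RCLike.norm_conj, mul_comm]
    exact mul_le_mul_of_nonneg_right (hA _) (norm_nonneg _)
  have pairing : ∫ ξ, m ξ * (𝓕 f ξ * conj (𝓕 g ξ)) =
      ∫ x, f x * 𝓕 (fun ξ => m ξ * conj (𝓕 g ξ)) x := by
    rw [← integral_fourier_mul_eq hf hmg]
    congr 1; ext ξ; ring
  rw [pairing, mul_right_comm, ← integral_const_mul]
  refine norm_integral_le_of_norm_le (hf.norm.const_mul _) (Eventually.of_forall fun y => ?_)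
  rw [norm_mul, mul_comm]
  exact mul_le_mul_of_nonneg_right (fourier_mul_le y) (norm_nonneg _)

end Fourier

theorem integral_mul_eq_of_isFT {d : ℕ} {U u f : Rd d → ℂ} (hU : MemLp U 2) (hu : MemLp u 2)
    (h : IsFT U u) (hf : Integrable f) (hf₂ : MemLp f 2) :
    ∫ x, u x * f x = ∫ ξ, U ξ * 𝓕⁻ f ξ := by
  have hconj₂ : MemLp (fun x => conj (f x)) 2 := hf₂.star
  have hUu := fourier_toLp_ae_eq_of_pairing (hU.locallyIntegrable (by norm_num)) hu h
  have parseval := Lp.inner_fourier_eq (hconj₂.toLp _) (hu.toLp u)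
  rw [L2.inner_def, L2.inner_def] at parseval
  calc ∫ x, u x * f x = ∫ x, inner ℂ (hconj₂.toLp _ x) (hu.toLp u x) := by
        refine integral_congr_ae ?_
        filter_upwards [hconj₂.coeFn_toLp, hu.coeFn_toLp] with x hx hy
        rw [hx, hy]; simp
    _ = ∫ ξ, inner ℂ ((𝓕 (hconj₂.toLp _) : Lp ℂ 2 (volume : Measure (Rd d))) ξ)
          ((𝓕 (hu.toLp u) : Lp ℂ 2 (volume : Measure (Rd d))) ξ) := parseval.symm
    _ = ∫ ξ, U ξ * 𝓕⁻ f ξ := by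
        refine integral_congr_ae ?_
        filter_upwards [fourier_toLp_ae_eq_fourier (integrable_conj hf) hconj₂, hUu] with ξ hx hy
        rw [hx, hy, ← conj_fourier_conj]; simp

theorem isFT_fourierInv {d : ℕ} {U : Rd d → ℂ} (hU : Integrable U) : IsFT U (𝓕⁻ U) := fun φ => by
  have h := integral_fourierInv_mul_eq hU (𝓕 φ).integrable
  rw [SchwartzMap.fourier_coe] at h
  rw [h]
  congr 1; ext x
  rw [← SchwartzMap.fourier_coe, ← SchwartzMap.fourierInv_coe]
  simp

/-! ### Oscillatory integrals -/

section NonstationaryPhase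

variable {β : ℂ} {φ φ' φ'' : ℝ → ℝ} {A A' : ℝ → ℂ} {a b K : ℝ}

theorem hasDerivAt_div_deriv_mul_cexp {r : ℝ} (hA : HasDerivAt A (A' r) r)
    (hφ : HasDerivAt φ (φ' r) r) (hφ' : HasDerivAt φ' (φ'' r) r) (h0 : φ' r ≠ 0) :
    HasDerivAt (fun r => A r / φ' r * Complex.exp (-β * φ r))
      ((A' r / φ' r - A r * φ'' r / φ' r ^ 2) * Complex.exp (-β * φ r)
        - β * (A r * Complex.exp (-β * φ r))) r := by
  have h0' : (φ' r : ℂ) ≠ 0 := by exact_mod_cast h0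
  have h := (hA.div hφ'.ofReal_comp h0').mul (hφ.ofReal_comp.const_mul (-β)).cexp
  convert! h using 1
  simp only [Pi.div_apply]
  field_simp
  ring

theorem integral_deriv_div_sq_le {Λ : ℝ} (hΛ : 0 < Λ) (hab : a ≤ b)
    (hφ' : ∀ r ∈ Set.Icc a b, HasDerivAt φ' (φ'' r) r) (hφ''c : ContinuousOn φ'' (Set.Icc a b))
    (hΛφ' : ∀ r ∈ Set.Icc a b, Λ ≤ |φ' r|) :
    ∫ r in a..b, φ'' r / φ' r ^ 2 ≤ 2 / Λ := by
  rw [← Set.uIcc_of_le hab] at *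
  have hne (r) (hr : r ∈ Set.uIcc a b) : φ' r ≠ 0 := abs_pos.1 (hΛ.trans_le (hΛφ' r hr))
  have hderiv (r) (hr : r ∈ Set.uIcc a b) :
      HasDerivAt (fun r => -(φ' r)⁻¹) (φ'' r / φ' r ^ 2) r := by
    convert! ((hφ' r hr).inv (hne r hr)).neg using 1
    ring
  have hcont : ContinuousOn (fun r => φ'' r / φ' r ^ 2) (Set.uIcc a b) :=
    hφ''c.div (ContinuousOn.pow (fun r hr => (hφ' r hr).continuousAt.continuousWithinAt) 2)
      fun r hr => pow_ne_zero _ (hne r hr)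
  have hinv (r) (hr : r ∈ Set.uIcc a b) : |(φ' r)⁻¹| ≤ 1 / Λ := by
    rw [abs_inv, ← one_div]
    exact one_div_le_one_div_of_le hΛ (hΛφ' r hr)
  rw [intervalIntegral.integral_eq_sub_of_hasDerivAt hderiv hcont.intervalIntegrable]
  have hA := abs_le.1 (hinv a Set.left_mem_uIcc)
  have hB := abs_le.1 (hinv b Set.right_mem_uIcc)
  have : 2 / Λ = 1 / Λ + 1 / Λ := by ring
  linarith

theorem norm_cexp_neg_mul_ofReal_le_one (hβ : 0 ≤ β.re) {x : ℝ} (hx : 0 ≤ x) :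
    ‖Complex.exp (-β * x)‖ ≤ 1 := by
  rw [Complex.norm_exp, exp_le_one_iff, Complex.re_mul_ofReal, Complex.neg_re]
  nlinarith [mul_nonneg hβ hx]

theorem norm_deriv_div_sub_mul_div_sq_le {z z' : ℂ} {x x' : ℝ} (hx : x ≠ 0) (hx' : 0 ≤ x')
    (hz : ‖z‖ ≤ 1) (hz' : ‖z'‖ * |x| ≤ K * x') :
    ‖z' / x - z * x' / x ^ 2‖ ≤ (K + 1) * (x' / x ^ 2) := by
  have hpos : 0 < |x| := abs_pos.2 hx
  have first : ‖z'‖ / |x| ≤ K * x' / x ^ 2 := by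
    rw [← sq_abs x, div_le_div_iff₀ hpos (by positivity)]
    nlinarith [mul_le_mul_of_nonneg_right hz' hpos.le]
  have second : ‖z‖ * x' / x ^ 2 ≤ 1 * x' / x ^ 2 := by gcongr
  calc ‖z' / x - z * x' / x ^ 2‖ ≤ ‖z' / x‖ + ‖z * x' / x ^ 2‖ := norm_sub_le _ _
    _ = ‖z'‖ / |x| + ‖z‖ * x' / x ^ 2 := by simp [abs_of_nonneg hx']
    _ ≤ K * x' / x ^ 2 + 1 * x' / x ^ 2 := add_le_add first second
    _ = (K + 1) * (x' / x ^ 2) := by ring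

theorem integral_mul_cexp_neg_mul_by_parts (hab : a ≤ b)
    (hA : ∀ r ∈ Set.Icc a b, HasDerivAt A (A' r) r)
    (hφ : ∀ r ∈ Set.Icc a b, HasDerivAt φ (φ' r) r)
    (hφ' : ∀ r ∈ Set.Icc a b, HasDerivAt φ' (φ'' r) r)
    (hA'c : ContinuousOn A' (Set.Icc a b)) (hφ''c : ContinuousOn φ'' (Set.Icc a b))
    (hne : ∀ r ∈ Set.Icc a b, φ' r ≠ 0) :
    β * ∫ r in a..b, A r * Complex.exp (-β * φ r) =
      (∫ r in a..b, (A' r / φ' r - A r * φ'' r / φ' r ^ 2) * Complex.exp (-β * φ r)) -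
        (A b / φ' b * Complex.exp (-β * φ b) - A a / φ' a * Complex.exp (-β * φ a)) := by
  rw [← Set.uIcc_of_le hab] at *
  have hne₁ : ∀ r ∈ Set.uIcc a b, (φ' r : ℂ) ≠ 0 := fun r hr => by exact_mod_cast hne r hr
  have hne₂ : ∀ r ∈ Set.uIcc a b, (φ' r : ℂ) ^ 2 ≠ 0 := fun r hr => pow_ne_zero _ (hne₁ r hr)
  have hAc := HasDerivAt.continuousOn hA
  have hφc := HasDerivAt.continuousOn hφ
  have hφ'c := HasDerivAt.continuousOn hφ'
  have hD : IntervalIntegrable (fun r => (A' r / φ' r - A r * φ'' r / φ' r ^ 2) *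
      Complex.exp (-β * φ r)) volume a b :=
    ContinuousOn.intervalIntegrable (by fun_prop (disch := assumption))
  have hAe : IntervalIntegrable (fun r => A r * Complex.exp (-β * φ r)) volume a b :=
    ContinuousOn.intervalIntegrable (by fun_prop)
  rw [← intervalIntegral.integral_eq_sub_of_hasDerivAt
    (f := fun r => A r / φ' r * Complex.exp (-β * φ r))
    (fun r hr => hasDerivAt_div_deriv_mul_cexp (hA r hr) (hφ r hr) (hφ' r hr) (hne r hr))
    (hD.sub (hAe.const_mul β)), intervalIntegral.integral_sub hD (hAe.const_mul β),
    intervalIntegral.integral_const_mul]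
  ring

/-- The bound on `A'` makes the derivative of `A / φ'` comparable to `φ'' / φ' ^ 2`, the derivative
of `-1 / φ'`. -/
theorem norm_integral_mul_cexp_neg_mul_le {Λ : ℝ} (hΛ : 0 < Λ) (hβ : 0 ≤ β.re) (hβ₁ : 1 ≤ ‖β‖)
    (hab : a ≤ b) (hK : 0 ≤ K) (hA : ∀ r ∈ Set.Icc a b, HasDerivAt A (A' r) r)
    (hφ : ∀ r ∈ Set.Icc a b, HasDerivAt φ (φ' r) r)
    (hφ' : ∀ r ∈ Set.Icc a b, HasDerivAt φ' (φ'' r) r)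
    (hA'c : ContinuousOn A' (Set.Icc a b)) (hφ''c : ContinuousOn φ'' (Set.Icc a b))
    (hφ0 : ∀ r ∈ Set.Icc a b, 0 ≤ φ r) (hφ''0 : ∀ r ∈ Set.Icc a b, 0 ≤ φ'' r)
    (hΛφ' : ∀ r ∈ Set.Icc a b, Λ ≤ |φ' r|) (hA₁ : ∀ r ∈ Set.Icc a b, ‖A r‖ ≤ 1)
    (hA' : ∀ r ∈ Set.Icc a b, ‖A' r‖ * |φ' r| ≤ K * φ'' r) :
    ‖∫ r in a..b, A r * Complex.exp (-β * φ r)‖ ≤ 2 * (K + 2) / Λ := by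
  have hne (r) (hr : r ∈ Set.Icc a b) : φ' r ≠ 0 := abs_pos.1 (hΛ.trans_le (hΛφ' r hr))
  have he (r) (hr : r ∈ Set.Icc a b) : ‖Complex.exp (-β * φ r)‖ ≤ 1 :=
    norm_cexp_neg_mul_ofReal_le_one hβ (hφ0 r hr)
  have boundary (r) (hr : r ∈ Set.Icc a b) :
      ‖A r / φ' r * Complex.exp (-β * φ r)‖ ≤ 1 / Λ := by
    rw [norm_mul, norm_div, Complex.norm_real, norm_eq_abs, ← mul_one (1 / Λ)]
    gcongr
    exacts [hA₁ r hr, hΛφ' r hr, he r hr]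
  have interior : ‖∫ r in a..b, (A' r / φ' r - A r * φ'' r / φ' r ^ 2) *
      Complex.exp (-β * φ r)‖ ≤ (K + 1) * (2 / Λ) := by
    have hint : ContinuousOn (fun r => (K + 1) * (φ'' r / φ' r ^ 2)) (Set.uIcc a b) := by
      rw [Set.uIcc_of_le hab]
      exact continuousOn_const.mul (hφ''c.div ((HasDerivAt.continuousOn hφ').pow 2)
        fun r hr => pow_ne_zero _ (hne r hr))
    refine (intervalIntegral.norm_integral_le_of_norm_le hab
      (Eventually.of_forall fun r hr => ?_) hint.intervalIntegrable).trans ?_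
    · have hr' := Set.Ioc_subset_Icc_self hr
      rw [norm_mul]
      exact (mul_le_of_le_one_right (norm_nonneg _) (he r hr')).trans
        (norm_deriv_div_sub_mul_div_sq_le (hne r hr') (hφ''0 r hr') (hA₁ r hr') (hA' r hr'))
    · rw [intervalIntegral.integral_const_mul]
      gcongr
      exact integral_deriv_div_sq_le hΛ hab hφ' hφ''c hΛφ'
  refine (le_mul_of_one_le_left (norm_nonneg _) hβ₁).trans ?_
  rw [← norm_mul, integral_mul_cexp_neg_mul_by_parts hab hA hφ hφ' hA'c hφ''c hne]
  calc _ ≤ (K + 1) * (2 / Λ) + (1 / Λ + 1 / Λ) :=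
        (norm_sub_le _ _).trans (add_le_add interior ((norm_sub_le _ _).trans (add_le_add
          (boundary b (Set.right_mem_Icc.2 hab)) (boundary a (Set.left_mem_Icc.2 hab)))))
    _ = 2 * (K + 2) / Λ := by ring

end NonstationaryPhase

theorem norm_integral_Ioi_le_of_forall_intervalIntegral {E : Type*} [NormedAddCommGroup E]
    [NormedSpace ℝ E] {F : ℝ → E} {a b R B : ℝ} (hF : Integrable F) (hab : a < b)
    (h : ∀ x₁ x₂, a < x₁ → x₁ ≤ b → R ≤ x₂ → ‖∫ r in x₁..x₂, F r‖ ≤ B) :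
    ‖∫ r in Set.Ioi a, F r‖ ≤ B := by
  have tail (x₁) (ha : a < x₁) (hb : x₁ ≤ b) : ‖∫ r in Set.Ioi x₁, F r‖ ≤ B := by
    refine le_of_tendsto
      (intervalIntegral_tendsto_integral_Ioi x₁ hF.integrableOn tendsto_id).norm ?_
    filter_upwards [eventually_ge_atTop R] with x₂ hx₂
    exact h x₁ x₂ ha hb hx₂
  have split (x₁ : ℝ) :
      ∫ r in Set.Ioi x₁, F r = (∫ r in Set.Ioi a, F r) - ∫ r in a..x₁, F r := by
    rw [← intervalIntegral.integral_interval_add_Ioi hF.integrableOn hF.integrableOn (a := a)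
      (b := x₁), add_sub_cancel_left]
  have hlim : Tendsto (fun x₁ => ∫ r in Set.Ioi x₁, F r) (𝓝[>] a) (𝓝 (∫ r in Set.Ioi a, F r)) := by
    rw [funext split]
    have hcont : Continuous fun x₁ => ∫ r in a..x₁, F r :=
      intervalIntegral.continuous_primitive (fun _ _ => hF.intervalIntegrable) a
    simpa using tendsto_const_nhds.sub
      ((hcont.tendsto a).mono_left (nhdsWithin_le_nhds (s := Set.Ioi a)))
  refine le_of_tendsto hlim.norm ?_
  filter_upwards [Ioc_mem_nhdsGT hab] with x₁ hx₁
  exact tail x₁ hx₁.1 hx₁.2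

section KernelPhase

/-- The integrand `r^{2iy} exp (-β (r² + a² / r²))` of the oscillatory integral which represents
the convolution kernel of `Γ(z) w^{-z}` on the line `Re z = (d + 1) / 2`. -/
def kernelIntegrand (β : ℂ) (a y r : ℝ) : ℂ :=
  Complex.exp (2 * Complex.I * y * (log r : ℝ)) *
    Complex.exp (-β * ((r ^ 2 + a ^ 2 / r ^ 2 : ℝ) : ℂ))

variable {β : ℂ} {a r : ℝ}

theorem norm_kernelIntegrand (β : ℂ) (a y r : ℝ) :
    ‖kernelIntegrand β a y r‖ = exp (-β.re * (r ^ 2 + a ^ 2 / r ^ 2)) := by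
  have h : (2 * Complex.I * y * ((log r : ℝ) : ℂ)).re = 0 := by simp
  rw [kernelIntegrand, norm_mul, Complex.norm_exp, Complex.norm_exp, h, Complex.re_mul_ofReal,
    exp_zero, one_mul, Complex.neg_re]

theorem norm_kernelIntegrand_le_one (hβ : 0 ≤ β.re) (a y r : ℝ) :
    ‖kernelIntegrand β a y r‖ ≤ 1 := by
  rw [norm_kernelIntegrand, exp_le_one_iff, neg_mul, neg_nonpos]
  positivity

theorem integrable_kernelIntegrand (hβ : 0 < β.re) (a y : ℝ) :
    Integrable (kernelIntegrand β a y) := by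
  refine (integrable_exp_neg_mul_sq hβ).mono' ?_ (Eventually.of_forall fun r => ?_)
  · have : Measurable (kernelIntegrand β a y) := by unfold kernelIntegrand; fun_prop
    exact this.aestronglyMeasurable
  · rw [norm_kernelIntegrand, exp_le_exp]
    have : 0 ≤ a ^ 2 / r ^ 2 := by positivity
    nlinarith [mul_nonneg hβ.le this]

theorem hasDerivAt_sq_add_sq_div_sq (hr : r ≠ 0) :
    HasDerivAt (fun r => r ^ 2 + a ^ 2 / r ^ 2) (2 * r - 2 * a ^ 2 / r ^ 3) r := by
  have h := (hasDerivAt_pow 2 r).add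
    (((hasDerivAt_pow 2 r).inv (pow_ne_zero 2 hr)).const_mul (a ^ 2))
  convert! h using 1
  field_simp; ring

theorem hasDerivAt_two_mul_sub_sq_div_cube (hr : r ≠ 0) :
    HasDerivAt (fun r => 2 * r - 2 * a ^ 2 / r ^ 3) (2 + 6 * a ^ 2 / r ^ 4) r := by
  have h := ((hasDerivAt_id r).const_mul 2).sub
    (((hasDerivAt_pow 3 r).inv (pow_ne_zero 3 hr)).const_mul (2 * a ^ 2))
  convert! h using 1
  field_simp; ring

theorem two_le_abs_two_mul_sub_sq_div_cube (ha : 0 ≤ a) (hr : 0 < r) (h : 1 ≤ |r - a / r|) :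
    2 ≤ |2 * r - 2 * a ^ 2 / r ^ 3| := by
  have factor : 2 * r - 2 * a ^ 2 / r ^ 3 = 2 * (r - a / r) * (1 + a / r ^ 2) := by
    field_simp; ring
  have : 1 ≤ |1 + a / r ^ 2| := by
    rw [abs_of_nonneg (by positivity)]
    exact le_add_of_nonneg_right (by positivity)
  rw [factor, abs_mul, abs_mul, abs_of_pos two_pos]
  nlinarith

theorem abs_two_mul_sub_sq_div_cube_le (hr : 0 < r) :
    |2 * r - 2 * a ^ 2 / r ^ 3| ≤ r * (2 + 6 * a ^ 2 / r ^ 4) := by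
  have h₁ : r * (2 + 6 * a ^ 2 / r ^ 4) = 2 * r + 6 * (a ^ 2 / r ^ 3) := by field_simp
  have h₂ : 2 * r - 2 * a ^ 2 / r ^ 3 = 2 * r - 2 * (a ^ 2 / r ^ 3) := by ring
  have : 0 ≤ a ^ 2 / r ^ 3 := by positivity
  rw [h₁, h₂, abs_le]
  constructor <;> linarith

theorem norm_intervalIntegral_kernelIntegrand_le (ha : 0 ≤ a) (hβ : 0 ≤ β.re) (hβ₁ : 1 ≤ ‖β‖)
    (y : ℝ) {x₁ x₂ : ℝ} (hx₁ : 0 < x₁) (hx : x₁ ≤ x₂)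
    (h : ∀ r ∈ Set.Icc x₁ x₂, 1 ≤ |r - a / r|) :
    ‖∫ r in x₁..x₂, kernelIntegrand β a y r‖ ≤ 2 * |y| + 2 := by
  have hpos (r) (hr : r ∈ Set.Icc x₁ x₂) : 0 < r := hx₁.trans_le hr.1
  let A : ℝ → ℂ := fun r => Complex.exp (2 * Complex.I * y * (log r : ℝ))
  have hA (r) (hr : r ∈ Set.Icc x₁ x₂) : HasDerivAt A (2 * Complex.I * y / r * A r) r := by
    convert! ((hasDerivAt_log (hpos r hr).ne').ofReal_comp.const_mul
      (2 * Complex.I * (y : ℂ))).cexp using 1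
    simp only [A]; push_cast; ring
  have hA₁ (r : ℝ) : ‖A r‖ = 1 := by simp [A, Complex.norm_exp]
  have hA'c : ContinuousOn (fun r => 2 * Complex.I * y / r * A r) (Set.Icc x₁ x₂) :=
    (continuousOn_const.div Complex.continuous_ofReal.continuousOn
      fun r hr => by exact_mod_cast (hpos r hr).ne').mul (HasDerivAt.continuousOn hA)
  have hφ''c : ContinuousOn (fun r => 2 + 6 * a ^ 2 / r ^ 4) (Set.Icc x₁ x₂) :=
    continuousOn_const.add (continuousOn_const.div (continuousOn_pow 4)
      fun r hr => pow_ne_zero 4 (hpos r hr).ne')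
  have hbound := norm_integral_mul_cexp_neg_mul_le (K := 2 * |y|) two_pos hβ hβ₁ hx (by positivity)
    hA (fun r hr => hasDerivAt_sq_add_sq_div_sq (a := a) (hpos r hr).ne')
    (fun r hr => hasDerivAt_two_mul_sub_sq_div_cube (hpos r hr).ne') hA'c hφ''c
    (fun r _ => by positivity) (fun r _ => by positivity)
    (fun r hr => two_le_abs_two_mul_sub_sq_div_cube ha (hpos r hr) (h r hr))
    (fun r _ => (hA₁ r).le) fun r hr => ?_
  · calc _ ≤ 2 * (2 * |y| + 2) / 2 := hbound
      _ = 2 * |y| + 2 := by ring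
  · have hr := hpos r hr
    calc ‖2 * Complex.I * y / r * A r‖ * |2 * r - 2 * a ^ 2 / r ^ 3|
        ≤ 2 * |y| / r * (r * (2 + 6 * a ^ 2 / r ^ 4)) := by
          rw [norm_mul, hA₁]
          simp only [norm_div, norm_mul, Complex.norm_ofNat, Complex.norm_I, Complex.norm_real,
            norm_eq_abs, abs_of_pos hr, mul_one]
          gcongr
          exact abs_two_mul_sub_sq_div_cube_le hr
      _ = 2 * |y| * (2 + 6 * a ^ 2 / r ^ 4) := by field_simp

/-- The stationary point `r = √a` lies in `[ρ, ρ + 1]` where `ρ (ρ + 1) = a`; outside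
that interval `|r - a / r| ≥ 1`. -/
theorem norm_integral_Ioi_kernelIntegrand_le (ha : 0 < a) (hβ : 0 < β.re) (hβ₁ : 1 ≤ ‖β‖)
    (y : ℝ) : ‖∫ r in Set.Ioi (0 : ℝ), kernelIntegrand β a y r‖ ≤ 4 * |y| + 5 := by
  have hF := integrable_kernelIntegrand hβ a y
  obtain ⟨ρ, hρ, hprod⟩ : ∃ ρ : ℝ, 0 < ρ ∧ ρ * (ρ + 1) = a := by
    have hsq : √(1 + 4 * a) ^ 2 = 1 + 4 * a := sq_sqrt (by positivity)
    have hgt : 1 < √(1 + 4 * a) := lt_sqrt_of_sq_lt (by linarith)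
    exact ⟨(√(1 + 4 * a) - 1) / 2, by linarith, by nlinarith⟩
  refine norm_integral_Ioi_le_of_forall_intervalIntegral (R := ρ + 1) hF hρ
    fun x₁ x₂ hx₁ hx₁' hx₂ => ?_
  have left : ‖∫ r in x₁..ρ, kernelIntegrand β a y r‖ ≤ 2 * |y| + 2 := by
    refine norm_intervalIntegral_kernelIntegrand_le ha.le hβ.le hβ₁ y hx₁ hx₁' fun r hr => ?_
    have hr0 : 0 < r := hx₁.trans_le hr.1
    have : r + 1 ≤ a / r := by rw [le_div_iff₀ hr0]; nlinarith [hr.2]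
    exact le_abs.2 (Or.inr (by linarith))
  have right : ‖∫ r in (ρ + 1)..x₂, kernelIntegrand β a y r‖ ≤ 2 * |y| + 2 := by
    refine norm_intervalIntegral_kernelIntegrand_le ha.le hβ.le hβ₁ y (by positivity) hx₂
      fun r hr => ?_
    have hr0 : 0 < r := lt_of_lt_of_le (by positivity) hr.1
    have : a / r ≤ r - 1 := by rw [div_le_iff₀ hr0]; nlinarith [hr.1]
    exact le_abs.2 (Or.inl (by linarith))
  have middle : ‖∫ r in ρ..(ρ + 1), kernelIntegrand β a y r‖ ≤ 1 := by
    simpa using intervalIntegral.norm_integral_le_of_norm_le_const (a := ρ) (b := ρ + 1)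
      fun r _ => norm_kernelIntegrand_le_one hβ.le a y r
  rw [← intervalIntegral.integral_add_adjacent_intervals (b := ρ + 1) hF.intervalIntegrable
    hF.intervalIntegrable, ← intervalIntegral.integral_add_adjacent_intervals (b := ρ)
    hF.intervalIntegrable hF.intervalIntegrable]
  exact norm_add₃_le.trans (by linarith)

end KernelPhase

/-! ### The kernel of `Γ(z) w^{-z}` -/

section Laplace

variable {z w : ℂ}

theorem norm_cpow_mul_cexp_neg_mul (z w : ℂ) {t : ℝ} (ht : 0 < t) :
    ‖(t : ℂ) ^ (z - 1) * Complex.exp (-(w * t))‖ = t ^ (z.re - 1) * exp (-w.re * t) := by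
  rw [norm_mul, Complex.norm_cpow_eq_rpow_re_of_pos ht, Complex.norm_exp]
  simp

theorem integrableOn_rpow_mul_exp_neg_mul_Ioi {x b : ℝ} (hx : 0 < x) (hb : 0 < b) :
    IntegrableOn (fun t : ℝ => t ^ (x - 1) * exp (-b * t)) (Set.Ioi 0) := by
  simpa using integrableOn_rpow_mul_exp_neg_mul_rpow (p := 1) (s := x - 1) (by linarith) one_pos hb

theorem integrableOn_cpow_mul_cexp_neg_mul_Ioi (hz : 0 < z.re) (hw : 0 < w.re) :
    IntegrableOn (fun t : ℝ => (t : ℂ) ^ (z - 1) * Complex.exp (-(w * t))) (Set.Ioi 0) := by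
  refine (integrableOn_rpow_mul_exp_neg_mul_Ioi hz hw).mono'
    (by fun_prop : Measurable _).aestronglyMeasurable ?_
  filter_upwards [ae_restrict_mem measurableSet_Ioi] with t ht
  rw [norm_cpow_mul_cexp_neg_mul z w ht]

theorem differentiableAt_integral_cpow_mul_cexp_neg_mul (hz : 0 < z.re) (hw : 0 < w.re) :
    DifferentiableAt ℂ (fun w : ℂ => ∫ t : ℝ in Set.Ioi 0,
      (t : ℂ) ^ (z - 1) * Complex.exp (-(w * t))) w := by
  refine (hasDerivAt_integral_of_dominated_loc_of_deriv_le (μ := volume.restrict (Set.Ioi (0 : ℝ)))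
    (F := fun v t => (t : ℂ) ^ (z - 1) * Complex.exp (-(v * t))) (s := {v : ℂ | w.re / 2 < v.re})
    (F' := fun v t => (t : ℂ) ^ (z - 1) * (Complex.exp (-(v * t)) * (-(t : ℂ))))
    (bound := fun t => t ^ (z.re + 1 - 1) * exp (-(w.re / 2) * t))
    ((isOpen_lt continuous_const Complex.continuous_re).mem_nhds (half_lt_self hw))
    (Eventually.of_forall fun v => (by fun_prop : Measurable _).aestronglyMeasurable)
    (integrableOn_cpow_mul_cexp_neg_mul_Ioi hz hw)
    (by fun_prop : Measurable _).aestronglyMeasurable ?_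
    (integrableOn_rpow_mul_exp_neg_mul_Ioi (by linarith) (half_pos hw)) ?_).2.differentiableAt
  · filter_upwards [ae_restrict_mem measurableSet_Ioi] with t (ht : 0 < t) v (hv : w.re / 2 < v.re)
    have hpow : t ^ (z.re + 1 - 1) = t ^ (z.re - 1) * t := by
      rw [← rpow_add_one ht.ne']; ring_nf
    rw [← mul_assoc, norm_mul, norm_cpow_mul_cexp_neg_mul z v ht, norm_neg, Complex.norm_real,
      norm_of_nonneg ht.le, mul_right_comm, hpow]
    gcongr
  · filter_upwards with t v _
    have h : HasDerivAt (fun v : ℂ => -(v * t)) (-(t : ℂ)) v := by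
      simpa using ((hasDerivAt_id v).mul_const (t : ℂ)).fun_neg
    exact h.cexp.const_mul _

theorem inv_mem_slitPlane (hw : 0 < w.re) : 1 / w ∈ Complex.slitPlane := by
  have hw0 : w ≠ 0 := by rintro rfl; simp at hw
  refine Or.inl ?_
  rw [one_div, Complex.inv_re]
  exact div_pos hw (Complex.normSq_pos.2 hw0)

/-- Both sides are holomorphic in `w` on the half plane, and they agree on the positive reals. -/
theorem integral_cpow_mul_cexp_neg_mul_Ioi (hz : 0 < z.re) (hw : 0 < w.re) :
    ∫ t : ℝ in Set.Ioi 0, (t : ℂ) ^ (z - 1) * Complex.exp (-(w * t)) =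
      (1 / w) ^ z * Complex.Gamma z := by
  let S : Set ℂ := {v | 0 < v.re}
  have hS : IsOpen S := isOpen_lt continuous_const Complex.continuous_re
  have left_analytic : AnalyticOnNhd ℂ (fun v : ℂ => ∫ t : ℝ in Set.Ioi 0,
      (t : ℂ) ^ (z - 1) * Complex.exp (-(v * t))) S :=
    DifferentiableOn.analyticOnNhd (fun v hv =>
      (differentiableAt_integral_cpow_mul_cexp_neg_mul hz hv).differentiableWithinAt) hS
  have right_analytic : AnalyticOnNhd ℂ (fun v : ℂ => (1 / v) ^ z * Complex.Gamma z) S := by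
    refine DifferentiableOn.analyticOnNhd (fun v hv => ?_) hS
    have hv0 : v ≠ 0 := by rintro rfl; simp [S] at hv
    have hinv : DifferentiableAt ℂ (fun v : ℂ => 1 / v) v := by fun_prop (disch := assumption)
    exact ((hinv.cpow_const (inv_mem_slitPlane hv)).mul_const _).differentiableWithinAt
  have tendsto_ofReal : Tendsto (fun r : ℝ => (r : ℂ)) (𝓝[≠] (1 : ℝ)) (𝓝[≠] (1 : ℂ)) := by
    refine tendsto_nhdsWithin_of_tendsto_nhds_of_eventually_within _
      ((Complex.continuous_ofReal.tendsto' 1 1 (by simp)).mono_left nhdsWithin_le_nhds) ?_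
    filter_upwards [self_mem_nhdsWithin] with r hr
    simpa using hr
  have pos_near_one : ∀ᶠ r : ℝ in 𝓝[≠] 1, 0 < r :=
    (eventually_gt_nhds one_pos).filter_mono nhdsWithin_le_nhds
  exact left_analytic.eqOn_of_preconnected_of_frequently_eq right_analytic
    (convex_halfSpace_re_gt 0).isPreconnected (z₀ := 1) (by simp [S])
    (tendsto_ofReal.frequently (pos_near_one.frequently.mono fun r hr =>
      Complex.integral_cpow_mul_exp_neg_mul_Ioi hz hr)) hw

end Laplace

section ShellMultiplier

variable {V : Type*} [NormedAddCommGroup V] {l : ℝ} {z : ℂ}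

/-- The symbol `w(ξ) = (l + i) + (l - i) |ξ|²`, whose modulus is comparable to `l` exactly on the
shell `||ξ| - 1| ≲ l`. -/
def shellSymbol (l : ℝ) (ξ : V) : ℂ :=
  (l + Complex.I) + (l - Complex.I) * ((‖ξ‖ ^ 2 : ℝ) : ℂ)

/-- The analytic family `Γ(z) w^{-z}` of Fourier multipliers, `w` being `shellSymbol l`. -/
def shellMultiplier (l : ℝ) (z : ℂ) (ξ : V) : ℂ :=
  (1 / shellSymbol l ξ) ^ z * Complex.Gamma z

theorem re_shellSymbol (l : ℝ) (ξ : V) : (shellSymbol l ξ).re = l * (1 + ‖ξ‖ ^ 2) := by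
  rw [shellSymbol, Complex.add_re, Complex.re_mul_ofReal]
  simp; ring

theorem re_shellSymbol_pos (hl : 0 < l) (ξ : V) : 0 < (shellSymbol l ξ).re := by
  rw [re_shellSymbol]; positivity

@[fun_prop]
theorem continuous_shellSymbol (l : ℝ) : Continuous (shellSymbol (V := V) l) := by
  unfold shellSymbol; fun_prop

theorem shellMultiplier_eq_integral (hl : 0 < l) (hz : 0 < z.re) (ξ : V) :
    shellMultiplier l z ξ =
      ∫ t : ℝ in Set.Ioi 0, (t : ℂ) ^ (z - 1) * Complex.exp (-(shellSymbol l ξ * t)) :=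
  (integral_cpow_mul_cexp_neg_mul_Ioi hz (re_shellSymbol_pos hl ξ)).symm

theorem norm_cpow_mul_cexp_neg_shellSymbol_mul (l : ℝ) (z : ℂ) {t : ℝ} (ht : 0 < t) (ξ : V) :
    ‖(t : ℂ) ^ (z - 1) * Complex.exp (-(shellSymbol l ξ * t))‖ =
      t ^ (z.re - 1) * exp (-l * t) * exp (-(l * t) * ‖ξ‖ ^ 2) := by
  rw [norm_cpow_mul_cexp_neg_mul _ _ ht, re_shellSymbol, mul_assoc, ← exp_add]
  ring_nf

theorem add_I_mul_sub_I (l : ℝ) : (l + Complex.I) * (l - Complex.I) = ((1 + l ^ 2 : ℝ) : ℂ) := by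
  push_cast
  linear_combination (-1 : ℂ) * Complex.I_sq

theorem sub_I_ne_zero (l : ℝ) : (l - Complex.I) ≠ 0 := fun h => by
  simpa using congrArg Complex.im h

theorem neg_sq_div_sub_I_mul_sq_eq (l : ℝ) {r : ℝ} (hr : 0 < r) (x : ℝ) :
    -(π : ℂ) ^ 2 * x ^ 2 / ((l - Complex.I) * ((r ^ 2 : ℝ) : ℂ)) =
      -(l + Complex.I) * (((π * x / √(1 + l ^ 2)) ^ 2 / r ^ 2 : ℝ) : ℂ) := by
  have hk := sub_I_ne_zero l
  have hne : ((1 + l ^ 2 : ℝ) : ℂ) ≠ 0 := by exact_mod_cast (by positivity : (1 + l ^ 2 : ℝ) ≠ 0)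
  have hr' : (r : ℂ) ≠ 0 := by exact_mod_cast hr.ne'
  have hadd : (l + Complex.I) = ((1 + l ^ 2 : ℝ) : ℂ) / (l - Complex.I) := by
    rw [← add_I_mul_sub_I]; field_simp
  rw [div_pow, sq_sqrt (by positivity), hadd]
  push_cast at hne ⊢
  field_simp

/-- After the substitution `t = r²` the powers of `r` cancel up to a phase precisely when
`Re z = (n + 1) / 2`. -/
theorem gaussian_integrand_comp_sq (l : ℝ) {n : ℕ} (hz : z.re = ((n : ℝ) + 1) / 2) {r : ℝ}
    (hr : 0 < r) (x : ℝ) :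
    ((2 : ℝ) * r ^ ((2 : ℝ) - 1)) • (((r ^ (2 : ℝ) : ℝ) : ℂ) ^ (z - 1) *
      Complex.exp (-((l + Complex.I) * ((r ^ (2 : ℝ) : ℝ) : ℂ))) *
      ((π / ((l - Complex.I) * ((r ^ (2 : ℝ) : ℝ) : ℂ))) ^ ((n : ℂ) / 2) *
        Complex.exp (-π ^ 2 * x ^ 2 / ((l - Complex.I) * ((r ^ (2 : ℝ) : ℝ) : ℂ))))) =
    2 * (π : ℂ) ^ ((n : ℂ) / 2) * (1 / (l - Complex.I)) ^ ((n : ℂ) / 2) *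
      kernelIntegrand (l + Complex.I) (π * x / √(1 + l ^ 2)) z.im r := by
  have hz' : z = ((((n : ℝ) + 1) / 2 : ℝ) : ℂ) + z.im * Complex.I := by rw [← hz, Complex.re_add_im]
  have hr' : (r : ℂ) ≠ 0 := by exact_mod_cast hr.ne'
  have hr₂ : ((r ^ 2 : ℝ) : ℂ) ≠ 0 := by exact_mod_cast (by positivity : (r ^ 2 : ℝ) ≠ 0)
  have hπ : (π : ℂ) ≠ 0 := by exact_mod_cast pi_ne_zero
  have hk := sub_I_ne_zero l
  have hinv : 1 / (l - Complex.I) ≠ 0 := by simpa using hk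
  have hpos : 0 < π / r ^ 2 := by positivity
  have hbase : (π : ℂ) / ((l - Complex.I) * ((r ^ 2 : ℝ) : ℂ)) =
      ((π / r ^ 2 : ℝ) : ℂ) * (1 / (l - Complex.I)) := by
    push_cast; field_simp
  have hjac : ((2 * r ^ ((2 : ℝ) - 1) : ℝ) : ℂ) = 2 * Complex.exp (log r : ℝ) := by
    rw [← Complex.ofReal_exp, exp_log hr]; norm_num
  rw [Complex.real_smul, hjac, show r ^ (2 : ℝ) = r ^ 2 by norm_cast,
    neg_sq_div_sub_I_mul_sq_eq l hr, hbase,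
    Complex.cpow_def_of_ne_zero hr₂,
    Complex.cpow_def_of_ne_zero (x := _ * _) (mul_ne_zero (by exact_mod_cast hpos.ne') hinv),
    Complex.cpow_def_of_ne_zero hπ, Complex.cpow_def_of_ne_zero hinv,
    Complex.log_ofReal_mul hpos hinv, ← Complex.ofReal_log (by positivity),
    ← Complex.ofReal_log pi_pos.le, log_div pi_ne_zero (by positivity), log_pow, kernelIntegrand]
  simp only [mul_assoc, ← Complex.exp_add]
  congr 2
  rw [hz']
  push_cast
  simp
  ring

variable [InnerProductSpace ℝ V] [FiniteDimensional ℝ V] [MeasurableSpace V] [BorelSpace V]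

theorem integrable_exp_neg_mul_norm_sq {b : ℝ} (hb : 0 < b) :
    Integrable fun ξ : V => exp (-b * ‖ξ‖ ^ 2) := by
  have h := (GaussianFourier.integrable_cexp_neg_mul_sq_norm_add (V := V) (b := b)
    (by simpa using hb) 0 0).norm
  refine h.congr (Eventually.of_forall fun ξ => ?_)
  simp only [Complex.norm_exp]
  congr 1
  simp [← Complex.ofReal_pow]

theorem integrable_prod_cpow_mul_cexp_neg_shellSymbol_mul (hl : 0 < l)
    (hz : (Module.finrank ℝ V : ℝ) / 2 < z.re) :
    Integrable (fun q : V × ℝ => (q.2 : ℂ) ^ (z - 1) * Complex.exp (-(shellSymbol l q.1 * q.2)))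
      (volume.prod (volume.restrict (Set.Ioi 0))) := by
  have hmeas : AEStronglyMeasurable (fun q : V × ℝ => (q.2 : ℂ) ^ (z - 1) *
      Complex.exp (-(shellSymbol l q.1 * q.2))) (volume.prod (volume.restrict (Set.Ioi 0))) := by
    have := (continuous_shellSymbol (V := V) l).measurable
    exact (by fun_prop : Measurable _).aestronglyMeasurable
  rw [integrable_prod_iff' hmeas]
  constructor
  · filter_upwards [ae_restrict_mem measurableSet_Ioi] with t (ht : 0 < t)
    exact ((integrable_exp_neg_mul_norm_sq (V := V) (mul_pos hl ht)).const_mul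
      (t ^ (z.re - 1) * exp (-l * t))).mono' (by fun_prop : Continuous _).aestronglyMeasurable
        (Eventually.of_forall fun ξ => (norm_cpow_mul_cexp_neg_shellSymbol_mul l z ht ξ).le)
  · refine ((integrableOn_rpow_mul_exp_neg_mul_Ioi (sub_pos.2 hz) hl).const_mul
      ((π / l) ^ ((Module.finrank ℝ V : ℝ) / 2))).congr ?_
    filter_upwards [ae_restrict_mem measurableSet_Ioi] with t (ht : 0 < t)
    have hpow : t ^ (z.re - (Module.finrank ℝ V : ℝ) / 2 - 1) =
        t ^ (z.re - 1) / t ^ ((Module.finrank ℝ V : ℝ) / 2) := by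
      rw [← rpow_sub ht]; congr 1; ring
    simp only [norm_cpow_mul_cexp_neg_shellSymbol_mul l z ht]
    rw [integral_const_mul, GaussianFourier.integral_rexp_neg_mul_sq_norm (by positivity),
      div_mul_eq_div_div π l t, div_rpow (by positivity) ht.le, hpow]
    ring

theorem integrable_shellMultiplier (hl : 0 < l) (hz : (Module.finrank ℝ V : ℝ) / 2 < z.re) :
    Integrable (shellMultiplier (V := V) l z) := by
  refine (integrable_prod_cpow_mul_cexp_neg_shellSymbol_mul hl hz).integral_prod_left.congr
    (Eventually.of_forall fun ξ => (shellMultiplier_eq_integral hl ?_ ξ).symm)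
  exact lt_of_le_of_lt (by positivity) hz

theorem fourier_shellMultiplier (hl : 0 < l) (hz : (Module.finrank ℝ V : ℝ) / 2 < z.re) (x : V) :
    𝓕 (shellMultiplier (V := V) l z) x = ∫ t : ℝ in Set.Ioi 0, (t : ℂ) ^ (z - 1) *
      Complex.exp (-((l + Complex.I) * t)) *
      ((π / ((l - Complex.I) * t)) ^ ((Module.finrank ℝ V : ℂ) / 2) *
        Complex.exp (-π ^ 2 * ‖x‖ ^ 2 / ((l - Complex.I) * t))) := by
  have hz₀ : 0 < z.re := lt_of_le_of_lt (by positivity) hz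
  rw [fourier_eq']
  simp_rw [shellMultiplier_eq_integral hl hz₀, smul_eq_mul, ← integral_const_mul]
  rw [integral_integral_swap]
  · refine setIntegral_congr_fun measurableSet_Ioi fun t (ht : 0 < t) => ?_
    have gaussian := fourier_gaussian_innerProductSpace (V := V) (b := (l - Complex.I) * t)
      (by simpa using mul_pos hl ht) x
    have split (ξ : V) : Complex.exp (-(shellSymbol l ξ * t)) =
        Complex.exp (-((l + Complex.I) * t)) *
          Complex.exp (-((l - Complex.I) * t) * ‖ξ‖ ^ 2) := by
      rw [← Complex.exp_add, shellSymbol]; congr 1; push_cast; ring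
    rw [← gaussian, fourier_eq', ← integral_const_mul]
    congr 1; ext ξ
    rw [smul_eq_mul, split]; ring
  · have hint := integrable_prod_cpow_mul_cexp_neg_shellSymbol_mul (V := V) hl hz
    refine hint.mono ((by fun_prop : Continuous _).aestronglyMeasurable.mul hint.1)
      (Eventually.of_forall fun q => ?_)
    simp only [Function.uncurry, norm_mul]
    rw [Complex.norm_exp_ofReal_mul_I, one_mul]

theorem norm_fourier_shellMultiplier_le [Nontrivial V] (hl : 0 < l)
    (hz : z.re = ((Module.finrank ℝ V : ℝ) + 1) / 2) (x : V) :
    ‖𝓕 (shellMultiplier (V := V) l z) x‖ ≤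
      2 * π ^ ((Module.finrank ℝ V : ℝ) / 2) * (4 * |z.im| + 5) := by
  have hz' : (Module.finrank ℝ V : ℝ) / 2 < z.re := by linarith
  have norm_inv_le : ‖(1 / (l - Complex.I)) ^ ((Module.finrank ℝ V : ℂ) / 2)‖ ≤ 1 := by
    rw [show (Module.finrank ℝ V : ℂ) / 2 = ((Module.finrank ℝ V / 2 : ℝ) : ℂ) by push_cast; rfl,
      Complex.norm_cpow_real]
    refine rpow_le_one (norm_nonneg _) ?_ (by positivity)
    rw [norm_div, norm_one]
    refine div_le_one_of_le₀ ?_ (norm_nonneg _)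
    simpa using Complex.abs_im_le_norm ((l : ℂ) - Complex.I)
  have away_from_zero (x : V) (hx : x ≠ 0) : ‖𝓕 (shellMultiplier (V := V) l z) x‖ ≤
      2 * π ^ ((Module.finrank ℝ V : ℝ) / 2) * (4 * |z.im| + 5) := by
    rw [fourier_shellMultiplier hl hz', ← integral_comp_rpow_Ioi_of_pos two_pos,
      setIntegral_congr_fun measurableSet_Ioi fun r hr => gaussian_integrand_comp_sq l hz hr ‖x‖,
      integral_const_mul, norm_mul, norm_mul, norm_mul, Complex.norm_ofNat,
      Complex.norm_cpow_eq_rpow_re_of_pos pi_pos]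
    have oscillatory := norm_integral_Ioi_kernelIntegrand_le (β := l + Complex.I)
      (a := π * ‖x‖ / √(1 + l ^ 2)) (by positivity) (by simpa using hl)
      (by simpa using Complex.abs_im_le_norm ((l : ℂ) + Complex.I)) z.im
    refine mul_le_mul ((mul_le_of_le_one_right (by positivity) norm_inv_le).trans_eq ?_) oscillatory
      (norm_nonneg _) (by positivity)
    simp
  have hclosed : IsClosed {x : V | ‖𝓕 (shellMultiplier (V := V) l z) x‖ ≤
      2 * π ^ ((Module.finrank ℝ V : ℝ) / 2) * (4 * |z.im| + 5)} :=
    isClosed_le (continuous_fourier (integrable_shellMultiplier hl hz')).norm continuous_const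
  exact hclosed.closure_subset_iff.2 (fun x hx => away_from_zero x hx)
    (dense_compl_singleton (0 : V) x)

end ShellMultiplier

/-! ### Stein interpolation -/

theorem norm_cpow_le_of_re_pos {v : ℂ} (hv : 0 < v.re) (z : ℂ) :
    ‖v ^ z‖ ≤ ‖v‖ ^ z.re * exp (π / 2 * |z.im|) := by
  have hne : v ≠ 0 := by rintro rfl; simp at hv
  rw [Complex.norm_cpow_of_ne_zero hne, div_eq_mul_inv, ← exp_neg]
  gcongr
  calc -(v.arg * z.im) ≤ |v.arg| * |z.im| := (neg_le_abs _).trans_eq (abs_mul _ _)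
    _ ≤ π / 2 * |z.im| := by gcongr; exact Complex.abs_arg_le_pi_div_two_iff.2 hv.le

theorem norm_cpow_le_of_re_mem_Icc {v z : ℂ} {B N Y : ℝ} (hv : 0 < v.re) (hB : ‖v‖ ≤ B)
    (h₀ : 0 ≤ z.re) (hN : z.re ≤ N) (hY : |z.im| ≤ Y) :
    ‖v ^ z‖ ≤ max 1 B ^ N * exp (π / 2 * Y) := by
  refine (norm_cpow_le_of_re_pos hv z).trans ?_
  gcongr
  calc ‖v‖ ^ z.re ≤ max 1 B ^ z.re := by gcongr; exact hB.trans (le_max_right _ _)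
    _ ≤ max 1 B ^ N := rpow_le_rpow_of_exponent_le (le_max_left _ _) hN

theorem norm_Gamma_le_Gamma_re {z : ℂ} (hz : 0 < z.re) : ‖Complex.Gamma z‖ ≤ Gamma z.re := by
  rw [Complex.Gamma_eq_integral hz, Gamma_eq_integral hz, Complex.GammaIntegral]
  refine (norm_integral_le_integral_norm _).trans_eq
    (setIntegral_congr_fun measurableSet_Ioi fun t ht => ?_)
  simp only [norm_mul, Complex.norm_cpow_eq_rpow_re_of_pos ht, Complex.norm_real, norm_eq_abs,
    abs_exp, Complex.sub_re, Complex.one_re]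

theorem norm_cpow_mul_le {α : Type*} {v k : α → ℂ} {B N : ℝ} (hre : ∀ ξ, 0 < (v ξ).re)
    (hB : ∀ ξ, ‖v ξ‖ ≤ B) {z : ℂ} {Y : ℝ} (h₀ : 0 ≤ z.re) (hN : z.re ≤ N) (hY : |z.im| ≤ Y)
    (ξ : α) :
    ‖v ξ ^ z * k ξ‖ ≤ max 1 B ^ N * exp (π / 2 * Y) * ‖k ξ‖ := by
  rw [norm_mul]
  gcongr
  exact norm_cpow_le_of_re_mem_Icc (hre ξ) (hB ξ) h₀ hN hY

section CpowFamily

variable {α : Type*} [MeasurableSpace α] {μ : Measure α} {v k : α → ℂ} {B N : ℝ}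

theorem aestronglyMeasurable_cpow_mul (hv : Measurable v) (hk : AEStronglyMeasurable k μ) (z : ℂ) :
    AEStronglyMeasurable (fun ξ => v ξ ^ z * k ξ) μ :=
  (hv.pow_const z).aestronglyMeasurable.mul hk

theorem integrable_cpow_mul (hv : Measurable v) (hre : ∀ ξ, 0 < (v ξ).re) (hB : ∀ ξ, ‖v ξ‖ ≤ B)
    (hk : Integrable k μ) {z : ℂ} (h₀ : 0 ≤ z.re) : Integrable (fun ξ => v ξ ^ z * k ξ) μ :=
  (hk.norm.const_mul _).mono' (aestronglyMeasurable_cpow_mul hv hk.1 z)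
    (Eventually.of_forall fun ξ => norm_cpow_mul_le hre hB h₀ le_rfl le_rfl ξ)

theorem norm_integral_cpow_mul_le (hre : ∀ ξ, 0 < (v ξ).re) (hB : ∀ ξ, ‖v ξ‖ ≤ B)
    (hk : Integrable k μ) {z : ℂ} (h₀ : 0 ≤ z.re) (hN : z.re ≤ N) :
    ‖∫ ξ, v ξ ^ z * k ξ ∂μ‖ ≤ max 1 B ^ N * exp (π / 2 * |z.im|) * ∫ ξ, ‖k ξ‖ ∂μ := by
  rw [← integral_const_mul]
  exact norm_integral_le_of_norm_le (hk.norm.const_mul _)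
    (Eventually.of_forall fun ξ => norm_cpow_mul_le hre hB h₀ hN le_rfl ξ)

theorem continuousOn_integral_cpow_mul (hv : Measurable v) (hre : ∀ ξ, 0 < (v ξ).re)
    (hB : ∀ ξ, ‖v ξ‖ ≤ B) (hk : Integrable k μ) :
    ContinuousOn (fun z : ℂ => ∫ ξ, v ξ ^ z * k ξ ∂μ) (Complex.re ⁻¹' Set.Icc 0 N) := by
  intro z₀ _
  refine continuousWithinAt_of_dominated
    (bound := fun ξ => max 1 B ^ N * exp (π / 2 * (|z₀.im| + 1)) * ‖k ξ‖)
    (Eventually.of_forall fun z => aestronglyMeasurable_cpow_mul hv hk.1 z) ?_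
    (hk.norm.const_mul _) (Eventually.of_forall fun ξ => ?_)
  · have near : ∀ᶠ z in 𝓝 z₀, |z.im| < |z₀.im| + 1 :=
      (continuous_abs.comp Complex.continuous_im).continuousAt.eventually_lt
        continuousAt_const (by simp)
    filter_upwards [near.filter_mono nhdsWithin_le_nhds, self_mem_nhdsWithin] with z hz hz'
    exact Eventually.of_forall fun ξ => norm_cpow_mul_le hre hB hz'.1 hz'.2 hz.le ξ
  · have hne : v ξ ≠ 0 := fun h => by simpa [h] using hre ξ
    exact ((continuousAt_const_cpow hne).mul_const _).continuousWithinAt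

/-- Cauchy's estimate on discs of radius `R` dominates the derivative of the integrand. -/
theorem norm_cpow_mul_log_le {v z z₀ : ℂ} {R : ℝ} (hR : 0 < R) (hz₀ : z₀.re = 2 * R)
    (hz : z ∈ Metric.ball z₀ R) (hv : 0 < v.re) (hB : ‖v‖ ≤ B) :
    ‖v ^ z * Complex.log v‖ ≤
      max 1 B ^ (z₀.re + 2 * R) * exp (π / 2 * (|z₀.im| + 2 * R)) / R := by
  have hne : v ≠ 0 := by rintro rfl; simp at hv
  have hderiv (w : ℂ) : HasDerivAt (fun w : ℂ => v ^ w) (v ^ w * Complex.log v) w := by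
    simpa using (hasDerivAt_id w).const_cpow (Or.inl hne)
  rw [← (hderiv z).deriv]
  refine Complex.norm_deriv_le_of_forall_mem_sphere_norm_le hR
    (Differentiable.diffContOnCl fun w => (hderiv w).differentiableAt) fun w hw => ?_
  have hdist : ‖w - z₀‖ ≤ 2 * R := by
    have hwz : dist w z = R := hw
    have hzz : dist z z₀ < R := hz
    rw [← dist_eq_norm]
    linarith [dist_triangle w z z₀]
  have hre := abs_le.1 ((Complex.abs_re_le_norm (w - z₀)).trans hdist)
  have him := (Complex.abs_im_le_norm (w - z₀)).trans hdist
  rw [Complex.sub_re] at hre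
  rw [Complex.sub_im] at him
  exact norm_cpow_le_of_re_mem_Icc hv hB (by linarith) (by linarith)
    (by linarith [abs_sub_abs_le_abs_sub w.im z₀.im])

theorem differentiableAt_integral_cpow_mul (hv : Measurable v) (hre : ∀ ξ, 0 < (v ξ).re)
    (hB : ∀ ξ, ‖v ξ‖ ≤ B) (hk : Integrable k μ) {z : ℂ} (hz : 0 < z.re) :
    DifferentiableAt ℂ (fun z : ℂ => ∫ ξ, v ξ ^ z * k ξ ∂μ) z := by
  refine (hasDerivAt_integral_of_dominated_loc_of_deriv_le (s := Metric.ball z (z.re / 2))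
    (F := fun z ξ => v ξ ^ z * k ξ) (F' := fun z ξ => v ξ ^ z * Complex.log (v ξ) * k ξ)
    (bound := fun ξ => max 1 B ^ (z.re + 2 * (z.re / 2)) *
      exp (π / 2 * (|z.im| + 2 * (z.re / 2))) / (z.re / 2) * ‖k ξ‖)
    (Metric.ball_mem_nhds _ (half_pos hz))
    (Eventually.of_forall fun w => aestronglyMeasurable_cpow_mul hv hk.1 w)
    (integrable_cpow_mul hv hre hB hk hz.le)
    (((hv.pow_const z).mul (Complex.measurable_log.comp hv)).aestronglyMeasurable.mul hk.1)
    (Eventually.of_forall fun ξ w hw => ?_) (hk.norm.const_mul _)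
    (Eventually.of_forall fun ξ w _ => ?_)).2.differentiableAt
  · rw [norm_mul]
    gcongr
    exact norm_cpow_mul_log_le (half_pos hz) (by ring) hw (hre ξ) (hB ξ)
  · have hne : v ξ ≠ 0 := fun h => by simpa [h] using hre ξ
    have h := (hasDerivAt_id w).const_cpow (c := v ξ) (Or.inl hne)
    simp only [id, mul_one] at h
    exact h.mul_const _

end CpowFamily

theorem memLp_two_of_finMeasSupp {α : Type*} [MeasurableSpace α] {μ : Measure α}
    {f : SimpleFunc α ℂ} (hf : f.FinMeasSupp μ) : MemLp f 2 μ :=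
  (SimpleFunc.memLp_iff_finMeasSupp two_ne_zero ENNReal.ofNat_ne_top).2 hf

/-- The analytic curve of coefficients through `a` at `z = 1` whose modulus is
`‖a‖ ^ ((N + Re z) / (N + 1))`, used to deform a simple function along the strip
`0 ≤ Re z ≤ N`. It vanishes at `a = 0` because of the unit factor `a / ‖a‖`. -/
def interpCoeff (N : ℝ) (z a : ℂ) : ℂ :=
  Complex.exp (log ‖a‖ * ((N + z) / (N + 1))) * (a / ‖a‖)

section InterpCoeff

variable {N : ℝ} {z : ℂ}

@[simp] theorem interpCoeff_zero : interpCoeff N z 0 = 0 := by simp [interpCoeff]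

theorem norm_interpCoeff (hN : 0 < N) (hz : 0 ≤ z.re) (a : ℂ) :
    ‖interpCoeff N z a‖ = ‖a‖ ^ ((N + z.re) / (N + 1)) := by
  rcases eq_or_ne a 0 with rfl | ha
  · have : (N + z.re) / (N + 1) ≠ 0 := by positivity
    simp [zero_rpow this]
  have norm_unit : ‖a / (‖a‖ : ℂ)‖ = 1 := by
    rw [norm_div, Complex.norm_real, norm_norm, div_self (norm_ne_zero_iff.2 ha)]
  have exponent : ((N : ℂ) + z) / ((N : ℂ) + 1) = (N + z) / ((N + 1 : ℝ) : ℂ) := by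
    push_cast; rfl
  rw [interpCoeff, norm_mul, norm_unit, mul_one, Complex.norm_exp, Complex.re_ofReal_mul,
    rpow_def_of_pos (norm_pos_iff.2 ha), exponent, Complex.div_ofReal_re, Complex.add_re,
    Complex.ofReal_re]

theorem interpCoeff_one (hN : 0 < N) (a : ℂ) : interpCoeff N 1 a = a := by
  rcases eq_or_ne a 0 with rfl | ha
  · simp
  have hN' : (N : ℂ) + 1 ≠ 0 := by exact_mod_cast (by positivity : N + 1 ≠ 0)
  have ha' : (‖a‖ : ℂ) ≠ 0 := by exact_mod_cast norm_ne_zero_iff.2 ha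
  rw [interpCoeff, div_self hN', mul_one, ← Complex.ofReal_exp, exp_log (norm_pos_iff.2 ha)]
  field_simp

theorem differentiable_interpCoeff (N : ℝ) (a : ℂ) :
    Differentiable ℂ fun z => interpCoeff N z a := by
  unfold interpCoeff; fun_prop

theorem conj_interpCoeff_conj (N : ℝ) (z a : ℂ) :
    conj (interpCoeff N (conj z) a) = interpCoeff N z (conj a) := by
  simp [interpCoeff, ← Complex.exp_conj]

theorem integral_norm_sq_map_interpCoeff {α : Type*} [MeasurableSpace α] {μ : Measure α}
    (hN : 0 < N) (hz : 0 ≤ z.re) (f : SimpleFunc α ℂ) :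
    ∫ x, ‖f.map (interpCoeff N z) x‖ ^ 2 ∂μ = ∫ x, ‖f x‖ ^ (2 * (N + z.re) / (N + 1)) ∂μ := by
  congr 1; ext x
  rw [SimpleFunc.map_apply, norm_interpCoeff hN hz, ← rpow_natCast, ← rpow_mul (norm_nonneg _)]
  congr 1; push_cast; ring

end InterpCoeff

theorem differentiableAt_Gamma_add_one {z : ℂ} (hz : 0 ≤ z.re) :
    DifferentiableAt ℂ (fun z : ℂ => Complex.Gamma (z + 1)) z := by
  refine DifferentiableAt.comp z (Complex.differentiableAt_Gamma _ fun m h => ?_) (by fun_prop)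
  have hre := congrArg Complex.re h
  simp only [Complex.add_re, Complex.one_re, Complex.neg_re, Complex.natCast_re] at hre
  linarith [m.cast_nonneg (α := ℝ)]

theorem norm_exp_sq (z : ℂ) : ‖Complex.exp (z ^ 2)‖ = exp (z.re ^ 2) * exp (-z.im ^ 2) := by
  rw [Complex.norm_exp, ← exp_add]; congr 1; simp [sq]; ring

theorem exp_neg_sq_mul_exp_le (y : ℝ) : exp (-y ^ 2) * exp (π / 2 * |y|) ≤ exp 1 := by
  rw [← exp_add, exp_le_exp, ← sq_abs y]
  nlinarith [sq_nonneg (|y| - 1), pi_le_four, abs_nonneg y]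

theorem exp_neg_sq_mul_sq_le (y : ℝ) : exp (-y ^ 2) * (1 + |y|) ^ 2 ≤ 2 := by
  rw [exp_neg, inv_mul_le_iff₀ (exp_pos _), ← sq_abs y]
  nlinarith [sq_nonneg (|y| - 1), add_one_le_exp (|y| ^ 2)]

theorem rpow_le_rpow_add_rpow_of_mem_Icc {x r s t : ℝ} (hx : 0 ≤ x) (hr : 0 ≤ r)
    (ht : t ∈ Set.Icc r s) :
    x ^ t ≤ x ^ r + x ^ s := by
  rcases le_total x 1 with h | h
  · exact (rpow_le_rpow_of_exponent_ge' hx h hr ht.1).trans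
      (le_add_of_nonneg_right (by positivity))
  · exact (rpow_le_rpow_of_exponent_le h ht.2).trans (le_add_of_nonneg_left (by positivity))

section SteinFamily

variable {V : Type*} [NormedAddCommGroup V] [InnerProductSpace ℝ V] [FiniteDimensional ℝ V]
  [MeasurableSpace V] [BorelSpace V]

theorem fourier_finset_sum {ι : Type*} (s : Finset ι) {F : ι → V → ℂ} (hF : ∀ i, Integrable (F i))
    (a : ι → ℂ) (ξ : V) :
    𝓕 (fun x => ∑ i ∈ s, a i * F i x) ξ = ∑ i ∈ s, a i * 𝓕 (F i) ξ := by
  simp only [fourier_eq, ← integral_const_mul]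
  rw [← integral_finsetSum]
  · congr 1; ext x
    rw [Finset.smul_sum]
    exact Finset.sum_congr rfl fun i _ => (mul_smul_comm _ _ _).symm
  · exact fun i _ => ((fourierIntegral_convergent_iff ξ).2 (hF i)).const_mul _

/-- The level sets of `f` provide the functions `g y`. -/
theorem exists_fourier_map_eq_sum {f : SimpleFunc V ℂ} (hf : f.FinMeasSupp volume) :
    ∃ g : ℂ → V → ℂ, (∀ y, MemLp (g y) 2) ∧ ∀ h : ℂ → ℂ, h 0 = 0 → ∀ ξ,
      𝓕 ⇑(f.map h) ξ = ∑ y ∈ f.range, h y * g y ξ := by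
  classical
  let level (y : ℂ) : SimpleFunc V ℂ := f.map fun w => if w = y ∧ w ≠ 0 then 1 else 0
  have level_finMeasSupp (y : ℂ) : (level y).FinMeasSupp volume := hf.map (by simp)
  refine ⟨fun y => 𝓕 ⇑(level y), fun y => memLp_two_fourier (level_finMeasSupp y).integrable
    (memLp_two_of_finMeasSupp (level_finMeasSupp y)), fun h h_zero ξ => ?_⟩
  have map_eq : (f.map h : V → ℂ) = fun x => ∑ y ∈ f.range, h y * level y x := by
    ext x
    rw [Finset.sum_eq_single (f x)]
    · by_cases hx : f x = 0 <;> simp [level, hx, h_zero]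
    · intro y _ hy
      simp [level, hy.symm]
    · exact fun hx => (hx (f.mem_range_self x)).elim
  rw [map_eq, fourier_finset_sum _ fun y => (level_finMeasSupp y).integrable]

/-- Stein's analytic family: the quadratic form of the multiplier `Γ(z + 1) v ^ z` on the
deformations of `f` by `interpCoeff`. The conjugations keep it holomorphic in `z`; the factor
`exp (z ^ 2)` absorbs the growth in `Im z`. -/
def steinFamily (N : ℝ) (v : V → ℂ) (f : SimpleFunc V ℂ) (z : ℂ) : ℂ :=
  Complex.exp (z ^ 2) * Complex.Gamma (z + 1) *
    ∫ ξ, v ξ ^ z * (𝓕 ⇑(f.map (interpCoeff N z)) ξ * conj (𝓕 ⇑(f.map (interpCoeff N (conj z))) ξ))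

variable {N B : ℝ} {v : V → ℂ} {f : SimpleFunc V ℂ}

theorem exists_steinFamily_eq_sum (hv : Measurable v) (hre : ∀ ξ, 0 < (v ξ).re)
    (hB : ∀ ξ, ‖v ξ‖ ≤ B) (hf : f.FinMeasSupp volume) :
    ∃ k : ℂ → ℂ → V → ℂ, (∀ a b, Integrable (k a b)) ∧ ∀ z : ℂ, 0 ≤ z.re →
      steinFamily N v f z = Complex.exp (z ^ 2) * Complex.Gamma (z + 1) *
        ∑ a ∈ f.range, ∑ b ∈ f.range,
          interpCoeff N z a * interpCoeff N z (conj b) * ∫ ξ, v ξ ^ z * k a b ξ := by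
  obtain ⟨g, hg, fourier_map⟩ := exists_fourier_map_eq_sum hf
  have hk (a b : ℂ) : Integrable fun ξ => g a ξ * conj (g b ξ) := (hg a).integrable_mul (hg b).star
  refine ⟨fun a b ξ => g a ξ * conj (g b ξ), hk, fun z hz => ?_⟩
  have expand (ξ : V) :
      v ξ ^ z * (𝓕 ⇑(f.map (interpCoeff N z)) ξ * conj (𝓕 ⇑(f.map (interpCoeff N (conj z))) ξ)) =
        ∑ a ∈ f.range, ∑ b ∈ f.range, interpCoeff N z a * interpCoeff N z (conj b) *
          (v ξ ^ z * (g a ξ * conj (g b ξ))) := by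
    rw [fourier_map _ interpCoeff_zero, fourier_map _ interpCoeff_zero, map_sum,
      Finset.sum_mul_sum, Finset.mul_sum]
    refine Finset.sum_congr rfl fun a _ => ?_
    rw [Finset.mul_sum]
    refine Finset.sum_congr rfl fun b _ => ?_
    rw [map_mul, conj_interpCoeff_conj]
    ring
  have term_integrable (a b : ℂ) : Integrable fun ξ =>
      interpCoeff N z a * interpCoeff N z (conj b) * (v ξ ^ z * (g a ξ * conj (g b ξ))) :=
    (integrable_cpow_mul hv hre hB (hk a b) hz).const_mul _
  simp only [steinFamily, expand]
  rw [integral_finsetSum _ fun a _ => integrable_finsetSum _ fun b _ => term_integrable a b]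
  simp_rw [integral_finsetSum _ fun b _ => term_integrable _ b, integral_const_mul]

theorem diffContOnCl_steinFamily (hN : 0 < N) (hv : Measurable v) (hre : ∀ ξ, 0 < (v ξ).re)
    (hB : ∀ ξ, ‖v ξ‖ ≤ B) (hf : f.FinMeasSupp volume) :
    DiffContOnCl ℂ (steinFamily N v f) (Complex.HadamardThreeLines.verticalStrip 0 N) := by
  obtain ⟨k, hk, eq_sum⟩ := exists_steinFamily_eq_sum (N := N) hv hre hB hf
  have hcoeff (a b : ℂ) : Differentiable ℂ fun z => interpCoeff N z a * interpCoeff N z (conj b) :=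
    (differentiable_interpCoeff N a).mul (differentiable_interpCoeff N (conj b))
  have hexp : Differentiable ℂ fun z : ℂ => Complex.exp (z ^ 2) := by fun_prop
  constructor
  · refine DifferentiableOn.congr (fun z hz => DifferentiableAt.differentiableWithinAt ?_)
      fun z hz => eq_sum z hz.1.le
    exact ((hexp z).mul (differentiableAt_Gamma_add_one hz.1.le)).mul
      (DifferentiableAt.fun_sum fun a _ => DifferentiableAt.fun_sum fun b _ =>
        (hcoeff a b z).mul (differentiableAt_integral_cpow_mul hv hre hB (hk a b) hz.1))
  · rw [Complex.HadamardThreeLines.verticalStrip, Complex.closure_preimage_re, closure_Ioo hN.ne]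
    refine ContinuousOn.congr ?_ fun z hz => eq_sum z hz.1
    have hGamma : ContinuousOn (fun z : ℂ => Complex.Gamma (z + 1)) (Complex.re ⁻¹' Set.Icc 0 N) :=
      fun z hz => (differentiableAt_Gamma_add_one hz.1).continuousAt.continuousWithinAt
    exact (hexp.continuous.continuousOn.mul hGamma).mul
      (continuousOn_finsetSum _ fun a _ => continuousOn_finsetSum _ fun b _ =>
        (hcoeff a b).continuous.continuousOn.mul
          (continuousOn_integral_cpow_mul hv hre hB (hk a b)))

theorem integral_norm_fourier_mul_conj_fourier_le {f g : V → ℂ} (hf : Integrable f)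
    (hf₂ : MemLp f 2) (hg : Integrable g) (hg₂ : MemLp g 2) :
    ∫ ξ, ‖𝓕 f ξ * conj (𝓕 g ξ)‖ ≤ ((∫ x, ‖f x‖ ^ 2) + ∫ x, ‖g x‖ ^ 2) / 2 := by
  have hF := memLp_two_fourier hf hf₂
  have hG := memLp_two_fourier hg hg₂
  have hF' := hF.integrable_norm_pow two_ne_zero
  have hG' := hG.integrable_norm_pow two_ne_zero
  rw [← integral_norm_sq_fourier hf hf₂, ← integral_norm_sq_fourier hg hg₂,
    ← integral_add hF' hG', ← integral_div]
  refine integral_mono (hF.integrable_mul hG.star).norm ((hF'.add hG').div_const 2) fun ξ => ?_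
  simp only [norm_mul, RCLike.norm_conj]
  nlinarith [sq_nonneg (‖𝓕 f ξ‖ - ‖𝓕 g ξ‖)]

theorem norm_steinFamily_le (hN : 0 < N) (hre : ∀ ξ, 0 < (v ξ).re)
    (hB : ∀ ξ, ‖v ξ‖ ≤ B) (hf : f.FinMeasSupp volume) {z : ℂ} (h₀ : 0 ≤ z.re) {M : ℝ}
    (hM : z.re ≤ M) :
    ‖steinFamily N v f z‖ ≤ exp (z.re ^ 2) * Gamma (z.re + 1) * max 1 B ^ M * exp 1 *
      ∫ x, ‖f x‖ ^ (2 * (N + z.re) / (N + 1)) := by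
  set I := ∫ x, ‖f x‖ ^ (2 * (N + z.re) / (N + 1))
  have hfz (w : ℂ) : (f.map (interpCoeff N w)).FinMeasSupp volume := hf.map interpCoeff_zero
  have hpair : Integrable fun ξ =>
      𝓕 ⇑(f.map (interpCoeff N z)) ξ * conj (𝓕 ⇑(f.map (interpCoeff N (conj z))) ξ) :=
    (memLp_two_fourier (hfz _).integrable (memLp_two_of_finMeasSupp (hfz _))).integrable_mul
      (memLp_two_fourier (hfz _).integrable (memLp_two_of_finMeasSupp (hfz _))).star
  have pair_le := integral_norm_fourier_mul_conj_fourier_le (hfz z).integrable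
    (memLp_two_of_finMeasSupp (hfz z)) (hfz (conj z)).integrable
    (memLp_two_of_finMeasSupp (hfz (conj z)))
  rw [integral_norm_sq_map_interpCoeff hN h₀, integral_norm_sq_map_interpCoeff hN (by simpa),
    Complex.conj_re, add_self_div_two] at pair_le
  have Gamma_le : ‖Complex.Gamma (z + 1)‖ ≤ Gamma (z.re + 1) := by
    simpa using norm_Gamma_le_Gamma_re (z := z + 1) (by simp; linarith)
  rw [steinFamily, norm_mul, norm_mul, norm_exp_sq]
  calc _ ≤ exp (z.re ^ 2) * exp (-z.im ^ 2) * Gamma (z.re + 1) *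
        (max 1 B ^ M * exp (π / 2 * |z.im|) * I) := by
        gcongr
        exact (norm_integral_cpow_mul_le hre hB hpair h₀ hM).trans (by gcongr)
    _ = exp (z.re ^ 2) * Gamma (z.re + 1) * max 1 B ^ M *
        (exp (-z.im ^ 2) * exp (π / 2 * |z.im|)) * I := by ring
    _ ≤ _ := by gcongr; exact exp_neg_sq_mul_exp_le _

theorem integrable_norm_rpow_of_finMeasSupp (hf : f.FinMeasSupp volume) {r : ℝ} (hr : r ≠ 0) :
    Integrable fun x => ‖f x‖ ^ r :=
  (hf.map (g := fun a : ℂ => ‖a‖ ^ r) (by simp [hr])).integrable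

theorem bddAbove_norm_steinFamily (hN : 0 < N) (hre : ∀ ξ, 0 < (v ξ).re) (hB : ∀ ξ, ‖v ξ‖ ≤ B)
    (hf : f.FinMeasSupp volume) :
    BddAbove (norm ∘ steinFamily N v f '' Complex.HadamardThreeLines.verticalClosedStrip 0 N) := by
  have Gamma_cont : ContinuousOn (fun x : ℝ => Gamma (x + 1)) (Set.Icc 0 N) := fun x hx =>
    ((differentiableAt_Gamma fun m h => by
      linarith [hx.1, m.cast_nonneg (α := ℝ)]).continuousAt.comp
        (f := fun x : ℝ => x + 1) (by fun_prop)).continuousWithinAt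
  obtain ⟨G, hG⟩ := isCompact_Icc.exists_bound_of_continuousOn Gamma_cont
  have hG₀ : 0 ≤ G := (norm_nonneg _).trans (hG 0 ⟨le_rfl, hN.le⟩)
  have low := integrable_norm_rpow_of_finMeasSupp hf (r := 2 * N / (N + 1)) (by positivity)
  have high := integrable_norm_rpow_of_finMeasSupp hf (r := 4 * N / (N + 1)) (by positivity)
  refine ⟨exp (N ^ 2) * G * max 1 B ^ N * exp 1 *
    ∫ x, (‖f x‖ ^ (2 * N / (N + 1)) + ‖f x‖ ^ (4 * N / (N + 1))), ?_⟩
  rintro _ ⟨z, ⟨h₀, h₁⟩, rfl⟩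
  refine (norm_steinFamily_le hN hre hB hf h₀ h₁).trans ?_
  have integral_le : ∫ x, ‖f x‖ ^ (2 * (N + z.re) / (N + 1)) ≤
      ∫ x, (‖f x‖ ^ (2 * N / (N + 1)) + ‖f x‖ ^ (4 * N / (N + 1))) :=
    integral_mono (integrable_norm_rpow_of_finMeasSupp hf (by positivity)) (low.add high)
      fun x => rpow_le_rpow_add_rpow_of_mem_Icc (norm_nonneg _) (by positivity)
        ⟨by gcongr; linarith, by gcongr ?_ / _; linarith⟩
  gcongr
  exact (le_norm_self _).trans (hG _ ⟨h₀, h₁⟩)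

theorem norm_steinFamily_le_of_re_eq_zero (hN : 0 < N) (hre : ∀ ξ, 0 < (v ξ).re)
    (hB : ∀ ξ, ‖v ξ‖ ≤ B) (hf : f.FinMeasSupp volume) {z : ℂ} (hz : z.re = 0) :
    ‖steinFamily N v f z‖ ≤ exp 1 * ∫ x, ‖f x‖ ^ (2 * N / (N + 1)) := by
  simpa [hz] using norm_steinFamily_le hN hre hB hf hz.ge hz.le

theorem norm_steinFamily_le_of_re_eq {A : ℝ} (hN : 0 < N) (hf : f.FinMeasSupp volume) {z : ℂ}
    (hz : z.re = N) (hint : Integrable fun ξ => v ξ ^ z * Complex.Gamma z)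
    (hA : ∀ x, ‖𝓕 (fun ξ => v ξ ^ z * Complex.Gamma z) x‖ ≤ A * (1 + |z.im|)) :
    ‖steinFamily N v f z‖ ≤
      2 * (N + 1) * exp (N ^ 2) * A * (∫ x, ‖f x‖ ^ (2 * N / (N + 1))) ^ 2 := by
  have hz₀ : z ≠ 0 := by rintro rfl; exact hN.ne hz
  have hA₀ : 0 ≤ A := nonneg_of_mul_nonneg_left ((norm_nonneg _).trans (hA 0)) (by positivity)
  set I := ∫ x, ‖f x‖ ^ (2 * N / (N + 1))
  have integral_norm (w : ℂ) (hw : w.re = N) : ∫ x, ‖f.map (interpCoeff N w) x‖ = I := by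
    simp only [SimpleFunc.map_apply, norm_interpCoeff hN (hw ▸ hN.le), hw, ← two_mul, I]
  have hfz (w : ℂ) : (f.map (interpCoeff N w)).FinMeasSupp volume := hf.map interpCoeff_zero
  have pair_le := norm_integral_mul_fourier_mul_conj_fourier_le hint hA (hfz z).integrable
    (hfz (conj z)).integrable
  rw [integral_norm z hz, integral_norm _ (by simpa using hz)] at pair_le
  have norm_le : ‖z‖ ≤ (N + 1) * (1 + |z.im|) := by
    have h := Complex.norm_le_abs_re_add_abs_im z
    rw [hz, abs_of_pos hN] at h
    nlinarith [abs_nonneg z.im]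
  have family_eq : steinFamily N v f z = Complex.exp (z ^ 2) * z * ∫ ξ, v ξ ^ z * Complex.Gamma z *
      (𝓕 ⇑(f.map (interpCoeff N z)) ξ * conj (𝓕 ⇑(f.map (interpCoeff N (conj z))) ξ)) := by
    rw [steinFamily, Complex.Gamma_add_one z hz₀, ← mul_assoc, mul_assoc, ← integral_const_mul]
    congr 2; ext ξ; ring
  rw [family_eq, norm_mul, norm_mul, norm_exp_sq, hz]
  calc _ ≤ exp (N ^ 2) * exp (-z.im ^ 2) * ((N + 1) * (1 + |z.im|)) *
        (A * (1 + |z.im|) * I * I) := by gcongr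
    _ = (N + 1) * exp (N ^ 2) * A * I ^ 2 * (exp (-z.im ^ 2) * (1 + |z.im|) ^ 2) := by ring
    _ ≤ (N + 1) * exp (N ^ 2) * A * I ^ 2 * 2 := by gcongr; exact exp_neg_sq_mul_sq_le _
    _ = _ := by ring

theorem integral_re_mul_norm_sq_fourier_le_norm_steinFamily_one (hN : 0 < N) (hv : Measurable v)
    (hre : ∀ ξ, 0 < (v ξ).re) (hB : ∀ ξ, ‖v ξ‖ ≤ B) (hf : f.FinMeasSupp volume) :
    ∫ ξ, (v ξ).re * ‖𝓕 ⇑f ξ‖ ^ 2 ≤ ‖steinFamily N v f 1‖ := by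
  have map_one_eq : f.map (interpCoeff N 1) = f := by ext x; simp [interpCoeff_one hN]
  have hint : Integrable fun ξ => v ξ * ((‖𝓕 ⇑f ξ‖ ^ 2 : ℝ) : ℂ) := by
    have h := ((memLp_two_fourier hf.integrable
      (memLp_two_of_finMeasSupp hf)).integrable_norm_pow two_ne_zero).ofReal (𝕜 := ℂ)
    simpa using integrable_cpow_mul (z := 1) hv hre hB h (by simp)
  have family_eq : steinFamily N v f 1 =
      Complex.exp 1 * ∫ ξ, v ξ * ((‖𝓕 ⇑f ξ‖ ^ 2 : ℝ) : ℂ) := by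
    simp only [steinFamily, map_one, map_one_eq, Complex.cpow_one, Complex.mul_conj,
      Complex.normSq_eq_norm_sq, one_pow, Complex.Gamma_add_one _ one_ne_zero, Complex.Gamma_one,
      mul_one]
  have integral_eq : ∫ ξ, (v ξ).re * ‖𝓕 ⇑f ξ‖ ^ 2 =
      (∫ ξ, v ξ * ((‖𝓕 ⇑f ξ‖ ^ 2 : ℝ) : ℂ)).re := by
    rw [← RCLike.re_to_complex, ← integral_re hint]
    simp only [RCLike.re_to_complex, Complex.re_mul_ofReal]
  rw [family_eq, integral_eq, norm_mul, Complex.norm_exp, Complex.one_re]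
  exact (Complex.re_le_norm _).trans
    (le_mul_of_one_le_left (norm_nonneg _) (one_le_exp zero_le_one))

theorem integral_re_mul_norm_sq_fourier_le {A : ℝ} (hN : 1 < N) (hv : Measurable v)
    (hre : ∀ ξ, 0 < (v ξ).re) (hB : ∀ ξ, ‖v ξ‖ ≤ B)
    (hint : ∀ z : ℂ, z.re = N → Integrable fun ξ => v ξ ^ z * Complex.Gamma z)
    (hA : ∀ z : ℂ, z.re = N → ∀ x,
      ‖𝓕 (fun ξ => v ξ ^ z * Complex.Gamma z) x‖ ≤ A * (1 + |z.im|))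
    (hf : f.FinMeasSupp volume) :
    ∫ ξ, (v ξ).re * ‖𝓕 ⇑f ξ‖ ^ 2 ≤ (exp 1 + 2 * (N + 1) * exp (N ^ 2) * A) *
      (∫ x, ‖f x‖ ^ (2 * N / (N + 1))) ^ (1 + 1 / N) := by
  have hN₀ : 0 < N := by linarith
  have hA₀ : 0 ≤ A := by simpa using (norm_nonneg _).trans (hA N (Complex.ofReal_re N) 0)
  set I := ∫ x, ‖f x‖ ^ (2 * N / (N + 1))
  have hI : 0 ≤ I := integral_nonneg fun x => by positivity
  set K := exp 1 + 2 * (N + 1) * exp (N ^ 2) * A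
  have hK : 0 ≤ K := by positivity
  have three_lines := Complex.HadamardThreeLines.norm_le_interp_of_mem_verticalClosedStrip'
    (f := steinFamily N v f) (z := 1) (a := K * I) (b := K * I ^ 2) hN₀
    ⟨by simp, by simpa using hN.le⟩
    (diffContOnCl_steinFamily hN₀ hv hre hB hf) (bddAbove_norm_steinFamily hN₀ hre hB hf)
    (fun z hz => (norm_steinFamily_le_of_re_eq_zero hN₀ hre hB hf hz).trans
      (by gcongr; exact le_add_of_nonneg_right (by positivity)))
    (fun z hz => (norm_steinFamily_le_of_re_eq hN₀ hf hz (hint z hz) (hA z hz)).trans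
      (by gcongr; exact le_add_of_nonneg_left (exp_pos _).le))
  simp only [Complex.one_re, sub_zero] at three_lines
  have hlt : 1 / N < 1 := (div_lt_one hN₀).2 hN
  have hpos : 0 < 1 / N := by positivity
  calc _ ≤ ‖steinFamily N v f 1‖ :=
        integral_re_mul_norm_sq_fourier_le_norm_steinFamily_one hN₀ hv hre hB hf
    _ ≤ (K * I) ^ (1 - 1 / N) * (K * I ^ 2) ^ (1 / N) := three_lines
    _ = (K ^ (1 - 1 / N) * K ^ (1 / N)) * (I ^ (1 - 1 / N) * I ^ (2 * (1 / N))) := by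
        rw [mul_rpow hK hI, mul_rpow hK (by positivity), ← rpow_two, ← rpow_mul hI]; ring
    _ = K * I ^ (1 + 1 / N) := by
        rw [← rpow_add_of_nonneg hK (by linarith) hpos.le,
          ← rpow_add_of_nonneg hI (by linarith) (by positivity), sub_add_cancel, rpow_one]
        congr 2; ring

end SteinFamily

/-! ### Lebesgue norms: duality, interpolation and weights -/

section DualExtremizer

variable {α : Type*} {w : α → ℂ} {p q : ℝ}

/-- The extremiser `conj w |w|^{p-2}` of the duality between `L^p` and its conjugate space,
restricted to a set `B`. -/
def dualExtremizer (p : ℝ) (w : α → ℂ) (B : Set α) : α → ℂ :=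
  B.indicator fun x => conj (w x) * ((‖w x‖ ^ (p - 2) : ℝ) : ℂ)

theorem norm_dualExtremizer_rpow (hpq : p.HolderConjugate q) {B : Set α}
    (hB : ∀ x ∈ B, w x ≠ 0) (x : α) :
    ‖dualExtremizer p w B x‖ ^ q = B.indicator (fun x => ‖w x‖ ^ p) x := by
  by_cases hx : x ∈ B
  · rw [dualExtremizer, Set.indicator_of_mem hx, Set.indicator_of_mem hx, norm_mul,
      RCLike.norm_conj, Complex.norm_real, norm_of_nonneg (by positivity), mul_comm,
      ← rpow_add_one (norm_ne_zero_iff.2 (hB x hx)), ← rpow_mul (norm_nonneg _)]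
    congr 1
    linear_combination hpq.sub_one_mul_conj
  · rw [dualExtremizer, Set.indicator_of_notMem hx, Set.indicator_of_notMem hx, norm_zero,
      zero_rpow hpq.symm.ne_zero]

theorem mul_dualExtremizer (hpq : p.HolderConjugate q) {B : Set α} (hB : ∀ x ∈ B, w x ≠ 0)
    (x : α) : w x * dualExtremizer p w B x = ((‖dualExtremizer p w B x‖ ^ q : ℝ) : ℂ) := by
  rw [norm_dualExtremizer_rpow hpq hB]
  by_cases hx : x ∈ B
  · rw [dualExtremizer, Set.indicator_of_mem hx, Set.indicator_of_mem hx, ← mul_assoc,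
      Complex.mul_conj, ← Complex.ofReal_mul, Complex.normSq_eq_norm_sq, ← rpow_natCast,
      ← rpow_add (norm_pos_iff.2 (hB x hx))]
    congr 2; push_cast; ring
  · rw [dualExtremizer, Set.indicator_of_notMem hx, Set.indicator_of_notMem hx, mul_zero,
      Complex.ofReal_zero]

/-- The set where `w` lies between `1/(n+1)` and `n+1` in norm; these exhaust `{w ≠ 0}`. -/
def normBand (w : α → ℂ) (n : ℕ) : Set α := {x | 1 / ((n : ℝ) + 1) ≤ ‖w x‖ ∧ ‖w x‖ ≤ n + 1}

theorem monotone_normBand (w : α → ℂ) : Monotone (normBand w) := by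
  intro m n hmn x hx
  have hmn' : (m : ℝ) ≤ n := mod_cast hmn
  exact ⟨(one_div_le_one_div_of_le (by positivity) (by linarith)).trans hx.1,
    hx.2.trans (by linarith)⟩

theorem mem_iUnion_normBand {x : α} (hx : w x ≠ 0) : x ∈ ⋃ n, normBand w n := by
  obtain ⟨m, hm⟩ := exists_nat_one_div_lt (norm_pos_iff.2 hx)
  obtain ⟨n, hn⟩ := exists_nat_ge ‖w x‖
  have hmax : (m : ℝ) ≤ (max m n : ℕ) ∧ (n : ℝ) ≤ (max m n : ℕ) :=
    ⟨mod_cast le_max_left m n, mod_cast le_max_right m n⟩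
  exact Set.mem_iUnion.2 ⟨max m n,
    (one_div_le_one_div_of_le (by positivity) (by linarith)).trans hm.le, by linarith⟩

end DualExtremizer

section LpNorms

variable {α : Type*} [MeasurableSpace α] {μ : Measure α} {w : α → ℂ} {p q K : ℝ}

theorem norm_integral_mul_le_of_forall_simpleFunc {f : α → ℂ} (hq : 0 < q) (hw : MemLp w 2 μ)
    (H : ∀ g : SimpleFunc α ℂ, g.FinMeasSupp μ →
      ‖∫ x, w x * g x ∂μ‖ ≤ K * (∫ x, ‖g x‖ ^ q ∂μ) ^ (1 / q))
    (hf : Measurable f) (hf₁ : Integrable f μ) (hf₂ : MemLp f 2 μ)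
    (hfq : Integrable (fun x => ‖f x‖ ^ q) μ) :
    ‖∫ x, w x * f x ∂μ‖ ≤ K * (∫ x, ‖f x‖ ^ q ∂μ) ^ (1 / q) := by
  let F (n : ℕ) : SimpleFunc α ℂ := SimpleFunc.approxOn f hf Set.univ 0 (Set.mem_univ _) n
  have finMeasSupp_F (n : ℕ) : (F n).FinMeasSupp μ :=
    (SimpleFunc.memLp_iff_finMeasSupp one_ne_zero ENNReal.one_ne_top).1
      (SimpleFunc.memLp_approxOn hf (memLp_one_iff_integrable.2 hf₁) _ MemLp.zero n)
  have norm_F_le (n : ℕ) (x : α) : ‖F n x‖ ≤ 2 * ‖f x‖ := by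
    rw [two_mul]; exact SimpleFunc.norm_approxOn_zero_le hf (Set.mem_univ (0 : ℂ)) x n
  have tendsto_F (x : α) : Tendsto (fun n => F n x) atTop (𝓝 (f x)) :=
    SimpleFunc.tendsto_approxOn hf _ (by simp)
  have tendsto_pairing : Tendsto (fun n => ∫ x, w x * F n x ∂μ) atTop (𝓝 (∫ x, w x * f x ∂μ)) := by
    refine tendsto_integral_of_dominated_convergence (fun x => 2 * ‖w x * f x‖)
      (fun n => hw.1.mul (F n).aestronglyMeasurable) ((hw.integrable_mul hf₂).norm.const_mul 2)
      (fun n => Eventually.of_forall fun x => ?_)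
      (Eventually.of_forall fun x => (tendsto_F x).const_mul _)
    rw [norm_mul, norm_mul, mul_left_comm]
    gcongr
    exact norm_F_le n x
  have tendsto_power : Tendsto (fun n => ∫ x, ‖F n x‖ ^ q ∂μ) atTop (𝓝 (∫ x, ‖f x‖ ^ q ∂μ)) := by
    refine tendsto_integral_of_dominated_convergence (fun x => 2 ^ q * ‖f x‖ ^ q)
      (fun n => ((F n).measurable.norm.pow_const q).aestronglyMeasurable) (hfq.const_mul _)
      (fun n => Eventually.of_forall fun x => ?_)
      (Eventually.of_forall fun x => (tendsto_F x).norm.rpow_const (Or.inr hq.le))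
    rw [norm_of_nonneg (by positivity), ← mul_rpow zero_le_two (norm_nonneg _)]
    exact rpow_le_rpow (norm_nonneg _) (norm_F_le n x) hq.le
  exact le_of_tendsto_of_tendsto' tendsto_pairing.norm
    ((tendsto_power.rpow_const (Or.inr (by positivity))).const_mul K) fun n => H _ (finMeasSupp_F n)

theorem measurable_dualExtremizer (p : ℝ) (hw : Measurable w) {B : Set α}
    (hB : MeasurableSet B) : Measurable (dualExtremizer p w B) :=
  Measurable.indicator (by fun_prop) hB

theorem memLp_dualExtremizer (hp : 1 < p) (hw : Measurable w) {B : Set α} (hB : MeasurableSet B)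
    (hμB : μ B ≠ ∞) {M : ℝ} (hM : ∀ x ∈ B, w x ≠ 0 ∧ ‖w x‖ ≤ M) (r : ℝ≥0∞) :
    MemLp (dualExtremizer p w B) r μ := by
  refine (memLp_indicator_const r hB (M ^ (p - 1)) (Or.inr hμB)).mono
    (measurable_dualExtremizer p hw hB).aestronglyMeasurable (Eventually.of_forall fun x => ?_)
  by_cases hx : x ∈ B
  · obtain ⟨hne, hle⟩ := hM x hx
    rw [dualExtremizer, Set.indicator_of_mem hx, Set.indicator_of_mem hx, norm_mul,
      RCLike.norm_conj, Complex.norm_real, norm_of_nonneg (by positivity), mul_comm,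
      ← rpow_add_one (norm_ne_zero_iff.2 hne), show p - 2 + 1 = p - 1 by ring]
    exact (rpow_le_rpow (norm_nonneg _) hle (by linarith)).trans (le_abs_self _)
  · rw [dualExtremizer, Set.indicator_of_notMem hx, Set.indicator_of_notMem hx, norm_zero,
      norm_zero]

theorem le_rpow_of_le_mul_rpow_one_div (hpq : p.HolderConjugate q) (hK : 0 ≤ K) {I : ℝ}
    (hI : 0 ≤ I) (h : I ≤ K * I ^ (1 / q)) : I ≤ K ^ p := by
  rcases hI.eq_or_lt with rfl | hpos
  · positivity
  have split : I = I ^ (1 / p) * I ^ (1 / q) := by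
    rw [← rpow_add hpos, one_div, one_div, hpq.inv_add_inv_eq_one, rpow_one]
  have root_le : I ^ (1 / p) ≤ K :=
    le_of_mul_le_mul_right (split ▸ h) (rpow_pos_of_pos hpos (1 / q))
  calc I = (I ^ (1 / p)) ^ p := by rw [← rpow_mul hI, one_div_mul_cancel hpq.ne_zero, rpow_one]
    _ ≤ K ^ p := rpow_le_rpow (by positivity) root_le hpq.nonneg

theorem setLIntegral_enorm_rpow_le_of_forall_simpleFunc (hpq : p.HolderConjugate q) (hK : 0 ≤ K)
    (hwm : Measurable w) (hw : MemLp w 2 μ)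
    (H : ∀ g : SimpleFunc α ℂ, g.FinMeasSupp μ →
      ‖∫ x, w x * g x ∂μ‖ ≤ K * (∫ x, ‖g x‖ ^ q ∂μ) ^ (1 / q))
    {B : Set α} (hB : MeasurableSet B) (hμB : μ B ≠ ∞) {M : ℝ}
    (hM : ∀ x ∈ B, w x ≠ 0 ∧ ‖w x‖ ≤ M) :
    ∫⁻ x in B, ‖w x‖ₑ ^ p ∂μ ≤ ENNReal.ofReal (K ^ p) := by
  set f := dualExtremizer p w B with hf
  have hB₀ : ∀ x ∈ B, w x ≠ 0 := fun x hx => (hM x hx).1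
  have hmem := memLp_dualExtremizer (μ := μ) hpq.lt hwm hB hμB hM
  have hint : Integrable (fun x => ‖f x‖ ^ q) μ := by
    have := (hmem (ENNReal.ofReal q)).integrable_norm_rpow (by simpa using hpq.symm.pos) (by simp)
    rwa [ENNReal.toReal_ofReal hpq.symm.nonneg] at this
  have hI : 0 ≤ ∫ x, ‖f x‖ ^ q ∂μ := integral_nonneg fun x => by positivity
  have pairing := norm_integral_mul_le_of_forall_simpleFunc hpq.symm.pos hw H
    (measurable_dualExtremizer p hwm hB) (memLp_one_iff_integrable.1 (hmem 1)) (hmem 2) hint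
  have pairing_eq : ‖∫ x, w x * f x ∂μ‖ = ∫ x, ‖f x‖ ^ q ∂μ := by
    simp only [hf, mul_dualExtremizer hpq hB₀]
    exact (congrArg norm integral_ofReal).trans
      ((Complex.norm_real _).trans (norm_of_nonneg hI))
  calc ∫⁻ x in B, ‖w x‖ₑ ^ p ∂μ = ∫⁻ x, ENNReal.ofReal (‖f x‖ ^ q) ∂μ := by
        rw [← lintegral_indicator hB]
        refine lintegral_congr fun x => ?_
        rw [hf, norm_dualExtremizer_rpow hpq hB₀]
        by_cases hx : x ∈ B
        · rw [Set.indicator_of_mem hx, Set.indicator_of_mem hx,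
            ← ENNReal.ofReal_rpow_of_nonneg (norm_nonneg _) hpq.nonneg, ofReal_norm]
        · rw [Set.indicator_of_notMem hx, Set.indicator_of_notMem hx, ENNReal.ofReal_zero]
    _ = ENNReal.ofReal (∫ x, ‖f x‖ ^ q ∂μ) := (ofReal_integral_eq_lintegral_ofReal hint
        (Eventually.of_forall fun x => by positivity)).symm
    _ ≤ ENNReal.ofReal (K ^ p) := ENNReal.ofReal_le_ofReal
        (le_rpow_of_le_mul_rpow_one_div hpq hK hI (pairing_eq ▸ pairing))

theorem measure_normBand_lt_top (hw : MemLp w 2 μ) (n : ℕ) : μ (normBand w n) < ∞ := by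
  refine (measure_mono fun x hx => ?_).trans_lt
    (hw.meas_ge_lt_top (ε := 1 / ((n : NNReal) + 1)) two_ne_zero ENNReal.ofNat_ne_top
      (by positivity))
  exact NNReal.coe_le_coe.1 (by simpa using hx.1)

theorem lintegral_enorm_rpow_le_of_forall_simpleFunc (hpq : p.HolderConjugate q) (hK : 0 ≤ K)
    (hwm : Measurable w) (hw : MemLp w 2 μ)
    (H : ∀ g : SimpleFunc α ℂ, g.FinMeasSupp μ →
      ‖∫ x, w x * g x ∂μ‖ ≤ K * (∫ x, ‖g x‖ ^ q ∂μ) ^ (1 / q)) :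
    ∫⁻ x, ‖w x‖ₑ ^ p ∂μ ≤ ENNReal.ofReal (K ^ p) := by
  have measurableSet_band (n : ℕ) : MeasurableSet (normBand w n) :=
    (measurableSet_le measurable_const hwm.norm).inter (measurableSet_le hwm.norm measurable_const)
  have band_le (n : ℕ) : ∫⁻ x in normBand w n, ‖w x‖ₑ ^ p ∂μ ≤ ENNReal.ofReal (K ^ p) :=
    setLIntegral_enorm_rpow_le_of_forall_simpleFunc hpq hK hwm hw H (measurableSet_band n)
      (measure_normBand_lt_top hw n).ne fun x hx =>
        ⟨norm_pos_iff.1 (lt_of_lt_of_le (by positivity) hx.1), hx.2⟩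
  have exhaust : ∫⁻ x, ‖w x‖ₑ ^ p ∂μ = ∫⁻ x in ⋃ n, normBand w n, ‖w x‖ₑ ^ p ∂μ := by
    rw [← lintegral_indicator (MeasurableSet.iUnion measurableSet_band)]
    refine lintegral_congr fun x => Eq.symm ?_
    refine Set.indicator_apply_eq_self.2 fun hx => ?_
    have hx₀ : w x = 0 := by
      by_contra hne
      exact hx (mem_iUnion_normBand hne)
    rw [hx₀, enorm_zero, ENNReal.zero_rpow_of_pos hpq.pos]
  rw [exhaust, setLIntegral_iUnion_of_directed _ (monotone_normBand w).directed_le]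
  exact iSup_le band_le

theorem eLpNorm_ofReal_eq_lintegral_rpow {r : ℝ} (hr : 0 < r) (u : α → ℂ) :
    eLpNorm u (ENNReal.ofReal r) μ = (∫⁻ x, ‖u x‖ₑ ^ r ∂μ) ^ (1 / r) := by
  rw [eLpNorm_eq_lintegral_rpow_enorm_toReal (by simpa using hr) ENNReal.ofReal_ne_top,
    ENNReal.toReal_ofReal hr.le]

theorem eLpNorm_le_of_forall_simpleFunc (hpq : p.HolderConjugate q) (hK : 0 ≤ K)
    (hw : MemLp w 2 μ)
    (H : ∀ g : SimpleFunc α ℂ, g.FinMeasSupp μ →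
      ‖∫ x, w x * g x ∂μ‖ ≤ K * (∫ x, ‖g x‖ ^ q ∂μ) ^ (1 / q)) :
    eLpNorm w (ENNReal.ofReal p) μ ≤ ENNReal.ofReal K := by
  set w' := hw.1.mk w
  have hae : w =ᵐ[μ] w' := hw.1.ae_eq_mk
  have pairing_eq (g : α → ℂ) : ∫ x, w' x * g x ∂μ = ∫ x, w x * g x ∂μ :=
    integral_congr_ae (hae.mono fun x hx => by simp only [hx])
  have hle := lintegral_enorm_rpow_le_of_forall_simpleFunc hpq hK
    hw.1.stronglyMeasurable_mk.measurable ((memLp_congr_ae hae).1 hw)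
    fun g hg => pairing_eq g ▸ H g hg
  rw [eLpNorm_congr_ae hae, eLpNorm_ofReal_eq_lintegral_rpow hpq.pos]
  calc _ ≤ ENNReal.ofReal (K ^ p) ^ (1 / p) := by
        have := hpq.nonneg
        gcongr
    _ = ENNReal.ofReal K := by
        rw [← ENNReal.ofReal_rpow_of_nonneg hK hpq.nonneg, ← ENNReal.rpow_mul,
          mul_one_div_cancel hpq.ne_zero, ENNReal.rpow_one]

theorem eLpNorm_le_rpow_mul_rpow {u : α → ℂ} {r₀ r₁ θ : ℝ} (hr₀ : 0 < r₀) (hr₁ : 0 < r₁)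
    (hp : 0 < p) (hθ : θ ∈ Set.Icc 0 1) (he : 1 / p = (1 - θ) / r₀ + θ / r₁)
    (hu : AEStronglyMeasurable u μ) :
    eLpNorm u (ENNReal.ofReal p) μ ≤
      eLpNorm u (ENNReal.ofReal r₀) μ ^ (1 - θ) * eLpNorm u (ENNReal.ofReal r₁) μ ^ θ := by
  simp only [eLpNorm_ofReal_eq_lintegral_rpow, hr₀, hr₁, hp]
  have h1θ : 0 ≤ 1 - θ := sub_nonneg.2 hθ.2
  have hθ₀ : 0 ≤ θ := hθ.1
  have weights : p * (1 - θ) / r₀ + p * θ / r₁ = 1 := by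
    rw [mul_div_assoc, mul_div_assoc, ← mul_add, ← he, mul_one_div_cancel hp.ne']
  calc (∫⁻ x, ‖u x‖ₑ ^ p ∂μ) ^ (1 / p)
      = (∫⁻ x, (‖u x‖ₑ ^ r₀) ^ (p * (1 - θ) / r₀) * (‖u x‖ₑ ^ r₁) ^ (p * θ / r₁) ∂μ) ^ (1 / p) := by
        congr 2 with x
        rw [← ENNReal.rpow_mul, ← ENNReal.rpow_mul,
          ← ENNReal.rpow_add_of_nonneg _ _ (by positivity) (by positivity)]
        congr 1; field_simp; ring
    _ ≤ ((∫⁻ x, ‖u x‖ₑ ^ r₀ ∂μ) ^ (p * (1 - θ) / r₀) *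
          (∫⁻ x, ‖u x‖ₑ ^ r₁ ∂μ) ^ (p * θ / r₁)) ^ (1 / p) := by
        gcongr
        exact ENNReal.lintegral_mul_norm_pow_le (hu.enorm.pow_const _) (hu.enorm.pow_const _)
          (by positivity) (by positivity) weights
    _ = _ := by
        rw [ENNReal.mul_rpow_of_nonneg _ _ (by positivity)]
        simp only [← ENNReal.rpow_mul]
        congr 2 <;> field_simp

theorem eLpNorm_le_of_norm_le_of_eLpNorm_le {u : α → ℂ} {r X : ℝ} (hr : 0 < r) (hrp : r ≤ p)
    (hu : ∀ x, ‖u x‖ ≤ X)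
    (hur : eLpNorm u (ENNReal.ofReal r) μ ≤ ENNReal.ofReal X) :
    eLpNorm u (ENNReal.ofReal p) μ ≤ ENNReal.ofReal X := by
  have hp : 0 < p := hr.trans_le hrp
  have hpr : 0 ≤ p - r := sub_nonneg.2 hrp
  rw [eLpNorm_ofReal_eq_lintegral_rpow hr, one_div, ENNReal.rpow_inv_le_iff hr] at hur
  rw [eLpNorm_ofReal_eq_lintegral_rpow hp, one_div, ENNReal.rpow_inv_le_iff hp]
  calc ∫⁻ x, ‖u x‖ₑ ^ p ∂μ ≤ ∫⁻ x, ENNReal.ofReal X ^ (p - r) * ‖u x‖ₑ ^ r ∂μ := by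
        refine lintegral_mono fun x => ?_
        rw [← sub_add_cancel p r, ENNReal.rpow_add_of_nonneg _ _ hpr hr.le, sub_add_cancel]
        gcongr
        rw [← ofReal_norm]
        exact ENNReal.ofReal_le_ofReal (hu x)
    _ = ENNReal.ofReal X ^ (p - r) * ∫⁻ x, ‖u x‖ₑ ^ r ∂μ :=
        lintegral_const_mul' _ _ (by simp [hrp])
    _ ≤ ENNReal.ofReal X ^ (p - r) * ENNReal.ofReal X ^ r := by gcongr
    _ = ENNReal.ofReal X ^ p := by
        rw [← ENNReal.rpow_add_of_nonneg _ _ hpr hr.le, sub_add_cancel]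

/-- Cauchy–Schwarz for the factorisation `‖a‖ ‖b‖ = (‖a‖ √m) (‖b‖ / √m)`. -/
theorem sq_integral_norm_mul_norm_le {a b : α → ℂ} {m : α → ℝ} (ha : AEStronglyMeasurable a μ)
    (hb : AEStronglyMeasurable b μ) (hm : Measurable m) (hm₀ : ∀ x, 0 < m x)
    (ham : Integrable (fun x => ‖a x‖ ^ 2 * m x) μ)
    (hbm : Integrable (fun x => ‖b x‖ ^ 2 * (m x)⁻¹) μ) :
    (∫ x, ‖a x‖ * ‖b x‖ ∂μ) ^ 2 ≤ (∫ x, ‖a x‖ ^ 2 * m x ∂μ) * ∫ x, ‖b x‖ ^ 2 * (m x)⁻¹ ∂μ := by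
  have sq_left (x : α) : (‖a x‖ * √(m x)) ^ 2 = ‖a x‖ ^ 2 * m x := by
    rw [mul_pow, sq_sqrt (hm₀ x).le]
  have sq_right (x : α) : (‖b x‖ * (√(m x))⁻¹) ^ 2 = ‖b x‖ ^ 2 * (m x)⁻¹ := by
    rw [mul_pow, inv_pow, sq_sqrt (hm₀ x).le]
  have product (x : α) : ‖a x‖ * √(m x) * (‖b x‖ * (√(m x))⁻¹) = ‖a x‖ * ‖b x‖ := by
    have : √(m x) ≠ 0 := (sqrt_pos.2 (hm₀ x)).ne'
    field_simp
  have left_memLp : MemLp (fun x => ‖a x‖ * √(m x)) 2 μ :=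
    (memLp_two_iff_integrable_sq (ha.norm.mul hm.sqrt.aestronglyMeasurable)).2
      (ham.congr (Eventually.of_forall fun x => (sq_left x).symm))
  have right_memLp : MemLp (fun x => ‖b x‖ * (√(m x))⁻¹) 2 μ :=
    (memLp_two_iff_integrable_sq (hb.norm.mul hm.sqrt.inv.aestronglyMeasurable)).2
      (hbm.congr (Eventually.of_forall fun x => (sq_right x).symm))
  have holder := integral_mul_le_Lp_mul_Lq_of_nonneg (μ := μ)
    HolderConjugate.two_two (f := fun x => ‖a x‖ * √(m x))
    (g := fun x => ‖b x‖ * (√(m x))⁻¹) (Eventually.of_forall fun x => by positivity)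
    (Eventually.of_forall fun x => by positivity) (by simpa using left_memLp)
    (by simpa using right_memLp)
  simp only [product, rpow_two, sq_left, sq_right, ← sqrt_eq_rpow] at holder
  calc _ ≤ (√(∫ x, ‖a x‖ ^ 2 * m x ∂μ) * √(∫ x, ‖b x‖ ^ 2 * (m x)⁻¹ ∂μ)) ^ 2 :=
        pow_le_pow_left₀ (integral_nonneg fun x => by positivity) holder 2
    _ = _ := by
        rw [mul_pow, sq_sqrt (integral_nonneg fun x => mul_nonneg (sq_nonneg _) (hm₀ x).le),
          sq_sqrt (integral_nonneg fun x => mul_nonneg (sq_nonneg _) (inv_nonneg.2 (hm₀ x).le))]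

end LpNorms

/-! ### Shells around the unit sphere -/

section UnitShell

/-- The closed shell `||ξ| - 1| ≤ l` around the unit sphere. -/
def unitShell (V : Type*) [Norm V] (l : ℝ) : Set V := {ξ | |‖ξ‖ - 1| ≤ l}

variable {V : Type*} [NormedAddCommGroup V] {l : ℝ}

theorem unitShell_eq_sdiff (l : ℝ) :
    unitShell V l = Metric.closedBall 0 (1 + l) \ Metric.ball 0 (1 - l) := by
  ext ξ
  rw [Set.mem_sdiff, mem_closedBall_zero_iff, mem_ball_zero_iff, not_lt]
  change |‖ξ‖ - 1| ≤ l ↔ _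
  rw [abs_le]
  constructor <;> rintro ⟨h₁, h₂⟩ <;> constructor <;> linarith

theorem isBounded_unitShell (l : ℝ) : Bornology.IsBounded (unitShell V l) := by
  rw [unitShell_eq_sdiff]
  exact Metric.isBounded_closedBall.subset Set.sdiff_subset

variable [MeasurableSpace V] [BorelSpace V]

theorem measurableSet_unitShell (l : ℝ) : MeasurableSet (unitShell V l) :=
  (isClosed_le (by fun_prop) continuous_const).measurableSet

theorem one_add_pow_le_one_add_two_pow_sub_one_mul (hl : 0 ≤ l) (hl₁ : l ≤ 1) (n : ℕ) :
    (1 + l) ^ n ≤ 1 + (2 ^ n - 1) * l := by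
  induction n with
  | zero => simp
  | succ n ih =>
    have one_le : (1 : ℝ) ≤ 2 ^ n := one_le_pow₀ one_le_two
    rw [pow_succ, pow_succ]
    calc (1 + l) ^ n * (1 + l) ≤ (1 + (2 ^ n - 1) * l) * (1 + l) := by gcongr
      _ ≤ 1 + (2 ^ n * 2 - 1) * l := by
        nlinarith [mul_nonneg (mul_nonneg (sub_nonneg.2 one_le) hl) (sub_nonneg.2 hl₁)]

end UnitShell

section UnitShellVolume

variable {V : Type*} [NormedAddCommGroup V] [InnerProductSpace ℝ V] [FiniteDimensional ℝ V]
  [MeasurableSpace V] [BorelSpace V] {l : ℝ}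

theorem volume_unitShell_lt_top (l : ℝ) : volume (unitShell V l) < ∞ :=
  (isBounded_unitShell l).measure_lt_top

variable [Nontrivial V]

theorem volume_unitShell (hl : 0 ≤ l) (hl₁ : l ≤ 1) :
    volume (unitShell V l) = ENNReal.ofReal (((1 + l) ^ Module.finrank ℝ V -
      (1 - l) ^ Module.finrank ℝ V) * volume.real (Metric.ball (0 : V) 1)) := by
  have hω : volume (Metric.ball (0 : V) 1) =
      ENNReal.ofReal (volume.real (Metric.ball (0 : V) 1)) :=
    (ofReal_measureReal measure_ball_lt_top.ne).symm
  rw [unitShell_eq_sdiff, measure_sdiff (Metric.ball_subset_closedBall.trans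
      (Metric.closedBall_subset_closedBall (by linarith))) measurableSet_ball.nullMeasurableSet
      measure_ball_lt_top.ne,
    Measure.addHaar_closedBall volume (0 : V) (r := 1 + l) (by linarith),
    Measure.addHaar_ball volume (0 : V) (r := 1 - l) (by linarith), hω,
    ← ENNReal.ofReal_mul (by positivity), ← ENNReal.ofReal_mul (pow_nonneg (by linarith) _),
    ← ENNReal.ofReal_sub _ (mul_nonneg (pow_nonneg (by linarith) _) measureReal_nonneg), sub_mul]

theorem exists_volume_unitShell_le : ∃ C > 0, ∀ l : ℝ, 0 < l → l ≤ 1 →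
    volume (unitShell V l) ≤ ENNReal.ofReal C * ENNReal.ofReal l := by
  have hω : 0 < volume.real (Metric.ball (0 : V) 1) :=
    ENNReal.toReal_pos (Metric.measure_ball_pos _ _ one_pos).ne' measure_ball_lt_top.ne
  refine ⟨(2 ^ Module.finrank ℝ V + Module.finrank ℝ V) * volume.real (Metric.ball (0 : V) 1),
    by positivity, fun l hl hl₁ => ?_⟩
  rw [volume_unitShell hl.le hl₁, ← ENNReal.ofReal_mul (by positivity), mul_right_comm]
  have outer := one_add_pow_le_one_add_two_pow_sub_one_mul hl.le hl₁ (Module.finrank ℝ V)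
  have inner := one_add_mul_le_pow (a := -l) (by linarith) (Module.finrank ℝ V)
  rw [← sub_eq_add_neg] at inner
  gcongr
  linarith

theorem exists_le_volume_unitShell : ∃ c > 0, ∀ l : ℝ, 0 < l → l ≤ 1 →
    ENNReal.ofReal (c * l) ≤ volume (unitShell V l) := by
  have hω : 0 < volume.real (Metric.ball (0 : V) 1) :=
    ENNReal.toReal_pos (Metric.measure_ball_pos _ _ one_pos).ne' measure_ball_lt_top.ne
  have hn : (0 : ℝ) < Module.finrank ℝ V := mod_cast Module.finrank_pos
  refine ⟨Module.finrank ℝ V * volume.real (Metric.ball (0 : V) 1), by positivity,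
    fun l hl hl₁ => ?_⟩
  rw [volume_unitShell hl.le hl₁, mul_right_comm]
  have outer := one_add_mul_le_pow (a := l) (by linarith) (Module.finrank ℝ V)
  have inner : (1 - l) ^ Module.finrank ℝ V ≤ 1 := pow_le_one₀ (by linarith) (by linarith)
  gcongr
  linarith

end UnitShellVolume

section DyadicDecomposition

variable {γ δ : ℝ}

theorem exists_inv_add_rpow_le_dyadic (hγ : 0 < γ) (hδ : 0 < δ) (hδ₁ : δ ≤ 1) {t : ℝ}
    (ht : 0 ≤ t) (ht₁ : t ≤ 1 / 2) : ∃ j : ℕ, t ≤ 2 ^ j * δ ∧ 2 ^ j * δ ≤ 1 ∧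
      (δ ^ γ + t ^ γ)⁻¹ ≤ 2 ^ γ * (2 ^ j * δ) ^ (-γ) := by
  rcases le_or_gt t δ with h | h
  · refine ⟨0, by simpa using h, by simpa using hδ₁, ?_⟩
    rw [pow_zero, one_mul, rpow_neg hδ.le]
    calc (δ ^ γ + t ^ γ)⁻¹ ≤ (δ ^ γ)⁻¹ :=
          inv_anti₀ (by positivity) (le_add_of_nonneg_right (by positivity))
      _ ≤ 2 ^ γ * (δ ^ γ)⁻¹ :=
          le_mul_of_one_le_left (by positivity) (one_le_rpow one_le_two hγ.le)
  · obtain ⟨n, hn, hn'⟩ := exists_nat_pow_near ((one_le_div hδ).2 h.le) one_lt_two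
    rw [le_div_iff₀ hδ] at hn
    rw [div_lt_iff₀ hδ] at hn'
    refine ⟨n + 1, hn'.le, by rw [pow_succ]; linarith, ?_⟩
    have rescale : (2 : ℝ) ^ γ * (2 ^ (n + 1) * δ) ^ (-γ) = ((2 ^ n * δ) ^ γ)⁻¹ := by
      rw [pow_succ, mul_right_comm, mul_rpow (by positivity) zero_le_two, rpow_neg zero_le_two,
        rpow_neg (by positivity)]
      field_simp
    rw [rescale]
    exact inv_anti₀ (by positivity) (le_add_of_nonneg_of_le (by positivity)
      (rpow_le_rpow (by positivity) hn hγ.le))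

theorem dyadic_term_eq (hδ : 0 < δ) (j : ℕ) :
    2 ^ γ * (2 ^ j * δ) ^ (-γ) * (2 ^ j * δ) = 2 ^ γ * δ ^ (1 - γ) * (2 ^ (1 - γ)) ^ j := by
  have hx : (0 : ℝ) < 2 ^ j * δ := by positivity
  rw [mul_assoc, ← rpow_add_one hx.ne', neg_add_eq_sub, mul_rpow (by positivity) hδ.le,
    ← rpow_natCast, ← rpow_natCast, ← rpow_mul zero_le_two, ← rpow_mul zero_le_two,
    mul_comm (j : ℝ)]
  ring

theorem tsum_ofReal_dyadic_term (hγ : 1 < γ) (hδ : 0 < δ) :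
    ∑' j : ℕ, ENNReal.ofReal (2 ^ γ * (2 ^ j * δ) ^ (-γ) * (2 ^ j * δ)) =
      ENNReal.ofReal (2 ^ γ * (1 - 2 ^ (1 - γ))⁻¹ * δ ^ (1 - γ)) := by
  have ratio_lt_one : (2 : ℝ) ^ (1 - γ) < 1 :=
    rpow_lt_one_of_one_lt_of_neg one_lt_two (by linarith)
  simp only [dyadic_term_eq hδ]
  rw [← ENNReal.ofReal_tsum_of_nonneg (fun j => by positivity)
      ((summable_geometric_of_lt_one (by positivity) ratio_lt_one).mul_left _),
    tsum_mul_left, tsum_geometric_of_lt_one (by positivity) ratio_lt_one, mul_right_comm]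

variable {α : Type*} [MeasurableSpace α] {ν : Measure α} {t : α → ℝ} {K : ℝ≥0∞}

theorem setLIntegral_inv_rpow_add_rpow_le (hγ : 1 < γ) (ht : Measurable t) (ht₀ : ∀ x, 0 ≤ t x)
    (hν : ∀ l : ℝ, 0 < l → l ≤ 1 → ν {x | t x ≤ l} ≤ K * ENNReal.ofReal l)
    (hδ : 0 < δ) (hδ₁ : δ ≤ 1) :
    ∫⁻ x in {x | t x ≤ 1 / 2}, ENNReal.ofReal (δ ^ γ + t x ^ γ)⁻¹ ∂ν ≤
      K * ENNReal.ofReal (2 ^ γ * (1 - 2 ^ (1 - γ))⁻¹ * δ ^ (1 - γ)) := by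
  let S (j : ℕ) : Set α := {x | t x ≤ 2 ^ j * δ ∧ 2 ^ j * δ ≤ 1}
  let c (j : ℕ) : ℝ := 2 ^ γ * (2 ^ j * δ) ^ (-γ)
  have measurableSet_S (j : ℕ) : MeasurableSet (S j) :=
    (measurableSet_le ht measurable_const).inter (MeasurableSet.const _)
  have measure_S_le (j : ℕ) : ν (S j) ≤ K * ENNReal.ofReal (2 ^ j * δ) := by
    by_cases h : 2 ^ j * δ ≤ 1
    · exact (measure_mono fun x hx => hx.1).trans (hν _ (by positivity) h)
    · have : S j = ∅ := Set.eq_empty_of_forall_notMem fun x hx => h hx.2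
      rw [this, measure_empty]
      exact zero_le
  have pointwise : ∀ x ∈ {x | t x ≤ 1 / 2}, ENNReal.ofReal (δ ^ γ + t x ^ γ)⁻¹ ≤
      ∑' j, (S j).indicator (fun _ => ENNReal.ofReal (c j)) x := by
    intro x hx
    obtain ⟨j, hj, hj', hle⟩ :=
      exists_inv_add_rpow_le_dyadic (γ := γ) (by linarith) hδ hδ₁ (ht₀ x) hx
    refine le_trans ?_ (ENNReal.le_tsum j)
    rw [Set.indicator_of_mem (show x ∈ S j from ⟨hj, hj'⟩)]
    exact ENNReal.ofReal_le_ofReal hle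
  calc _ ≤ ∫⁻ x, ∑' j, (S j).indicator (fun _ => ENNReal.ofReal (c j)) x ∂ν :=
        (setLIntegral_mono' (measurableSet_le ht measurable_const) pointwise).trans
          (setLIntegral_le_lintegral _ _)
    _ = ∑' j, ENNReal.ofReal (c j) * ν (S j) := by
        rw [lintegral_tsum fun j => (measurable_const.indicator (measurableSet_S j)).aemeasurable]
        simp only [lintegral_indicator_const (measurableSet_S _)]
    _ ≤ ∑' j : ℕ, K * ENNReal.ofReal (c j * (2 ^ j * δ)) := by
        refine ENNReal.tsum_le_tsum fun j => ?_
        rw [ENNReal.ofReal_mul (by positivity : 0 ≤ c j), mul_left_comm]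
        gcongr
        exact measure_S_le j
    _ = _ := by rw [ENNReal.tsum_mul_left, tsum_ofReal_dyadic_term hγ hδ]

theorem setLIntegral_inv_add_rpow_le (hγ : 1 < γ) (ht : Measurable t) (ht₀ : ∀ x, 0 ≤ t x)
    (hν : ∀ l : ℝ, 0 < l → l ≤ 1 → ν {x | t x ≤ l} ≤ K * ENNReal.ofReal l)
    {ε : ℝ} (hε : 0 < ε) (hε₁ : ε ≤ 1) :
    ∫⁻ x in {x | t x ≤ 1 / 2}, ENNReal.ofReal (ε + t x ^ γ)⁻¹ ∂ν ≤
      K * ENNReal.ofReal (2 ^ γ * (1 - 2 ^ (1 - γ))⁻¹ * ε ^ (1 / γ - 1)) := by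
  have hγ₀ : 0 < γ := by linarith
  have main := setLIntegral_inv_rpow_add_rpow_le hγ ht ht₀ hν (δ := ε ^ (1 / γ)) (by positivity)
    (rpow_le_one hε.le hε₁ (by positivity))
  rw [← rpow_mul hε.le, one_div_mul_cancel hγ₀.ne', rpow_one, ← rpow_mul hε.le, mul_sub, mul_one,
    one_div_mul_cancel hγ₀.ne'] at main
  exact main

end DyadicDecomposition

/-! ### Thickened Stein–Tomas and Sobolev estimates -/

section ShellSymbolOnShell

variable {V : Type*} [NormedAddCommGroup V] {l : ℝ} {ξ : V}

theorem im_shellSymbol (l : ℝ) (ξ : V) : (shellSymbol l ξ).im = 1 - ‖ξ‖ ^ 2 := by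
  rw [shellSymbol, Complex.add_im, Complex.im_mul_ofReal]
  simp; ring

theorem le_re_shellSymbol (hl : 0 ≤ l) (ξ : V) : l ≤ (shellSymbol l ξ).re := by
  rw [re_shellSymbol]; nlinarith [sq_nonneg ‖ξ‖]

theorem norm_one_div_shellSymbol_le (hl : 0 < l) (ξ : V) : ‖1 / shellSymbol l ξ‖ ≤ 1 / l := by
  rw [norm_div, norm_one]
  exact one_div_le_one_div_of_le hl ((le_re_shellSymbol hl.le ξ).trans (Complex.re_le_norm _))

theorem re_one_div_shellSymbol (l : ℝ) (ξ : V) :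
    (1 / shellSymbol l ξ).re = (shellSymbol l ξ).re / ‖shellSymbol l ξ‖ ^ 2 := by
  rw [one_div, Complex.inv_re, Complex.normSq_eq_norm_sq]

theorem norm_shellSymbol_pos (hl : 0 < l) (ξ : V) : 0 < ‖shellSymbol l ξ‖ :=
  (re_shellSymbol_pos hl ξ).trans_le (Complex.re_le_norm _)

theorem re_one_div_shellSymbol_pos (hl : 0 < l) (ξ : V) : 0 < (1 / shellSymbol l ξ).re := by
  rw [re_one_div_shellSymbol]
  exact div_pos (re_shellSymbol_pos hl ξ) (pow_pos (norm_shellSymbol_pos hl ξ) 2)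

theorem sq_norm_shellSymbol_le (hl : 0 < l) (hl₁ : l ≤ 1) (hξ : ξ ∈ unitShell V l) :
    ‖shellSymbol l ξ‖ ^ 2 ≤ 34 * l ^ 2 := by
  have hshell := abs_le.1 (show |‖ξ‖ - 1| ≤ l from hξ)
  have hξ₂ : ‖ξ‖ ≤ 2 := by linarith
  have hξ₀ : 0 ≤ ‖ξ‖ := norm_nonneg ξ
  have hξ_sq : ‖ξ‖ ^ 2 ≤ 4 := by nlinarith [hξ₀, hξ₂]
  have re_part : (1 + ‖ξ‖ ^ 2) ^ 2 ≤ 25 := by nlinarith [sq_nonneg ‖ξ‖]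
  have im_part : (1 + ‖ξ‖) ^ 2 ≤ 9 := by nlinarith
  have near_sphere : (1 - ‖ξ‖) ^ 2 ≤ l ^ 2 := sq_le_sq' (by linarith) (by linarith)
  calc ‖shellSymbol l ξ‖ ^ 2 = l ^ 2 * (1 + ‖ξ‖ ^ 2) ^ 2 + (1 + ‖ξ‖) ^ 2 * (1 - ‖ξ‖) ^ 2 := by
        rw [← Complex.normSq_eq_norm_sq, Complex.normSq_apply, re_shellSymbol, im_shellSymbol]
        ring
    _ ≤ l ^ 2 * 25 + 9 * l ^ 2 := by gcongr
    _ = 34 * l ^ 2 := by ring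

theorem one_le_mul_re_one_div_shellSymbol (hl : 0 < l) (hl₁ : l ≤ 1) (hξ : ξ ∈ unitShell V l) :
    1 ≤ 34 * l * (1 / shellSymbol l ξ).re := by
  rw [re_one_div_shellSymbol, ← mul_div_assoc,
    le_div_iff₀ (pow_pos (norm_shellSymbol_pos hl ξ) 2), one_mul]
  calc _ ≤ 34 * l * l := (sq_norm_shellSymbol_le hl hl₁ hξ).trans_eq (by ring)
    _ ≤ _ := by gcongr; exact le_re_shellSymbol hl.le ξ

end ShellSymbolOnShell

theorem norm_cpow_japanese_mul_Gamma_le {V : Type*} [NormedAddCommGroup V] {s N : ℝ}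
    (hN : 0 < N) {z : ℂ} (hz : z.re = N) (ξ : V) :
    ‖(((1 + ‖ξ‖ ^ 2) ^ (-s) : ℝ) : ℂ) ^ z * Complex.Gamma z‖ ≤
      Gamma N * (1 + ‖ξ‖ ^ 2) ^ (-(2 * s * N) / 2) := by
  have hΓ := norm_Gamma_le_Gamma_re (z := z) (hz ▸ hN)
  rw [hz] at hΓ
  rw [norm_mul, Complex.norm_cpow_eq_rpow_re_of_pos (by positivity), hz,
    ← rpow_mul (by positivity), mul_comm, show -s * N = -(2 * s * N) / 2 by ring]
  gcongr

section FourierRestriction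

variable {V : Type*} [NormedAddCommGroup V] [InnerProductSpace ℝ V] [FiniteDimensional ℝ V]
  [MeasurableSpace V] [BorelSpace V] {l : ℝ} {f : SimpleFunc V ℂ}

theorem integrable_norm_sq_fourier_of_finMeasSupp (hf : f.FinMeasSupp volume) :
    Integrable fun ξ => ‖𝓕 ⇑f ξ‖ ^ 2 :=
  (memLp_two_fourier hf.integrable (memLp_two_of_finMeasSupp hf)).integrable_norm_pow two_ne_zero

theorem setIntegral_unitShell_norm_sq_fourier_le (hl : 0 < l) (hl₁ : l ≤ 1)
    (hf : f.FinMeasSupp volume) :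
    ∫ ξ in unitShell V l, ‖𝓕 ⇑f ξ‖ ^ 2 ≤
      34 * l * ∫ ξ, (1 / shellSymbol l ξ).re * ‖𝓕 ⇑f ξ‖ ^ 2 := by
  have hsq := integrable_norm_sq_fourier_of_finMeasSupp hf
  have hint : Integrable fun ξ => (1 / shellSymbol l ξ).re * ‖𝓕 ⇑f ξ‖ ^ 2 := by
    have hmeas : Measurable fun ξ : V => (1 / shellSymbol l ξ).re :=
      Complex.measurable_re.comp (measurable_const.div (continuous_shellSymbol l).measurable)
    exact hsq.bdd_mul (c := 1 / l) hmeas.aestronglyMeasurable (Eventually.of_forall fun ξ =>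
      (Complex.abs_re_le_norm _).trans (norm_one_div_shellSymbol_le hl ξ))
  rw [← integral_const_mul]
  calc _ ≤ ∫ ξ in unitShell V l, 34 * l * ((1 / shellSymbol l ξ).re * ‖𝓕 ⇑f ξ‖ ^ 2) := by
        refine setIntegral_mono_on hsq.integrableOn (hint.const_mul _).integrableOn
          (measurableSet_unitShell l) fun ξ hξ => ?_
        rw [← mul_assoc]
        exact le_mul_of_one_le_left (by positivity) (one_le_mul_re_one_div_shellSymbol hl hl₁ hξ)
    _ ≤ _ := setIntegral_le_integral (hint.const_mul _) (Eventually.of_forall fun ξ =>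
        mul_nonneg (by positivity) (mul_nonneg (re_one_div_shellSymbol_pos hl ξ).le (sq_nonneg _)))

/-- The Stein–Tomas theorem with the factor `l` that integrating the restriction estimate over the
spheres of the shell would give. -/
theorem exists_setIntegral_unitShell_norm_sq_fourier_le (hV : 2 ≤ Module.finrank ℝ V) {q : ℝ}
    (hq : q = 2 * (Module.finrank ℝ V + 1) / (Module.finrank ℝ V + 3)) :
    ∃ C > 0, ∀ l : ℝ, 0 < l → l ≤ 1 → ∀ f : SimpleFunc V ℂ, f.FinMeasSupp volume →
      ∫ ξ in unitShell V l, ‖𝓕 ⇑f ξ‖ ^ 2 ≤ C * l * (∫ x, ‖f x‖ ^ q) ^ (2 / q) := by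
  have : Nontrivial V := Module.nontrivial_of_finrank_pos (R := ℝ) (by omega)
  have hn : (2 : ℝ) ≤ Module.finrank ℝ V := mod_cast hV
  set n : ℝ := ((Module.finrank ℝ V : ℕ) : ℝ) with hn_def
  set N : ℝ := (n + 1) / 2 with hN
  set A : ℝ := 10 * π ^ (n / 2)
  refine ⟨34 * (exp 1 + 2 * (N + 1) * exp (N ^ 2) * A), by positivity, fun l hl hl₁ f hf => ?_⟩
  have stein := integral_re_mul_norm_sq_fourier_le (A := A) (f := f)
    (v := fun ξ : V => 1 / shellSymbol l ξ) (B := 1 / l) (by linarith : 1 < N)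
    (measurable_const.div (continuous_shellSymbol l).measurable)
    (re_one_div_shellSymbol_pos hl) (norm_one_div_shellSymbol_le hl)
    (fun z hz => integrable_shellMultiplier hl (by rw [hz, hN, ← hn_def]; linarith))
    (fun z hz x => (norm_fourier_shellMultiplier_le hl (by rw [hz, hN, hn_def]) x).trans (by
      have : 0 < π ^ (n / 2) := by positivity
      nlinarith [abs_nonneg z.im, mul_nonneg this.le (abs_nonneg z.im)])) hf
  have exponent : 2 * N / (N + 1) = q := by rw [hq, hN]; field_simp; ring
  have power : 1 + 1 / N = 2 / q := by rw [hq, hN]; field_simp; ring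
  rw [exponent, power] at stein
  calc _ ≤ 34 * l * ∫ ξ, (1 / shellSymbol l ξ).re * ‖𝓕 ⇑f ξ‖ ^ 2 :=
        setIntegral_unitShell_norm_sq_fourier_le hl hl₁ hf
    _ ≤ 34 * l * ((exp 1 + 2 * (N + 1) * exp (N ^ 2) * A) * (∫ x, ‖f x‖ ^ q) ^ (2 / q)) := by
        gcongr
    _ = _ := by ring

theorem exists_integral_japanese_mul_norm_sq_fourier_le {s p q : ℝ} (hs : 0 < s) (hp : 2 < p)
    (hpq : p.HolderConjugate q) (hsp : Module.finrank ℝ V < 2 * s * (p / (p - 2))) :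
    ∃ C > 0, ∀ f : SimpleFunc V ℂ, f.FinMeasSupp volume →
      ∫ ξ, (1 + ‖ξ‖ ^ 2) ^ (-s) * ‖𝓕 ⇑f ξ‖ ^ 2 ≤ C * (∫ x, ‖f x‖ ^ q) ^ (2 / q) := by
  have hp₂ : 0 < p - 2 := by linarith
  set N : ℝ := p / (p - 2) with hN
  have hN₁ : 1 < N := by rw [hN, lt_div_iff₀ hp₂]; linarith
  have hN₀ : 0 < N := by linarith
  have integrable_japanese := integrable_rpow_neg_one_add_norm_sq (E := V) (μ := volume) hsp
  set A := Gamma N * ∫ ξ : V, (1 + ‖ξ‖ ^ 2) ^ (-(2 * s * N) / 2) with hA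
  have hA₀ : 0 ≤ A := mul_nonneg (Gamma_pos_of_pos hN₀).le (integral_nonneg fun ξ => by positivity)
  have hmeas : Measurable fun ξ : V => (((1 + ‖ξ‖ ^ 2) ^ (-s) : ℝ) : ℂ) := by fun_prop
  have hint (z : ℂ) (hz : z.re = N) :
      Integrable fun ξ : V => (((1 + ‖ξ‖ ^ 2) ^ (-s) : ℝ) : ℂ) ^ z * Complex.Gamma z :=
    (integrable_japanese.const_mul (Gamma N)).mono'
      ((hmeas.pow_const _).mul_const _).aestronglyMeasurable
      (Eventually.of_forall (norm_cpow_japanese_mul_Gamma_le hN₀ hz))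
  refine ⟨exp 1 + 2 * (N + 1) * exp (N ^ 2) * A, by positivity, fun f hf => ?_⟩
  have stein := integral_re_mul_norm_sq_fourier_le (A := A) (B := 1) (f := f) hN₁ hmeas
    (fun ξ => by rw [Complex.ofReal_re]; positivity)
    (fun ξ => by
      rw [Complex.norm_real, norm_of_nonneg (by positivity)]
      exact rpow_le_one_of_one_le_of_nonpos (by nlinarith [sq_nonneg ‖ξ‖]) (by linarith))
    hint
    (fun z hz x => (norm_fourier_le_integral_norm _ x).trans <| by
      calc _ ≤ A := by
            rw [hA, ← integral_const_mul]
            exact integral_mono (hint z hz).norm (integrable_japanese.const_mul (Gamma N))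
              (norm_cpow_japanese_mul_Gamma_le hN₀ hz)
        _ ≤ A * (1 + |z.im|) :=
            le_mul_of_one_le_right hA₀ (le_add_of_nonneg_right (abs_nonneg _))) hf
  have hp₁ : 0 < p - 1 := by linarith
  have hq : q = p / (p - 1) := hpq.conjugate_eq
  have exponent : 2 * N / (N + 1) = q := by
    rw [hq, hN, show p / (p - 2) + 1 = 2 * (p - 1) / (p - 2) by field_simp; ring]
    field_simp
  have power : 1 + 1 / N = 2 / q := by rw [hq, hN]; field_simp; ring
  rw [exponent, power] at stein
  simpa only [Complex.ofReal_re] using stein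

end FourierRestriction

/-! ### Weighted bounds for inverse Fourier transforms -/

section ShellWeight

theorem one_sub_two_rpow_pos {γ : ℝ} (hγ : 1 < γ) : 0 < 1 - (2 : ℝ) ^ (1 - γ) :=
  sub_pos.2 (rpow_lt_one_of_one_lt_of_neg one_lt_two (by linarith))

variable {V : Type*} [NormedAddCommGroup V] {γ ε : ℝ}

/-- The model symbol `ε + ||ξ| - 1|^γ` to which admissible symbols are comparable near the unit
sphere. -/
def shellWeight (γ ε : ℝ) (ξ : V) : ℝ := ε + |‖ξ‖ - 1| ^ γ

theorem le_shellWeight (γ ε : ℝ) (ξ : V) : ε ≤ shellWeight γ ε ξ :=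
  le_add_of_nonneg_right (rpow_nonneg (abs_nonneg _) _)

theorem shellWeight_pos (hε : 0 < ε) (γ : ℝ) (ξ : V) : 0 < shellWeight γ ε ξ :=
  hε.trans_le (le_shellWeight γ ε ξ)

theorem inv_shellWeight_le (hε : 0 < ε) (γ : ℝ) (ξ : V) : (shellWeight γ ε ξ)⁻¹ ≤ ε⁻¹ :=
  inv_anti₀ hε (le_shellWeight γ ε ξ)

theorem shellWeight_le_of_mem_unitShell (hγ : 0 ≤ γ) {l : ℝ} {ξ : V} (hξ : ξ ∈ unitShell V l) :
    shellWeight γ ε ξ ≤ ε + l ^ γ :=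
  add_le_add_right (rpow_le_rpow (abs_nonneg _) hξ hγ) ε

variable [MeasurableSpace V] [BorelSpace V]

theorem measurable_shellWeight (γ ε : ℝ) : Measurable (shellWeight γ ε : V → ℝ) := by
  unfold shellWeight; fun_prop

theorem integrable_mul_inv_shellWeight {μ : Measure V} {h : V → ℝ} (hε : 0 < ε)
    (hh : Integrable h μ) : Integrable (fun ξ => h ξ * (shellWeight γ ε ξ)⁻¹) μ := by
  refine hh.mul_bdd (c := ε⁻¹) (measurable_shellWeight γ ε).inv.aestronglyMeasurable
    (Eventually.of_forall fun ξ => ?_)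
  rw [norm_of_nonneg (inv_pos.2 (shellWeight_pos hε γ ξ)).le]
  exact inv_shellWeight_le hε γ ξ

theorem setIntegral_mul_inv_shellWeight_le {μ : Measure V} {h : V → ℝ} {K : ℝ} (hγ : 1 < γ)
    (hε : 0 < ε) (hε₁ : ε ≤ 1) (hK : 0 ≤ K) (hmeas : Measurable h) (h₀ : ∀ ξ, 0 ≤ h ξ)
    (hint : IntegrableOn h (unitShell V 1) μ)
    (hle : ∀ l, 0 < l → l ≤ 1 → ∫ ξ in unitShell V l, h ξ ∂μ ≤ K * l) :
    ∫ ξ in unitShell V (1 / 2), h ξ * (shellWeight γ ε ξ)⁻¹ ∂μ ≤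
      K * (2 ^ γ * (1 - 2 ^ (1 - γ))⁻¹ * ε ^ (1 / γ - 1)) := by
  have subset_one {l : ℝ} (hl : l ≤ 1) : unitShell V l ⊆ unitShell V 1 := fun ξ hξ =>
    le_trans hξ hl
  have := one_sub_two_rpow_pos hγ
  have density_unitShell_le (l : ℝ) (hl : 0 < l) (hl₁ : l ≤ 1) :
      μ.withDensity (fun ξ => ENNReal.ofReal (h ξ)) {ξ | |‖ξ‖ - 1| ≤ l} ≤
        ENNReal.ofReal K * ENNReal.ofReal l := by
    change μ.withDensity _ (unitShell V l) ≤ _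
    rw [withDensity_apply _ (measurableSet_unitShell l), ← ofReal_integral_eq_lintegral_ofReal
      (hint.mono_set (subset_one hl₁)) (Eventually.of_forall h₀), ← ENNReal.ofReal_mul hK]
    exact ENNReal.ofReal_le_ofReal (hle l hl hl₁)
  have dyadic := setLIntegral_inv_add_rpow_le hγ (t := fun ξ : V => |‖ξ‖ - 1|) (by fun_prop)
    (fun _ => abs_nonneg _) density_unitShell_le hε hε₁
  change ∫⁻ ξ in unitShell V (1 / 2), ENNReal.ofReal (shellWeight γ ε ξ)⁻¹ ∂_ ≤ _ at dyadic
  rw [setLIntegral_withDensity_eq_setLIntegral_mul μ hmeas.ennreal_ofReal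
    (g := fun ξ => ENNReal.ofReal (shellWeight γ ε ξ)⁻¹)
    (measurable_shellWeight γ ε).inv.ennreal_ofReal (measurableSet_unitShell _)] at dyadic
  simp only [Pi.mul_apply, ← ENNReal.ofReal_mul (h₀ _)] at dyadic
  rwa [← ofReal_integral_eq_lintegral_ofReal
      (integrable_mul_inv_shellWeight hε (hint.mono_set (subset_one (by norm_num))))
      (Eventually.of_forall fun ξ => mul_nonneg (h₀ ξ) (inv_pos.2 (shellWeight_pos hε γ ξ)).le),
    ← ENNReal.ofReal_mul hK, ENNReal.ofReal_le_ofReal_iff (by positivity)] at dyadic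

end ShellWeight

section ShellWeightDual

variable {V : Type*} [NormedAddCommGroup V] [InnerProductSpace ℝ V] [FiniteDimensional ℝ V]
  [MeasurableSpace V] [BorelSpace V] {γ : ℝ}

theorem exists_setIntegral_norm_sq_fourier_mul_inv_shellWeight_le
    (hV : 2 ≤ Module.finrank ℝ V) (hγ : 1 < γ) {q : ℝ}
    (hq : q = 2 * (Module.finrank ℝ V + 1) / (Module.finrank ℝ V + 3)) :
    ∃ C > 0, ∀ ε, 0 < ε → ε ≤ 1 → ∀ f : SimpleFunc V ℂ, f.FinMeasSupp volume →
      ∫ ξ in unitShell V (1 / 2), ‖𝓕 ⇑f ξ‖ ^ 2 * (shellWeight γ ε ξ)⁻¹ ≤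
        C * ε ^ (1 / γ - 1) * (∫ x, ‖f x‖ ^ q) ^ (2 / q) := by
  obtain ⟨C, hC, restriction⟩ := exists_setIntegral_unitShell_norm_sq_fourier_le hV hq
  have := one_sub_two_rpow_pos hγ
  refine ⟨C * (2 ^ γ * (1 - 2 ^ (1 - γ))⁻¹), by positivity, fun ε hε hε₁ f hf => ?_⟩
  have := continuous_fourier hf.integrable
  refine (setIntegral_mul_inv_shellWeight_le (K := C * (∫ x, ‖f x‖ ^ q) ^ (2 / q)) hγ hε hε₁
    (by positivity) (by fun_prop) (fun ξ => by positivity)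
    (integrable_norm_sq_fourier_of_finMeasSupp hf).integrableOn fun l hl hl₁ => ?_).trans_eq
    (by ring)
  exact (restriction l hl hl₁ f hf).trans_eq (by ring)

theorem integrableOn_inv_shellWeight {ε : ℝ} (hε : 0 < ε) (γ l : ℝ) :
    IntegrableOn (fun ξ => (shellWeight γ ε ξ)⁻¹) (unitShell V l) := by
  simpa only [one_mul, IntegrableOn] using integrable_mul_inv_shellWeight (h := fun _ : V => 1) hε
    (integrableOn_const (volume_unitShell_lt_top l).ne)

theorem exists_setIntegral_inv_shellWeight_le [Nontrivial V] (hγ : 1 < γ) :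
    ∃ C > 0, ∀ ε, 0 < ε → ε ≤ 1 →
      ∫ ξ in unitShell V (1 / 2), (shellWeight γ ε ξ)⁻¹ ≤ C * ε ^ (1 / γ - 1) := by
  obtain ⟨C, hC, volume_le⟩ := exists_volume_unitShell_le (V := V)
  have := one_sub_two_rpow_pos hγ
  refine ⟨C * (2 ^ γ * (1 - 2 ^ (1 - γ))⁻¹), by positivity, fun ε hε hε₁ => ?_⟩
  have h := setIntegral_mul_inv_shellWeight_le (V := V) (μ := volume) (h := fun _ => 1) hγ hε hε₁
    hC.le measurable_const (fun _ => zero_le_one)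
    (integrableOn_const (volume_unitShell_lt_top 1).ne) fun l hl hl₁ => by
      rw [setIntegral_const, smul_eq_mul, mul_one]
      refine ENNReal.toReal_le_of_le_ofReal (by positivity) ?_
      rw [ENNReal.ofReal_mul hC.le]
      exact volume_le l hl hl₁
  simp only [one_mul] at h
  exact h.trans_eq (by ring)

end ShellWeightDual

section WeightedDuality

variable {d : ℕ} {p q : ℝ} {U w : Rd d → ℂ}

theorem IsFT.sub {U' w' : Rd d → ℂ} (h : IsFT U w) (h' : IsFT U' w') (hU : MemLp U 2)
    (hw : MemLp w 2) (hU' : MemLp U' 2) (hw' : MemLp w' 2) :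
    IsFT (fun ξ => U ξ - U' ξ) (fun x => w x - w' x) := fun φ => by
  have hφ' : MemLp (𝓕 ⇑φ) 2 := by
    rw [← SchwartzMap.fourier_coe]
    exact (𝓕 φ).memLp 2
  have integrable_left {W : Rd d → ℂ} (hW : MemLp W 2) : Integrable fun ξ => W ξ * φ ξ :=
    hW.integrable_mul (φ.memLp 2)
  have integrable_right {W : Rd d → ℂ} (hW : MemLp W 2) : Integrable fun x => W x * 𝓕 ⇑φ x :=
    hW.integrable_mul hφ'
  simp only [sub_mul]
  rw [integral_sub (integrable_left hU) (integrable_left hU'),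
    integral_sub (integrable_right hw) (integrable_right hw'), h φ, h' φ]

theorem norm_integral_mul_le_integral_norm_mul_norm_fourier_conj (hU : MemLp U 2)
    (hw : MemLp w 2) (h : IsFT U w) {f : SimpleFunc (Rd d) ℂ} (hf : f.FinMeasSupp volume) :
    ‖∫ x, w x * f x‖ ≤ ∫ ξ, ‖U ξ‖ * ‖𝓕 ⇑(f.map conj) ξ‖ := by
  rw [integral_mul_eq_of_isFT hU hw h hf.integrable (memLp_two_of_finMeasSupp hf)]
  refine (norm_integral_le_integral_norm _).trans_eq ?_
  simp only [norm_mul, ← conj_fourier_conj, Complex.norm_conj, SimpleFunc.coe_map]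
  rfl

variable {A : Set (Rd d)} {m : Rd d → ℝ} {c : ℝ}

theorem norm_integral_mul_le_sqrt_of_isFT (hU : MemLp U 2) (hw : MemLp w 2) (h : IsFT U w)
    (hUA : ∀ ξ ∉ A, U ξ = 0) (hm : Measurable m) (hc : 0 < c) (hcm : ∀ ξ, c ≤ m ξ)
    (hUm : Integrable fun ξ => ‖U ξ‖ ^ 2 * m ξ) {f : SimpleFunc (Rd d) ℂ}
    (hf : f.FinMeasSupp volume) :
    ‖∫ x, w x * f x‖ ≤ √((∫ ξ, ‖U ξ‖ ^ 2 * m ξ) *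
      ∫ ξ in A, ‖𝓕 ⇑(f.map conj) ξ‖ ^ 2 * (m ξ)⁻¹) := by
  have hm₀ (ξ : Rd d) : 0 < m ξ := hc.trans_le (hcm ξ)
  have hf' : (f.map conj).FinMeasSupp volume := hf.map (map_zero _)
  set F := 𝓕 ⇑(f.map conj)
  have hF₂ : MemLp F 2 := memLp_two_fourier hf'.integrable (memLp_two_of_finMeasSupp hf')
  have hFm : Integrable fun ξ => ‖F ξ‖ ^ 2 * (m ξ)⁻¹ := by
    refine (integrable_norm_sq_fourier_of_finMeasSupp hf').mul_bdd (c := c⁻¹)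
      hm.inv.aestronglyMeasurable (Eventually.of_forall fun ξ => ?_)
    rw [norm_of_nonneg (inv_pos.2 (hm₀ ξ)).le]
    exact inv_anti₀ hc (hcm ξ)
  calc ‖∫ x, w x * f x‖ ≤ ∫ ξ, ‖U ξ‖ * ‖F ξ‖ :=
        norm_integral_mul_le_integral_norm_mul_norm_fourier_conj hU hw h hf
    _ = ∫ ξ in A, ‖U ξ‖ * ‖F ξ‖ :=
        (setIntegral_eq_integral_of_forall_compl_eq_zero fun ξ hξ => by simp [hUA ξ hξ]).symm
    _ ≤ √((∫ ξ in A, ‖U ξ‖ ^ 2 * m ξ) * ∫ ξ in A, ‖F ξ‖ ^ 2 * (m ξ)⁻¹) :=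
        le_sqrt_of_sq_le (sq_integral_norm_mul_norm_le hU.1.restrict hF₂.1.restrict hm hm₀
          hUm.integrableOn hFm.integrableOn)
    _ = √((∫ ξ, ‖U ξ‖ ^ 2 * m ξ) * ∫ ξ in A, ‖F ξ‖ ^ 2 * (m ξ)⁻¹) := by
        rw [setIntegral_eq_integral_of_forall_compl_eq_zero fun ξ hξ => by simp [hUA ξ hξ]]

theorem eLpNorm_le_of_isFT_of_forall_setIntegral_le (hpq : p.HolderConjugate q)
    (hU : MemLp U 2) (hw : MemLp w 2) (h : IsFT U w) (hUA : ∀ ξ ∉ A, U ξ = 0)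
    (hm : Measurable m) (hc : 0 < c) (hcm : ∀ ξ, c ≤ m ξ)
    (hUm : Integrable fun ξ => ‖U ξ‖ ^ 2 * m ξ) {K : ℝ} (hK : 0 ≤ K)
    (H : ∀ f : SimpleFunc (Rd d) ℂ, f.FinMeasSupp volume →
      ∫ ξ in A, ‖𝓕 ⇑f ξ‖ ^ 2 * (m ξ)⁻¹ ≤ K * (∫ x, ‖f x‖ ^ q) ^ (2 / q)) :
    eLpNorm w (ENNReal.ofReal p) volume ≤
      ENNReal.ofReal √(K * ∫ ξ, ‖U ξ‖ ^ 2 * m ξ) := by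
  refine eLpNorm_le_of_forall_simpleFunc hpq (sqrt_nonneg _) hw fun f hf => ?_
  have norm_map (x : Rd d) : ‖f.map conj x‖ = ‖f x‖ := by simp
  have restriction := H _ (hf.map (map_zero conj))
  simp only [norm_map] at restriction
  set J := ∫ x, ‖f x‖ ^ q
  have hJ : 0 ≤ J := integral_nonneg fun x => by positivity
  have hQ : 0 ≤ ∫ ξ, ‖U ξ‖ ^ 2 * m ξ :=
    integral_nonneg fun ξ => mul_nonneg (sq_nonneg _) (hc.le.trans (hcm ξ))
  calc ‖∫ x, w x * f x‖ ≤ √((∫ ξ, ‖U ξ‖ ^ 2 * m ξ) * (K * J ^ (2 / q))) := by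
        refine (norm_integral_mul_le_sqrt_of_isFT hU hw h hUA hm hc hcm hUm hf).trans ?_
        gcongr
    _ = √(K * ∫ ξ, ‖U ξ‖ ^ 2 * m ξ) * J ^ (1 / q) := by
        rw [← mul_assoc, mul_comm _ K, sqrt_mul (by positivity), sqrt_eq_rpow (J ^ _),
          ← rpow_mul hJ, show 2 / q * (1 / 2) = 1 / q by ring]

end WeightedDuality

section ShellBound

variable {V : Type*} [NormedAddCommGroup V] [InnerProductSpace ℝ V] [FiniteDimensional ℝ V]
  [MeasurableSpace V] [BorelSpace V] {γ ε l : ℝ} {U : V → ℂ}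

theorem integrable_of_memLp_two_of_unitShell (hU : MemLp U 2)
    (hUl : ∀ ξ ∉ unitShell V l, U ξ = 0) : Integrable U := by
  have : IsFiniteMeasure (volume.restrict (unitShell V l)) :=
    ⟨by simpa using volume_unitShell_lt_top l⟩
  rw [← Set.indicator_eq_self.2 (Function.support_subset_iff'.2 hUl),
    integrable_indicator_iff (measurableSet_unitShell l)]
  exact (hU.restrict _).integrable one_le_two

theorem integrable_norm_sq_mul_shellWeight (hγ : 0 ≤ γ) (hε : 0 ≤ ε) (hU : MemLp U 2)
    (hUl : ∀ ξ ∉ unitShell V l, U ξ = 0) :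
    Integrable fun ξ => ‖U ξ‖ ^ 2 * shellWeight γ ε ξ := by
  have hsq : Integrable fun ξ => ‖U ξ‖ ^ 2 := hU.integrable_norm_pow two_ne_zero
  refine (hsq.mul_const (ε + l ^ γ)).mono'
    (hsq.1.mul (measurable_shellWeight γ ε).aestronglyMeasurable) (Eventually.of_forall fun ξ => ?_)
  by_cases hξ : ξ ∈ unitShell V l
  · rw [norm_of_nonneg (mul_nonneg (sq_nonneg _) (hε.trans (le_shellWeight γ ε ξ)))]
    gcongr
    exact shellWeight_le_of_mem_unitShell hγ hξ
  · simp [hUl ξ hξ]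

theorem eLpNorm_two_fourierInv_le_shellWeight (hγ : 0 ≤ γ) (hε : 0 < ε) (hU : MemLp U 2)
    (hUl : ∀ ξ ∉ unitShell V l, U ξ = 0) :
    eLpNorm (𝓕⁻ U) 2 volume ≤ ENNReal.ofReal √(ε⁻¹ * ∫ ξ, ‖U ξ‖ ^ 2 * shellWeight γ ε ξ) := by
  have hUint := integrable_of_memLp_two_of_unitShell hU hUl
  rw [eLpNorm_two_fourierInv hUint hU, ← ENNReal.ofReal_toReal hU.2.ne]
  refine ENNReal.ofReal_le_ofReal (le_sqrt_of_sq_le ?_)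
  rw [← integral_norm_sq_eq_toReal_eLpNorm_sq hU, ← integral_const_mul]
  refine integral_mono (hU.integrable_norm_pow two_ne_zero)
    ((integrable_norm_sq_mul_shellWeight hγ hε.le hU hUl).const_mul _) fun ξ => ?_
  have : 1 ≤ ε⁻¹ * shellWeight γ ε ξ := by
    rw [inv_mul_eq_div]; exact (one_le_div hε).2 (le_shellWeight γ ε ξ)
  calc ‖U ξ‖ ^ 2 ≤ ‖U ξ‖ ^ 2 * (ε⁻¹ * shellWeight γ ε ξ) :=
        le_mul_of_one_le_right (sq_nonneg _) this
    _ = ε⁻¹ * (‖U ξ‖ ^ 2 * shellWeight γ ε ξ) := by ring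

theorem exists_norm_fourierInv_le_shellWeight [Nontrivial V] (hγ : 1 < γ) :
    ∃ C > 0, ∀ ε, 0 < ε → ε ≤ 1 → ∀ U : V → ℂ, MemLp U 2 →
      (∀ ξ ∉ unitShell V (1 / 2), U ξ = 0) → ∀ x,
        ‖𝓕⁻ U x‖ ≤ √(C * ε ^ (1 / γ - 1) * ∫ ξ, ‖U ξ‖ ^ 2 * shellWeight γ ε ξ) := by
  obtain ⟨C, hC, inv_le⟩ := exists_setIntegral_inv_shellWeight_le (V := V) hγ
  refine ⟨C, hC, fun ε hε hε₁ U hU hUl x => ?_⟩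
  have hUm := integrable_norm_sq_mul_shellWeight (γ := γ) (by linarith) hε.le hU hUl
  have cauchySchwarz := sq_integral_norm_mul_norm_le (μ := volume.restrict (unitShell V (1 / 2)))
    (b := fun _ => (1 : ℂ)) hU.1.restrict aestronglyMeasurable_const (measurable_shellWeight γ ε)
    (shellWeight_pos hε γ) hUm.integrableOn
    (by simpa only [norm_one, one_pow, one_mul] using! integrableOn_inv_shellWeight hε γ _)
  simp only [norm_one, one_pow, one_mul, mul_one] at cauchySchwarz
  rw [setIntegral_eq_integral_of_forall_compl_eq_zero fun ξ hξ => by simp [hUl ξ hξ],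
    setIntegral_eq_integral_of_forall_compl_eq_zero fun ξ hξ => by simp [hUl ξ hξ]]
    at cauchySchwarz
  have hQ : 0 ≤ ∫ ξ, ‖U ξ‖ ^ 2 * shellWeight γ ε ξ :=
    integral_nonneg fun ξ => mul_nonneg (sq_nonneg _) (shellWeight_pos hε γ ξ).le
  refine (norm_fourierInv_le_integral_norm U x).trans (le_sqrt_of_sq_le (cauchySchwarz.trans ?_))
  rw [mul_comm]
  gcongr
  exact inv_le ε hε hε₁

end ShellBound

section ShellInterpolation

variable {d : ℕ} {γ p : ℝ}

theorem exists_eLpNorm_steinTomas_fourierInv_le_shellWeight (hd : 2 ≤ d) (hγ : 1 < γ)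
    (hp : p = 2 * ((d : ℝ) + 1) / (d - 1)) :
    ∃ C > 0, ∀ ε, 0 < ε → ε ≤ 1 → ∀ U : Rd d → ℂ, MemLp U 2 →
      (∀ ξ ∉ unitShell (Rd d) (1 / 2), U ξ = 0) →
        eLpNorm (𝓕⁻ U) (ENNReal.ofReal p) volume ≤
          ENNReal.ofReal √(C * ε ^ (1 / γ - 1) * ∫ ξ, ‖U ξ‖ ^ 2 * shellWeight γ ε ξ) := by
  have hd₁ : 0 < (d : ℝ) - 1 := sub_pos.2 (mod_cast hd)
  have finrank_eq : Module.finrank ℝ (Rd d) = d := finrank_euclideanSpace_fin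
  have hpq : p.HolderConjugate (2 * ((d : ℝ) + 1) / (d + 3)) := by
    rw [holderConjugate_iff, hp]
    refine ⟨by rw [lt_div_iff₀ hd₁]; linarith, ?_⟩
    field_simp; ring
  obtain ⟨C, hC, restriction⟩ := exists_setIntegral_norm_sq_fourier_mul_inv_shellWeight_le
    (V := Rd d) (finrank_eq.symm ▸ hd) hγ rfl
  rw [finrank_eq] at restriction
  refine ⟨C, hC, fun ε hε hε₁ U hU hUl => ?_⟩
  have hUint := integrable_of_memLp_two_of_unitShell hU hUl
  exact eLpNorm_le_of_isFT_of_forall_setIntegral_le hpq hU (memLp_two_fourierInv hUint hU)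
    (isFT_fourierInv hUint) hUl (measurable_shellWeight γ ε) hε (le_shellWeight γ ε)
    (integrable_norm_sq_mul_shellWeight (by linarith) hε.le hU hUl) (by positivity)
    (restriction ε hε hε₁)

theorem sqrt_rpow_mul_sqrt_rpow_le {C Q ε α : ℝ} (hC : 1 ≤ C) (hQ : 0 ≤ Q) (hε : 0 < ε)
    (hα : α ∈ Set.Icc 0 1) :
    √(ε⁻¹ * Q) ^ (1 - α) * √(C * ε ^ (1 / γ - 1) * Q) ^ α ≤
      √(C * ε ^ (-(1 - α / γ)) * Q) := by
  have hα₁ : 0 ≤ 1 - α := sub_nonneg.2 hα.2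
  have hC₀ : 0 ≤ C := by linarith
  have sqrt_rpow {x : ℝ} (hx : 0 ≤ x) (t : ℝ) : √x ^ t = √(x ^ t) := by
    rw [sqrt_eq_rpow, sqrt_eq_rpow, ← rpow_mul hx, ← rpow_mul hx, mul_comm]
  rw [sqrt_rpow (by positivity), sqrt_rpow (by positivity), ← sqrt_mul (by positivity)]
  have Q_eq : Q ^ (1 - α) * Q ^ α = Q := by
    rw [← rpow_add_of_nonneg hQ hα₁ hα.1, sub_add_cancel, rpow_one]
  have ε_eq : ε⁻¹ ^ (1 - α) * (ε ^ (1 / γ - 1)) ^ α = ε ^ (-(1 - α / γ)) := by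
    rw [← rpow_mul hε.le, inv_rpow hε.le, ← rpow_neg hε.le, ← rpow_add hε]
    congr 1; ring
  have C_le : C ^ α ≤ C := (rpow_le_rpow_of_exponent_le hC hα.2).trans_eq (rpow_one C)
  refine sqrt_le_sqrt ?_
  calc (ε⁻¹ * Q) ^ (1 - α) * (C * ε ^ (1 / γ - 1) * Q) ^ α
      = C ^ α * (ε⁻¹ ^ (1 - α) * (ε ^ (1 / γ - 1)) ^ α) * (Q ^ (1 - α) * Q ^ α) := by
        rw [mul_rpow (by positivity) hQ, mul_rpow (by positivity) hQ, mul_rpow hC₀ (by positivity)]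
        ring
    _ ≤ C * ε ^ (-(1 - α / γ)) * Q := by rw [Q_eq, ε_eq]; gcongr

/-- The exponent `1 - min(1, α₁)/γ` of the Rayleigh quotient, where `α₁ = (d+1)(1/2 - 1/p)` is the
position of `1/p` between `1/2` (`α₁ = 0`) and the Stein–Tomas exponent (`α₁ = 1`). -/
def rayleighExponent (d : ℕ) (γ p : ℝ) : ℝ := 1 - min 1 (((d : ℝ) + 1) * (1 / 2 - 1 / p)) / γ

theorem rayleighExponent_nonneg (d : ℕ) (hγ : 1 < γ) (p : ℝ) : 0 ≤ rayleighExponent d γ p :=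
  sub_nonneg.2 ((div_le_one (by linarith)).2 ((min_le_left _ _).trans hγ.le))

theorem eLpNorm_le_of_eLpNorm_two_le_of_eLpNorm_steinTomas_le {β : Type*} [MeasurableSpace β]
    {μ : Measure β} {w : β → ℂ} {C Q ε α : ℝ} (hd : 2 ≤ d) (hp : 2 < p)
    (hw : AEStronglyMeasurable w μ) (hα : α = ((d : ℝ) + 1) * (1 / 2 - 1 / p)) (hα₁ : α ≤ 1)
    (hC : 1 ≤ C) (hQ : 0 ≤ Q) (hε : 0 < ε) (h₂ : eLpNorm w 2 μ ≤ ENNReal.ofReal √(ε⁻¹ * Q))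
    (hr : eLpNorm w (ENNReal.ofReal (2 * ((d : ℝ) + 1) / (d - 1))) μ ≤
      ENNReal.ofReal √(C * ε ^ (1 / γ - 1) * Q)) :
    eLpNorm w (ENNReal.ofReal p) μ ≤ ENNReal.ofReal √(C * ε ^ (-(1 - α / γ)) * Q) := by
  have hd₁ : 0 < (d : ℝ) - 1 := sub_pos.2 (mod_cast hd)
  have hp₀ : 0 < p := by linarith
  have hα₀ : 0 ≤ α := hα ▸ mul_nonneg (by positivity)
    (sub_nonneg.2 (one_div_le_one_div_of_le two_pos hp.le))
  have one_div_p : 1 / p = (1 - α) / 2 + α / (2 * ((d : ℝ) + 1) / (d - 1)) := by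
    rw [hα]; field_simp; ring
  calc eLpNorm w (ENNReal.ofReal p) μ
      ≤ eLpNorm w (ENNReal.ofReal 2) μ ^ (1 - α) *
          eLpNorm w (ENNReal.ofReal (2 * ((d : ℝ) + 1) / (d - 1))) μ ^ α :=
        eLpNorm_le_rpow_mul_rpow two_pos (by positivity) hp₀ ⟨hα₀, hα₁⟩ one_div_p hw
    _ ≤ ENNReal.ofReal √(ε⁻¹ * Q) ^ (1 - α) *
          ENNReal.ofReal √(C * ε ^ (1 / γ - 1) * Q) ^ α := by
        rw [ENNReal.ofReal_ofNat]
        gcongr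
    _ ≤ ENNReal.ofReal √(C * ε ^ (-(1 - α / γ)) * Q) := by
        rw [ENNReal.ofReal_rpow_of_nonneg (sqrt_nonneg _) (by linarith),
          ENNReal.ofReal_rpow_of_nonneg (sqrt_nonneg _) hα₀, ← ENNReal.ofReal_mul (by positivity)]
        exact ENNReal.ofReal_le_ofReal (sqrt_rpow_mul_sqrt_rpow_le hC hQ hε ⟨hα₀, hα₁⟩)

theorem steinTomas_le_of_one_le (hd : 2 ≤ d) (hp : 0 < p)
    (h : 1 ≤ ((d : ℝ) + 1) * (1 / 2 - 1 / p)) : 2 * ((d : ℝ) + 1) / (d - 1) ≤ p := by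
  have hd₁ : 0 < (d : ℝ) - 1 := sub_pos.2 (mod_cast hd)
  have h' : p * 1 ≤ p * (((d : ℝ) + 1) * (1 / 2 - 1 / p)) := by gcongr
  rw [mul_left_comm, mul_sub, mul_one_div_cancel hp.ne'] at h'
  rw [div_le_iff₀ hd₁]
  linarith

theorem exists_eLpNorm_fourierInv_le_shellWeight (hd : 2 ≤ d) (hγ : 1 < γ) (hp : 2 < p) :
    ∃ C > 0, ∀ ε, 0 < ε → ε ≤ 1 → ∀ U : Rd d → ℂ, MemLp U 2 →
      (∀ ξ ∉ unitShell (Rd d) (1 / 2), U ξ = 0) →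
        eLpNorm (𝓕⁻ U) (ENNReal.ofReal p) volume ≤ ENNReal.ofReal
          √(C * ε ^ (-rayleighExponent d γ p) * ∫ ξ, ‖U ξ‖ ^ 2 * shellWeight γ ε ξ) := by
  have : Nontrivial (Rd d) := Module.nontrivial_of_finrank_pos (R := ℝ)
    (by rw [finrank_euclideanSpace_fin]; omega)
  have hd₁ : 0 < (d : ℝ) - 1 := sub_pos.2 (mod_cast hd)
  obtain ⟨C₁, hC₁, steinTomas⟩ := exists_eLpNorm_steinTomas_fourierInv_le_shellWeight hd hγ rfl
  obtain ⟨C₂, hC₂, sup_bound⟩ := exists_norm_fourierInv_le_shellWeight (V := Rd d) hγ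
  refine ⟨C₁ + C₂ + 1, by positivity, fun ε hε hε₁ U hU hUl => ?_⟩
  set Q := ∫ ξ, ‖U ξ‖ ^ 2 * shellWeight γ ε ξ
  have hQ : 0 ≤ Q := integral_nonneg fun ξ =>
    mul_nonneg (sq_nonneg _) (shellWeight_pos hε γ ξ).le
  have sqrt_mono {C : ℝ} (hC : C ≤ C₁ + C₂ + 1) :
      √(C * ε ^ (1 / γ - 1) * Q) ≤ √((C₁ + C₂ + 1) * ε ^ (1 / γ - 1) * Q) := by gcongr
  have bound_steinTomas := (steinTomas ε hε hε₁ U hU hUl).trans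
    (ENNReal.ofReal_le_ofReal (sqrt_mono (by linarith)))
  have bound_sup (x : Rd d) := (sup_bound ε hε hε₁ U hU hUl x).trans (sqrt_mono (by linarith))
  unfold rayleighExponent
  rcases le_total (((d : ℝ) + 1) * (1 / 2 - 1 / p)) 1 with hα | hα
  · rw [min_eq_right hα]
    exact eLpNorm_le_of_eLpNorm_two_le_of_eLpNorm_steinTomas_le hd hp
      (memLp_two_fourierInv (integrable_of_memLp_two_of_unitShell hU hUl) hU).1 rfl hα
      (by linarith) hQ hε (eLpNorm_two_fourierInv_le_shellWeight (by linarith) hε hU hUl)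
      bound_steinTomas
  · rw [min_eq_left hα, neg_sub]
    exact eLpNorm_le_of_norm_le_of_eLpNorm_le (by positivity)
      (steinTomas_le_of_one_le hd (by linarith) hα) bound_sup bound_steinTomas

end ShellInterpolation

/-! ### The lower bound -/

section FarFromSphere

variable {d : ℕ} {s p : ℝ}

theorem exists_eLpNorm_le_japanese (hs : 0 < s) (hp : 2 < p) (hsp : d < 2 * s * (p / (p - 2))) :
    ∃ C > 0, ∀ U w : Rd d → ℂ, MemLp U 2 → MemLp w 2 → IsFT U w →
      Integrable (fun ξ => ‖U ξ‖ ^ 2 * (1 + ‖ξ‖ ^ 2) ^ s) →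
        eLpNorm w (ENNReal.ofReal p) volume ≤
          ENNReal.ofReal √(C * ∫ ξ, ‖U ξ‖ ^ 2 * (1 + ‖ξ‖ ^ 2) ^ s) := by
  have hpq := HolderConjugate.conjExponent (show 1 < p by linarith)
  obtain ⟨C, hC, sobolev⟩ := exists_integral_japanese_mul_norm_sq_fourier_le (V := Rd d) hs hp hpq
    (by rwa [finrank_euclideanSpace_fin])
  refine ⟨C, hC, fun U w hU hw h hUm => ?_⟩
  refine eLpNorm_le_of_isFT_of_forall_setIntegral_le (A := Set.univ) hpq hU hw h
    (fun ξ hξ => absurd (Set.mem_univ ξ) hξ) (by fun_prop) one_pos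
    (fun ξ => one_le_rpow (le_add_of_nonneg_right (sq_nonneg _)) hs.le) hUm hC.le fun f hf => ?_
  rw [Measure.restrict_univ]
  refine (integral_congr_ae (Eventually.of_forall fun ξ => ?_)).trans_le (sobolev f hf)
  simp only [rpow_neg (show 0 ≤ 1 + ‖ξ‖ ^ 2 by positivity), mul_comm]

end FarFromSphere

section Admissible

variable {d : ℕ} {s γ c C ε r : ℝ} {g : ℝ → ℝ → ℝ}

theorem one_add_sq_rpow_le (hr : 0 ≤ r) (hs : 0 ≤ s) :
    (1 + r ^ 2) ^ s ≤ 2 ^ s * (1 + r ^ (2 * s)) := by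
  rw [rpow_mul hr, rpow_two]
  have hrs : 0 ≤ (r ^ 2) ^ s := by positivity
  calc (1 + r ^ 2) ^ s ≤ (2 * max 1 (r ^ 2)) ^ s := by
        gcongr
        linarith [le_max_left 1 (r ^ 2), le_max_right 1 (r ^ 2)]
    _ = 2 ^ s * max 1 (r ^ 2) ^ s := mul_rpow two_pos.le (by positivity)
    _ ≤ 2 ^ s * (1 + (r ^ 2) ^ s) := by
        gcongr
        rcases max_cases 1 (r ^ 2) with ⟨h, -⟩ | ⟨h, -⟩ <;> rw [h]
        · rw [one_rpow]; linarith
        · linarith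

theorem one_add_rpow_two_mul_le (hr : 0 ≤ r) (hs : 0 ≤ s) :
    1 + r ^ (2 * s) ≤ 2 * (1 + r ^ 2) ^ s := by
  rw [rpow_mul hr, rpow_two, two_mul]
  gcongr
  · exact one_le_rpow (le_add_of_nonneg_right (sq_nonneg r)) hs
  · exact le_add_of_nonneg_left zero_le_one

theorem IsAdmissible.shellWeight_le (hg : IsAdmissible s γ c C g) (hc : 0 < c)
    (hε : ε ∈ Set.Ioo 0 1) {ξ : Rd d} (hξ : ξ ∈ unitShell (Rd d) (1 / 2)) :
    shellWeight γ ε ξ ≤ c⁻¹ * g ε ‖ξ‖ := by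
  rw [inv_mul_eq_div, le_div_iff₀ hc, mul_comm]
  exact (hg.2.2.2 ε hε _ hξ).1

theorem IsAdmissible.japanese_le (hg : IsAdmissible s γ c C g) (hs : 0 ≤ s) (hc : 0 < c)
    (hε : ε ∈ Set.Ioo 0 1) {ξ : Rd d} (hξ : ξ ∉ unitShell (Rd d) (1 / 2)) :
    (1 + ‖ξ‖ ^ 2) ^ s ≤ 2 ^ s * c⁻¹ * g ε ‖ξ‖ := by
  have far := (hg.2.2.1 ε hε ‖ξ‖ (not_le.1 hξ).le).1
  rw [abs_norm] at far
  refine (one_add_sq_rpow_le (norm_nonneg ξ) hs).trans ?_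
  rw [mul_assoc, inv_mul_eq_div]
  gcongr
  rwa [le_div_iff₀ hc, mul_comm]

theorem IsAdmissible.le_japanese (hg : IsAdmissible s γ c C g) (hs : 0 ≤ s) (hγ : 0 ≤ γ)
    (hC : 0 ≤ C) (hε : ε ∈ Set.Ioo 0 1) (ξ : Rd d) :
    g ε ‖ξ‖ ≤ 2 * C * (1 + ‖ξ‖ ^ 2) ^ s := by
  rw [mul_comm 2 C, mul_assoc]
  rcases le_total |‖ξ‖ - 1| (1 / 2) with near | far
  · have one_le : 1 ≤ (1 + ‖ξ‖ ^ 2) ^ s :=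
      one_le_rpow (le_add_of_nonneg_right (sq_nonneg _)) hs
    have le_one : |‖ξ‖ - 1| ^ γ ≤ 1 := rpow_le_one (abs_nonneg _) (by linarith) hγ
    refine (hg.2.2.2 ε hε _ near).2.trans ?_
    gcongr
    linarith [hε.2]
  · refine (hg.2.2.1 ε hε _ far).2.trans ?_
    rw [abs_norm]
    gcongr
    exact one_add_rpow_two_mul_le (norm_nonneg ξ) hs

theorem IsAdmissible.integrable_norm_sq_mul (hg : IsAdmissible s γ c C g) (hs : 0 ≤ s)
    (hγ : 0 ≤ γ) (hC : 0 ≤ C) (hε : ε ∈ Set.Ioo 0 1) (u : HsFn d s) :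
    Integrable fun ξ => ‖u.ft ξ‖ ^ 2 * g ε ‖ξ‖ := by
  refine (u.memHs.const_mul (2 * C)).mono' ((u.ft_memL2.1.norm.pow 2).mul
    ((hg.1 ε hε).comp measurable_norm).aestronglyMeasurable) (Eventually.of_forall fun ξ => ?_)
  rw [norm_of_nonneg (mul_nonneg (sq_nonneg _) (hg.2.1 ε hε _).le), mul_left_comm]
  gcongr
  exact hg.le_japanese hs hγ hC hε ξ

theorem IsAdmissible.qeps_nonneg (hg : IsAdmissible s γ c C g) (hε : ε ∈ Set.Ioo 0 1)
    (u : HsFn d s) : 0 ≤ qeps (g ε) u :=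
  integral_nonneg fun _ => mul_nonneg (sq_nonneg _) (hg.2.1 ε hε _).le

theorem IsAdmissible.integral_norm_sq_mul_le (hg : IsAdmissible s γ c C g) (hs : 0 ≤ s)
    (hγ : 0 ≤ γ) (hC : 0 ≤ C) (hε : ε ∈ Set.Ioo 0 1) (u : HsFn d s) {A : Set (Rd d)}
    {m : Rd d → ℝ} {K : ℝ} (hK : 0 ≤ K) (hm₀ : ∀ ξ, 0 ≤ m ξ) (hm : ∀ ξ ∈ A, m ξ ≤ K * g ε ‖ξ‖) :
    ∫ ξ, ‖A.indicator u.ft ξ‖ ^ 2 * m ξ ≤ K * qeps (g ε) u := by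
  rw [qeps, ← integral_const_mul]
  refine integral_mono_of_nonneg (Eventually.of_forall fun ξ => mul_nonneg (sq_nonneg _) (hm₀ ξ))
    ((hg.integrable_norm_sq_mul hs hγ hC hε u).const_mul K) (Eventually.of_forall fun ξ => ?_)
  have hg₀ := hg.2.1 ε hε ‖ξ‖
  by_cases hξ : ξ ∈ A
  · simp only [Set.indicator_of_mem hξ]
    rw [mul_left_comm]
    gcongr
    exact hm ξ hξ
  · simp only [Set.indicator_of_notMem hξ, norm_zero, ne_eq, OfNat.ofNat_ne_zero,
      not_false_eq_true, zero_pow, zero_mul]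
    positivity

end Admissible

section LowerBound

variable {d : ℕ} {s γ p c C : ℝ}

theorem exists_eLpNorm_le_qeps (hd : 2 ≤ d) (hs : 0 < s) (hγ : 1 < γ) (hp : 2 < p)
    (hsp : d < 2 * s * (p / (p - 2))) (hc : 0 < c) (hC : 0 ≤ C) :
    ∃ K₁ > 0, ∃ K₂ > 0, ∀ g, IsAdmissible s γ c C g → ∀ ε ∈ Set.Ioo (0 : ℝ) 1, ∀ u : HsFn d s,
      eLpNorm u.toFun (ENNReal.ofReal p) volume ≤ ENNReal.ofReal
        (√(K₁ * qeps (g ε) u) + √(K₂ * ε ^ (-rayleighExponent d γ p) * qeps (g ε) u)) := by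
  obtain ⟨C₁, hC₁, far_bound⟩ := exists_eLpNorm_le_japanese hs hp hsp
  obtain ⟨C₂, hC₂, near_bound⟩ := exists_eLpNorm_fourierInv_le_shellWeight hd hγ hp
  refine ⟨C₁ * (2 ^ s * c⁻¹), by positivity, C₂ * c⁻¹, by positivity, fun g hg ε hε u => ?_⟩
  have hε₀ : 0 < ε := hε.1
  set A := unitShell (Rd d) (1 / 2)
  have hA : MeasurableSet A := measurableSet_unitShell _
  set near : Rd d → ℂ := A.indicator u.ft
  have near_eq_zero (ξ) (hξ : ξ ∉ A) : near ξ = 0 := Set.indicator_of_notMem hξ _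
  have hnear : MemLp near 2 volume := u.ft_memL2.indicator hA
  have hnear₁ := integrable_of_memLp_two_of_unitShell hnear near_eq_zero
  have hw := memLp_two_fourierInv hnear₁ hnear
  have far_eq : (fun ξ => u.ft ξ - near ξ) = Aᶜ.indicator u.ft := (Set.indicator_compl A u.ft).symm
  have far_isFT := u.isFT.sub (isFT_fourierInv hnear₁) u.ft_memL2 u.memL2 hnear hw
  rw [far_eq] at far_isFT
  have far_integrable : Integrable fun ξ => ‖Aᶜ.indicator u.ft ξ‖ ^ 2 * (1 + ‖ξ‖ ^ 2) ^ s := by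
    refine (u.memHs.indicator hA.compl).congr (Eventually.of_forall fun ξ => ?_)
    by_cases hξ : ξ ∈ A <;> simp [hξ]
  have far_energy := hg.integral_norm_sq_mul_le hs.le (by linarith) hC hε u (A := Aᶜ)
    (m := fun ξ => (1 + ‖ξ‖ ^ 2) ^ s) (by positivity) (fun ξ => by positivity)
    fun ξ hξ => hg.japanese_le hs.le hc hε hξ
  have near_energy := hg.integral_norm_sq_mul_le hs.le (by linarith) hC hε u (A := A)
    (by positivity) (fun ξ => (shellWeight_pos hε.1 γ ξ).le) fun ξ hξ => hg.shellWeight_le hc hε hξ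
  rw [ENNReal.ofReal_add (sqrt_nonneg _) (sqrt_nonneg _),
    ← sub_add_cancel u.toFun (𝓕⁻ near), mul_assoc C₁, mul_right_comm C₂, mul_assoc (C₂ * _) c⁻¹]
  refine (eLpNorm_add_le (u.memL2.1.sub hw.1) hw.1 (ENNReal.one_le_ofReal.2 (by linarith))).trans
    (add_le_add ?_ ?_)
  · refine (far_bound _ _ (u.ft_memL2.indicator hA.compl)
      (u.memL2.sub hw) far_isFT far_integrable).trans ?_
    gcongr
  · refine (near_bound ε hε.1 hε.2.le near hnear near_eq_zero).trans ?_
    gcongr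

theorem exists_LpN_sq_le_qeps (hd : 2 ≤ d) (hs : 0 < s) (hγ : 1 < γ) (hp : 2 < p)
    (hsp : d < 2 * s * (p / (p - 2))) (hc : 0 < c) (hC : 0 ≤ C) :
    ∃ K > 0, ∀ g, IsAdmissible s γ c C g → ∀ ε ∈ Set.Ioo (0 : ℝ) 1, ∀ u : HsFn d s,
      LpN p u.toFun ^ 2 ≤ K * ε ^ (-rayleighExponent d γ p) * qeps (g ε) u := by
  obtain ⟨K₁, hK₁, K₂, hK₂, bound⟩ := exists_eLpNorm_le_qeps hd hs hγ hp hsp hc hC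
  refine ⟨2 * (K₁ + K₂), by positivity, fun g hg ε hε u => ?_⟩
  have hε₀ : 0 < ε := hε.1
  have hq := hg.qeps_nonneg hε u
  have one_le : 1 ≤ ε ^ (-rayleighExponent d γ p) := one_le_rpow_of_pos_of_le_one_of_nonpos hε.1
    hε.2.le (neg_nonpos.2 (rayleighExponent_nonneg d hγ p))
  set E := ε ^ (-rayleighExponent d γ p)
  set q := qeps (g ε) u
  calc LpN p u.toFun ^ 2 ≤ (√(K₁ * q) + √(K₂ * E * q)) ^ 2 := by
        gcongr
        · exact ENNReal.toReal_nonneg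
        · exact ENNReal.toReal_le_of_le_ofReal (by positivity) (bound g hg ε hε u)
    _ ≤ 2 * (√(K₁ * q) ^ 2 + √(K₂ * E * q) ^ 2) := add_sq_le
    _ = 2 * (K₁ * 1 * q + K₂ * E * q) := by
        rw [sq_sqrt (by positivity), sq_sqrt (by positivity), mul_one]
    _ ≤ 2 * (K₁ * E * q + K₂ * E * q) := by gcongr
    _ = 2 * (K₁ + K₂) * E * q := by ring

theorem LpN_pos_of_not_ae_eq_zero {f : Rd d → ℂ} (hp : 0 < p)
    (hf : MemLp f (ENNReal.ofReal p)) (hf₀ : ¬f =ᵐ[volume] fun _ => 0) : 0 < LpN p f :=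
  ENNReal.toReal_pos (fun h => hf₀ ((eLpNorm_eq_zero_iff hf.1 (by simpa using hp)).1 h)) hf.2.ne

theorem exists_le_of_mem_RayleighSet (hd : 2 ≤ d) (hs : 0 < s) (hγ : 1 < γ) (hp : 2 < p)
    (hsp : d < 2 * s * (p / (p - 2))) (hc : 0 < c) (hC : 0 ≤ C) :
    ∃ K > 0, ∀ g, IsAdmissible s γ c C g → ∀ ε ∈ Set.Ioo (0 : ℝ) 1,
      ∀ P, ∀ t ∈ RayleighSet d s p (g ε) P, K * ε ^ rayleighExponent d γ p ≤ t := by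
  obtain ⟨K, hK, bound⟩ := exists_LpN_sq_le_qeps hd hs hγ hp hsp hc hC
  refine ⟨K⁻¹, inv_pos.2 hK, ?_⟩
  rintro g hg ε hε P t ⟨u, -, hu₀, hu, rfl⟩
  have hL := LpN_pos_of_not_ae_eq_zero (by linarith) hu hu₀
  have hE : 0 < ε ^ rayleighExponent d γ p := rpow_pos_of_pos hε.1 _
  rw [le_div_iff₀ (by positivity)]
  calc K⁻¹ * ε ^ rayleighExponent d γ p * LpN p u.toFun ^ 2
      ≤ K⁻¹ * ε ^ rayleighExponent d γ p *
          (K * ε ^ (-rayleighExponent d γ p) * qeps (g ε) u) := by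
        gcongr
        exact bound g hg ε hε u
    _ = qeps (g ε) u := by rw [rpow_neg hε.1.le]; field_simp

end LowerBound

/-! ### The upper bound -/

section TestFunctions

variable {d : ℕ} {s γ p c C ε : ℝ} {g : ℝ → ℝ → ℝ}

theorem half_le_re_setIntegral_cexp {α : Type*} [MeasurableSpace α] {μ : Measure α} {B : Set α}
    {φ : α → ℝ} (hB : MeasurableSet B) (hBf : μ B ≠ ∞) (hφm : Measurable φ)
    (hφ : ∀ ξ ∈ B, |φ ξ| ≤ 1) : μ.real B / 2 ≤ (∫ ξ in B, Complex.exp (φ ξ * Complex.I) ∂μ).re := by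
  have hint : IntegrableOn (fun ξ => Complex.exp (φ ξ * Complex.I)) B μ :=
    (integrableOn_const (C := (1 : ℝ)) hBf).mono' (by fun_prop)
      (Eventually.of_forall fun ξ => (Complex.norm_exp_ofReal_mul_I _).le)
  calc μ.real B / 2 = ∫ _ in B, (1 / 2 : ℝ) ∂μ := by
        rw [setIntegral_const, smul_eq_mul, mul_one_div]
    _ ≤ ∫ ξ in B, (Complex.exp (φ ξ * Complex.I)).re ∂μ := by
        refine setIntegral_mono_on (integrableOn_const hBf) hint.re hB fun ξ hξ => ?_
        rw [Complex.exp_ofReal_mul_I_re]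
        linarith [one_sub_sq_div_two_le_cos (x := φ ξ), (sq_le_one_iff_abs_le_one _).2 (hφ ξ hξ)]
    _ = (∫ ξ in B, Complex.exp (φ ξ * Complex.I) ∂μ).re := integral_re hint

/-- Modulating by `e` does not change the modulus, so only the oscillation of the character
relative to its value at `e` matters. -/
theorem half_volume_le_norm_fourierInv_indicator {V : Type*} [NormedAddCommGroup V]
    [InnerProductSpace ℝ V] [FiniteDimensional ℝ V] [MeasurableSpace V] [BorelSpace V] {B : Set V}
    (hB : MeasurableSet B) (hBf : volume B ≠ ∞) {x e : V}
    (h : ∀ ξ ∈ B, |2 * π * inner ℝ (ξ - e) x| ≤ 1) :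
    volume.real B / 2 ≤ ‖𝓕⁻ (B.indicator fun _ => (1 : ℂ)) x‖ := by
  have modulation : ∫ ξ in B, Complex.exp ((2 * π * inner ℝ (ξ - e) x : ℝ) * Complex.I) =
      Complex.exp ((-(2 * π * inner ℝ e x) : ℝ) * Complex.I) *
        𝓕⁻ (B.indicator fun _ => (1 : ℂ)) x := by
    rw [fourierInv_eq', ← integral_indicator hB, ← integral_const_mul]
    congr 1 with ξ
    by_cases hξ : ξ ∈ B
    · rw [Set.indicator_of_mem hξ, Set.indicator_of_mem hξ, smul_eq_mul, mul_one,
        ← Complex.exp_add, inner_sub_left]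
      congr 1
      push_cast
      ring
    · simp [hξ]
  have norm_eq := congrArg norm modulation
  rw [norm_mul, Complex.norm_exp_ofReal_mul_I, one_mul] at norm_eq
  exact norm_eq ▸ (half_le_re_setIntegral_cexp hB hBf (by fun_prop) h).trans (Complex.re_le_norm _)

theorem le_toReal_eLpNorm_of_forall_mem {α E : Type*} [MeasurableSpace α] [NormedAddCommGroup E]
    {μ : Measure α} {f : α → E} {D : Set α} {m : ℝ} (hp : 0 < p) (hf : MemLp f (ENNReal.ofReal p) μ)
    (hD : MeasurableSet D) (hm : 0 ≤ m) (h : ∀ x ∈ D, m ≤ ‖f x‖) :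
    m * μ.real D ^ (1 / p) ≤ (eLpNorm f (ENNReal.ofReal p) μ).toReal := by
  have indicator_le : eLpNorm (D.indicator fun _ => m) (ENNReal.ofReal p) μ ≤
      eLpNorm f (ENNReal.ofReal p) μ := by
    refine eLpNorm_mono fun x => ?_
    by_cases hx : x ∈ D
    · rw [Set.indicator_of_mem hx, norm_of_nonneg hm]
      exact h x hx
    · simp [hx]
  rw [eLpNorm_indicator_const hD (by simpa using hp) ENNReal.ofReal_ne_top,
    ENNReal.toReal_ofReal hp.le] at indicator_le
  simpa only [ENNReal.toReal_mul, ← ENNReal.toReal_rpow, toReal_enorm, norm_of_nonneg hm,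
    ← measureReal_def] using ENNReal.toReal_mono hf.2.ne indicator_le

theorem memLp_indicator_one {B : Set (Rd d)} (hB : MeasurableSet B)
    (hBb : Bornology.IsBounded B) (q : ℝ≥0∞) : MemLp (B.indicator fun _ => (1 : ℂ)) q volume :=
  memLp_indicator_const q hB 1 (Or.inr hBb.measure_lt_top.ne)

/-- The test function `𝓕⁻ 1_B` for a bounded measurable set `B`, as an element of `H^s`. -/
def fourierInvIndicator (s : ℝ) {B : Set (Rd d)} (hB : MeasurableSet B)
    (hBb : Bornology.IsBounded B) : HsFn d s where
  toFun := 𝓕⁻ (B.indicator fun _ => (1 : ℂ))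
  ft := B.indicator fun _ => (1 : ℂ)
  memL2 := memLp_two_fourierInv (memLp_one_iff_integrable.1 (memLp_indicator_one hB hBb 1))
    (memLp_indicator_one hB hBb 2)
  ft_memL2 := memLp_indicator_one hB hBb 2
  isFT := isFT_fourierInv (memLp_one_iff_integrable.1 (memLp_indicator_one hB hBb 1))
  memHs := by
    have hcont : Continuous fun ξ : Rd d => (1 + ‖ξ‖ ^ 2) ^ s :=
      (by fun_prop : Continuous fun ξ : Rd d => 1 + ‖ξ‖ ^ 2).rpow_const
        fun ξ => Or.inl (by positivity)
    have hint : IntegrableOn (fun ξ : Rd d => (1 + ‖ξ‖ ^ 2) ^ s) B :=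
      (hcont.continuousOn.integrableOn_compact hBb.isCompact_closure).mono_set subset_closure
    refine (hint.integrable_indicator hB).congr (Eventually.of_forall fun ξ => ?_)
    by_cases hξ : ξ ∈ B <;> simp [hξ]

variable {B : Set (Rd d)} (hB : MeasurableSet B) (hBb : Bornology.IsBounded B)

theorem memLp_fourierInvIndicator (hp : 2 ≤ p) :
    MemLp (fourierInvIndicator s hB hBb).toFun (ENNReal.ofReal p) := by
  set u := fourierInvIndicator s hB hBb
  set X := max (∫ ξ, ‖u.ft ξ‖) (eLpNorm u.toFun 2 volume).toReal
  refine ⟨u.memL2.1, (eLpNorm_le_of_norm_le_of_eLpNorm_le (X := X) two_pos hp (fun x => ?_)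
    ?_).trans_lt ENNReal.ofReal_lt_top⟩
  · exact (norm_fourierInv_le_integral_norm u.ft x).trans (le_max_left _ _)
  · rw [ENNReal.ofReal_ofNat, ← ENNReal.ofReal_toReal u.memL2.2.ne]
    exact ENNReal.ofReal_le_ofReal (le_max_right _ _)

theorem IsAdmissible.qeps_fourierInvIndicator_le (hg : IsAdmissible s γ c C g) (hγ : 0 ≤ γ)
    (hC : 0 ≤ C) (hε : ε ∈ Set.Ioo 0 1) {l : ℝ} (hl : l ≤ 1 / 2) (hBl : B ⊆ unitShell (Rd d) l) :
    qeps (g ε) (fourierInvIndicator s hB hBb) ≤ C * (ε + l ^ γ) * volume.real B := by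
  rw [mul_comm _ (volume.real B), ← smul_eq_mul, ← setIntegral_const, ← integral_indicator hB]
  refine integral_mono_of_nonneg
    (Eventually.of_forall fun ξ => mul_nonneg (sq_nonneg _) (hg.2.1 ε hε _).le)
    ((integrable_indicator_iff hB).2 (integrableOn_const hBb.measure_lt_top.ne))
    (Eventually.of_forall fun ξ => ?_)
  by_cases hξ : ξ ∈ B
  · simp only [fourierInvIndicator, Set.indicator_of_mem hξ, norm_one, one_pow, one_mul]
    exact (hg.2.2.2 ε hε _ (le_trans (hBl hξ) hl)).2.trans
      (mul_le_mul_of_nonneg_left (shellWeight_le_of_mem_unitShell hγ (hBl hξ)) hC)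
  · simp [fourierInvIndicator, hξ]

theorem le_LpN_fourierInvIndicator {D : Set (Rd d)} (hp : 2 ≤ p) (hD : MeasurableSet D) {e : Rd d}
    (h : ∀ x ∈ D, ∀ ξ ∈ B, |2 * π * inner ℝ (ξ - e) x| ≤ 1) :
    volume.real B / 2 * volume.real D ^ (1 / p) ≤
      LpN p (fourierInvIndicator s hB hBb).toFun :=
  le_toReal_eLpNorm_of_forall_mem (by linarith) (memLp_fourierInvIndicator hB hBb hp) hD
    (by positivity) fun x hx =>
      half_volume_le_norm_fourierInv_indicator hB hBb.measure_lt_top.ne (h x hx)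

/-- The test function `𝓕⁻ 1_B` has no cancellation on the dual set `D`. -/
theorem IsAdmissible.exists_mem_RayleighSet_le (hg : IsAdmissible s γ c C g) (hγ : 0 ≤ γ)
    (hC : 0 ≤ C) (hε : ε ∈ Set.Ioo 0 1) (hp : 2 ≤ p) {l : ℝ} (hl : l ≤ 1 / 2)
    (hBl : B ⊆ unitShell (Rd d) l) (hB : MeasurableSet B)
    (hB₀ : 0 < volume.real B) {D : Set (Rd d)}
    (hD : MeasurableSet D) (hD₀ : 0 < volume.real D) {e : Rd d}
    (h : ∀ x ∈ D, ∀ ξ ∈ B, |2 * π * inner ℝ (ξ - e) x| ≤ 1) :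
    ∃ t ∈ RayleighSet d s p (g ε) fun _ => True,
      t ≤ 4 * C * (ε + l ^ γ) / (volume.real B * volume.real D ^ (2 / p)) := by
  have hBb := (isBounded_unitShell l).subset hBl
  have hLp := le_LpN_fourierInvIndicator (s := s) hB hBb hp hD h
  have hq := hg.qeps_fourierInvIndicator_le hB hBb hγ hC hε hl hBl
  set u := fourierInvIndicator s hB hBb
  have hL₀ : 0 < volume.real B / 2 * volume.real D ^ (1 / p) := by positivity
  refine ⟨_, ⟨u, trivial, fun hu => ?_, memLp_fourierInvIndicator hB hBb hp, rfl⟩, ?_⟩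
  · have : LpN p u.toFun = 0 := by simp [LpN, eLpNorm_congr_ae hu]
    linarith
  have D_eq : (volume.real D ^ (1 / p)) ^ 2 = volume.real D ^ (2 / p) := by
    rw [← rpow_mul_natCast hD₀.le]
    congr 1
    push_cast
    ring
  calc qeps (g ε) u / LpN p u.toFun ^ 2
      ≤ C * (ε + l ^ γ) * volume.real B / (volume.real B / 2 * volume.real D ^ (1 / p)) ^ 2 := by
        gcongr
        exact (hg.qeps_nonneg hε u).trans hq
    _ = 4 * C * (ε + l ^ γ) / (volume.real B * volume.real D ^ (2 / p)) := by
        rw [mul_pow, D_eq]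
        field_simp
        ring

end TestFunctions

section Annulus

variable {d : ℕ} [NeZero d] {s γ p c C : ℝ}

theorem exists_mem_RayleighSet_le_annulus (hγ : 0 < γ) (hp : 2 ≤ p) (hC : 0 < C) :
    ∃ K > 0, ∀ g, IsAdmissible s γ c C g → ∀ ε ∈ Set.Ioo (0 : ℝ) 1, ε ^ (1 / γ) ≤ 1 / 2 →
      ∃ t ∈ RayleighSet d s p (g ε) fun _ => True, t ≤ K * ε ^ (1 - 1 / γ) := by
  have : Nontrivial (Rd d) := Module.nontrivial_of_finrank_pos (R := ℝ)
    (by rw [finrank_euclideanSpace_fin]; exact NeZero.pos d)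
  obtain ⟨k, hk, volume_ge⟩ := exists_le_volume_unitShell (V := Rd d)
  set D := Metric.ball (0 : Rd d) (1 / 12)
  have hD₀ : 0 < volume.real D :=
    ENNReal.toReal_pos (Metric.measure_ball_pos _ _ (by norm_num)).ne' measure_ball_lt_top.ne
  refine ⟨8 * C / (k * volume.real D ^ (2 / p)), by positivity, fun g hg ε hε hl => ?_⟩
  have hε₀ : 0 < ε := hε.1
  set l := ε ^ (1 / γ) with l_def
  have hl₀ : 0 < l := by positivity
  have l_rpow : l ^ γ = ε := by rw [l_def, ← rpow_mul hε₀.le, one_div_mul_cancel hγ.ne', rpow_one]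
  have hvol : k * l ≤ volume.real (unitShell (Rd d) l) :=
    (ENNReal.ofReal_le_iff_le_toReal (volume_unitShell_lt_top l).ne).1
      (volume_ge l hl₀ (by linarith))
  have no_oscillation : ∀ x ∈ D, ∀ ξ ∈ unitShell (Rd d) l, |2 * π * inner ℝ (ξ - 0) x| ≤ 1 := by
    intro x hx ξ hξ
    have hx' : ‖x‖ ≤ 1 / 12 := (mem_ball_zero_iff.1 hx).le
    have hξ' : ‖ξ‖ ≤ 3 / 2 := by linarith [(abs_le.1 (show |‖ξ‖ - 1| ≤ l from hξ)).2]
    rw [sub_zero, abs_mul, abs_of_pos two_pi_pos]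
    calc 2 * π * |inner ℝ ξ x| ≤ 2 * 4 * (3 / 2 * (1 / 12)) := by
          gcongr
          · exact pi_le_four
          · exact (abs_real_inner_le_norm ξ x).trans (by gcongr)
      _ = 1 := by norm_num
  obtain ⟨t, ht, hle⟩ := hg.exists_mem_RayleighSet_le hγ.le hC.le hε hp hl subset_rfl
    (measurableSet_unitShell l) (by nlinarith) measurableSet_ball hD₀ no_oscillation
  refine ⟨t, ht, hle.trans ?_⟩
  calc 4 * C * (ε + l ^ γ) / (volume.real (unitShell (Rd d) l) * volume.real D ^ (2 / p))
      ≤ 4 * C * (ε + l ^ γ) / (k * l * volume.real D ^ (2 / p)) := by gcongr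
    _ = 8 * C / (k * volume.real D ^ (2 / p)) * (ε / l) := by
        rw [l_rpow]
        field_simp
        ring
    _ = 8 * C / (k * volume.real D ^ (2 / p)) * ε ^ (1 - 1 / γ) := by rw [rpow_sub hε₀, rpow_one]

end Annulus

section Boxes

variable {d : ℕ} {a : Rd d} {r R : Fin d → ℝ}

/-- The closed box with centre `a` and half side lengths `r`. -/
def coordBox (a : Rd d) (r : Fin d → ℝ) : Set (Rd d) := {x | ∀ i, |x i - a i| ≤ r i}

theorem coordBox_eq_preimage_Icc (a : Rd d) (r : Fin d → ℝ) :
    coordBox a r = (MeasurableEquiv.toLp 2 (Fin d → ℝ)).symm ⁻¹'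
      Set.Icc (fun i => a i - r i) (fun i => a i + r i) := by
  ext x
  change (∀ i, |x i - a i| ≤ r i) ↔ (∀ i, a i - r i ≤ x i) ∧ ∀ i, x i ≤ a i + r i
  simp only [abs_sub_le_iff, sub_le_iff_le_add, ← forall_and]
  exact forall_congr' fun i => ⟨fun h => ⟨by linarith, by linarith⟩,
    fun h => ⟨by linarith, by linarith⟩⟩

theorem measurableSet_coordBox (a : Rd d) (r : Fin d → ℝ) : MeasurableSet (coordBox a r) := by
  rw [coordBox_eq_preimage_Icc]
  exact (MeasurableEquiv.measurable _) measurableSet_Icc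

theorem volume_real_coordBox (a : Rd d) (hr : ∀ i, 0 ≤ r i) :
    volume.real (coordBox a r) = 2 ^ d * ∏ i, r i := by
  rw [measureReal_def, coordBox_eq_preimage_Icc,
    (EuclideanSpace.volume_preserving_symm_measurableEquiv_toLp (Fin d)).measure_preimage_equiv,
    volume_Icc_pi, ← ENNReal.ofReal_prod_of_nonneg fun i _ => by linarith [hr i],
    ENNReal.toReal_ofReal (Finset.prod_nonneg fun i _ => by linarith [hr i])]
  simp only [add_sub_sub_cancel, ← two_mul, Finset.prod_mul_distrib, Finset.prod_const,
    Finset.card_univ, Fintype.card_fin]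

theorem abs_inner_sub_le_of_mem_coordBox {x ξ : Rd d} (hξ : ξ ∈ coordBox a r)
    (hx : x ∈ coordBox 0 R) : |inner ℝ (ξ - a) x| ≤ ∑ i, r i * R i := by
  rw [PiLp.inner_apply]
  refine (Finset.abs_sum_le_sum_abs _ _).trans (Finset.sum_le_sum fun i _ => ?_)
  have hxi : |x i| ≤ R i := by simpa using hx i
  calc |inner ℝ ((ξ - a) i) (x i)| ≤ |ξ i - a i| * |x i| :=
        abs_real_inner_le_norm _ _
    _ ≤ r i * R i := mul_le_mul (hξ i) hxi (abs_nonneg _) ((abs_nonneg _).trans (hξ i))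

end Boxes

section Knapp

variable {d : ℕ} {s γ p c C δ : ℝ}

theorem rpow_knapp_exponent {ε : ℝ} (hε : 0 < ε) (hγ : γ ≠ 0) (hp : p ≠ 0) :
    ε * ((√(ε ^ (1 / γ)) ^ (d + 1)) ^ (2 / p) / √(ε ^ (1 / γ)) ^ (d + 1)) =
      ε ^ (1 - ((d : ℝ) + 1) * (1 / 2 - 1 / p) / γ) := by
  have sqrt_pow : √(ε ^ (1 / γ)) ^ (d + 1) = ε ^ (((d : ℝ) + 1) / (2 * γ)) := by
    rw [sqrt_eq_rpow, ← rpow_mul hε.le, ← rpow_mul_natCast hε.le]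
    congr 1
    push_cast
    field_simp
  have exponent_eq : 1 - ((d : ℝ) + 1) * (1 / 2 - 1 / p) / γ =
      1 + (((d : ℝ) + 1) / (2 * γ) * (2 / p) - ((d : ℝ) + 1) / (2 * γ)) := by
    field_simp
    ring
  rw [exponent_eq, rpow_add hε, rpow_one, rpow_sub hε, rpow_mul hε.le, sqrt_pow]

variable [NeZero d]

/-- Half side lengths of the Knapp box at scale `δ`: `δ` in the direction normal to the sphere and
`√δ` in the tangential directions, so that the box stays within `O(δ)` of the sphere. -/
def knappRadius (d : ℕ) [NeZero d] (δ : ℝ) (i : Fin d) : ℝ := if i = 0 then δ else √δ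

theorem knappRadius_pos (hδ : 0 < δ) (i : Fin d) : 0 < knappRadius d δ i := by
  unfold knappRadius
  split_ifs <;> positivity

theorem prod_knappRadius (hδ : 0 ≤ δ) : ∏ i, knappRadius d δ i = √δ ^ (d + 1) := by
  have factor (i : Fin d) : knappRadius d δ i = √δ * if i = 0 then √δ else 1 := by
    unfold knappRadius
    split_ifs
    · exact (mul_self_sqrt hδ).symm
    · rw [mul_one]
  rw [Finset.prod_congr rfl fun i _ => factor i, Finset.prod_mul_distrib, Finset.prod_ite_eq',
    if_pos (Finset.mem_univ 0), Finset.prod_const, Finset.card_univ, Fintype.card_fin, pow_succ]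

theorem coordBox_knappRadius_subset_unitShell (hδ : 0 ≤ δ) (hδ₁ : δ ≤ 1) :
    coordBox (EuclideanSpace.single 0 1) (knappRadius d δ) ⊆ unitShell (Rd d) ((3 + d) * δ) := by
  intro ξ hξ
  have normal : |ξ 0 - 1| ≤ δ := by simpa [knappRadius] using hξ 0
  have tangential (j) (hj : j ≠ 0) : ξ j ^ 2 ≤ δ := by
    have : |ξ j| ≤ √δ := by simpa [knappRadius, hj] using hξ j
    rwa [← sqrt_sq_eq_abs, sqrt_le_sqrt_iff hδ] at this
  have norm_sq : ‖ξ‖ ^ 2 = ξ 0 ^ 2 + ∑ j ∈ Finset.univ.erase 0, ξ j ^ 2 := by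
    simp [EuclideanSpace.norm_sq_eq]
  have sum_nonneg : 0 ≤ ∑ j ∈ Finset.univ.erase 0, ξ j ^ 2 :=
    Finset.sum_nonneg fun j _ => sq_nonneg _
  have sum_le : ∑ j ∈ Finset.univ.erase 0, ξ j ^ 2 ≤ d * δ := by
    calc ∑ j ∈ Finset.univ.erase 0, ξ j ^ 2 ≤ ∑ _j ∈ Finset.univ.erase (0 : Fin d), δ :=
          Finset.sum_le_sum fun j hj => tangential j (Finset.ne_of_mem_erase hj)
      _ ≤ ∑ _j : Fin d, δ := Finset.sum_le_sum_of_subset_of_nonneg (Finset.erase_subset _ _)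
          fun _ _ _ => hδ
      _ = d * δ := by simp
  have sq_near : |‖ξ‖ ^ 2 - 1| ≤ (3 + d) * δ := by
    rw [abs_le] at normal ⊢
    rw [norm_sq]
    constructor <;> nlinarith
  change |‖ξ‖ - 1| ≤ (3 + d) * δ
  calc |‖ξ‖ - 1| ≤ |‖ξ‖ - 1| * |‖ξ‖ + 1| := by
        refine le_mul_of_one_le_right (abs_nonneg _) ?_
        rw [abs_of_nonneg (by positivity)]
        exact le_add_of_nonneg_left (norm_nonneg ξ)
    _ = |‖ξ‖ ^ 2 - 1| := by rw [← abs_mul]; ring_nf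
    _ ≤ (3 + d) * δ := sq_near

/-- Half side lengths of a box dual to the Knapp box, small enough that the characters with
frequencies in the Knapp box do not oscillate on it. -/
def knappDualRadius (d : ℕ) [NeZero d] (δ : ℝ) (i : Fin d) : ℝ := (8 * d * knappRadius d δ i)⁻¹

theorem knappDualRadius_pos (hδ : 0 < δ) (i : Fin d) : 0 < knappDualRadius d δ i := by
  have hd : 0 < (d : ℝ) := Nat.cast_pos.2 (NeZero.pos d)
  exact inv_pos.2 (mul_pos (by positivity) (knappRadius_pos hδ i))

theorem prod_knappDualRadius (hδ : 0 ≤ δ) :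
    ∏ i, knappDualRadius d δ i = (8 * (d : ℝ))⁻¹ ^ d / √δ ^ (d + 1) := by
  simp only [knappDualRadius, mul_inv (8 * (d : ℝ)), Finset.prod_mul_distrib, Finset.prod_const,
    Finset.prod_inv_distrib, prod_knappRadius hδ, Finset.card_univ, Fintype.card_fin,
    div_eq_mul_inv]

theorem abs_two_pi_mul_inner_le_one_of_mem_knapp (hδ : 0 < δ) {a x ξ : Rd d}
    (hx : x ∈ coordBox 0 (knappDualRadius d δ)) (hξ : ξ ∈ coordBox a (knappRadius d δ)) :
    |2 * π * inner ℝ (ξ - a) x| ≤ 1 := by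
  have hd : (d : ℝ) ≠ 0 := NeZero.ne _
  have sum_eq : ∑ i, knappRadius d δ i * knappDualRadius d δ i = 1 / 8 := by
    have (i : Fin d) : knappRadius d δ i * knappDualRadius d δ i = (8 * (d : ℝ))⁻¹ := by
      have := (knappRadius_pos hδ i).ne'
      unfold knappDualRadius
      field_simp
    simp only [this, Finset.sum_const, Finset.card_univ, Fintype.card_fin, nsmul_eq_mul]
    field_simp
  rw [abs_mul, abs_of_pos two_pi_pos]
  calc 2 * π * |inner ℝ (ξ - a) x| ≤ 2 * 4 * (1 / 8) := by
        gcongr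
        · exact pi_le_four
        · exact (abs_inner_sub_le_of_mem_coordBox hξ hx).trans_eq sum_eq
    _ = 1 := by norm_num

theorem exists_mem_RayleighSet_le_knapp (hγ : 0 < γ) (hp : 2 ≤ p) (hC : 0 < C) :
    ∃ K > 0, ∀ g, IsAdmissible s γ c C g → ∀ ε ∈ Set.Ioo (0 : ℝ) 1,
      (3 + d) * ε ^ (1 / γ) ≤ 1 / 2 → ∃ t ∈ RayleighSet d s p (g ε) fun _ => True,
        t ≤ K * ε ^ (1 - ((d : ℝ) + 1) * (1 / 2 - 1 / p) / γ) := by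
  have hd : 0 < (d : ℝ) := Nat.cast_pos.2 (NeZero.pos d)
  set L : ℝ := 2 ^ d * (8 * (d : ℝ))⁻¹ ^ d
  have hL : 0 < L := by positivity
  refine ⟨4 * C * (1 + (3 + d) ^ γ) / (2 ^ d * L ^ (2 / p)), by positivity, fun g hg ε hε hl => ?_⟩
  have hε₀ : 0 < ε := hε.1
  rw [← rpow_knapp_exponent hε₀ hγ.ne' (by linarith)]
  set δ := ε ^ (1 / γ) with δ_def
  have hδ₀ : 0 < δ := by positivity
  have δ_rpow : δ ^ γ = ε := by rw [δ_def, ← rpow_mul hε₀.le, one_div_mul_cancel hγ.ne', rpow_one]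
  have volume_box (a : Rd d) :
      volume.real (coordBox a (knappRadius d δ)) = 2 ^ d * √δ ^ (d + 1) := by
    rw [volume_real_coordBox a fun i => (knappRadius_pos hδ₀ i).le, prod_knappRadius hδ₀.le]
  have volume_dual : volume.real (coordBox 0 (knappDualRadius d δ)) = L / √δ ^ (d + 1) := by
    rw [volume_real_coordBox 0 fun i => (knappDualRadius_pos hδ₀ i).le,
      prod_knappDualRadius hδ₀.le, mul_div_assoc]
  obtain ⟨t, ht, hle⟩ := hg.exists_mem_RayleighSet_le hγ.le hC.le hε hp hl
    (coordBox_knappRadius_subset_unitShell hδ₀.le (by nlinarith)) (measurableSet_coordBox _ _)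
    (by rw [volume_box]; positivity) (measurableSet_coordBox _ _)
    (by rw [volume_dual]; positivity)
    fun x hx ξ hξ => abs_two_pi_mul_inner_le_one_of_mem_knapp hδ₀ hx hξ
  refine ⟨t, ht, hle.trans_eq ?_⟩
  rw [volume_box, volume_dual, div_rpow hL.le (by positivity), mul_rpow (by positivity) hδ₀.le,
    δ_rpow]
  field_simp

theorem exists_mem_RayleighSet_le (hγ : 0 < γ) (hp : 2 ≤ p) (hC : 0 < C) :
    ∃ K > 0, ∃ ε₀ ∈ Set.Ioo (0 : ℝ) 1, ∀ g, IsAdmissible s γ c C g → ∀ ε, 0 < ε → ε < ε₀ →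
      ∃ t ∈ RayleighSet d s p (g ε) fun _ => True, t ≤ K * ε ^ rayleighExponent d γ p := by
  obtain ⟨K₁, hK₁, annulus⟩ := exists_mem_RayleighSet_le_annulus (d := d) (s := s) (c := c) hγ hp hC
  obtain ⟨K₂, -, knapp⟩ := exists_mem_RayleighSet_le_knapp (d := d) (s := s) (c := c) hγ hp hC
  have hd : 0 < (2 * (3 + (d : ℝ)))⁻¹ := by positivity
  have hd₁ : (2 * (3 + (d : ℝ)))⁻¹ < 1 :=
    inv_lt_one_of_one_lt₀ (by linarith [d.cast_nonneg (α := ℝ)])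
  refine ⟨max K₁ K₂, by positivity, (2 * (3 + (d : ℝ)))⁻¹ ^ γ,
    ⟨by positivity, rpow_lt_one hd.le hd₁ hγ⟩, fun g hg ε hε hεε₀ => ?_⟩
  have hε' : ε ∈ Set.Ioo 0 1 := ⟨hε, hεε₀.trans (rpow_lt_one hd.le hd₁ hγ)⟩
  have knapp_scale : (3 + d) * ε ^ (1 / γ) ≤ 1 / 2 := by
    have := rpow_le_rpow hε.le hεε₀.le (show 0 ≤ 1 / γ by positivity)
    rw [← rpow_mul hd.le, mul_one_div_cancel hγ.ne', rpow_one, ← one_div,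
      le_div_iff₀ (by positivity)] at this
    linarith
  have annulus_scale : ε ^ (1 / γ) ≤ 1 / 2 := by
    nlinarith [show 0 ≤ ε ^ (1 / γ) by positivity, d.cast_nonneg (α := ℝ)]
  unfold rayleighExponent
  rcases min_cases 1 (((d : ℝ) + 1) * (1 / 2 - 1 / p)) with ⟨h, -⟩ | ⟨h, -⟩ <;> rw [h]
  · obtain ⟨t, ht, hle⟩ := annulus g hg ε hε' annulus_scale
    exact ⟨t, ht, hle.trans (by gcongr; exact le_max_left _ _)⟩
  · obtain ⟨t, ht, hle⟩ := knapp g hg ε hε' knapp_scale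
    exact ⟨t, ht, hle.trans (by gcongr; exact le_max_right _ _)⟩

end Knapp

theorem lt_two_mul_mul_div_of_lt_sobolev {d s p : ℝ} (hs : 0 < s) (hp : 2 < p)
    (hps : s < d / 2 → p < 2 * d / (d - 2 * s)) : d < 2 * s * (p / (p - 2)) := by
  rw [← mul_div_assoc, lt_div_iff₀ (by linarith)]
  rcases lt_or_ge s (d / 2) with h | h
  · have hp' := hps h
    rw [lt_div_iff₀ (by linarith)] at hp'
    linarith
  · nlinarith

theorem stmt1_general (d : ℕ) (hd : 2 ≤ d) (s γ p c C : ℝ) (hs : 0 < s) (hγ : 1 < γ)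
    (hp : 2 < p) (hps : s < (d : ℝ) / 2 → p < 2 * (d : ℝ) / ((d : ℝ) - 2 * s))
    (hc : 0 < c) (hcC : c ≤ C) :
    ∃ c' C' ε₀ : ℝ, 0 < c' ∧ c' ≤ C' ∧ 0 < ε₀ ∧ ε₀ < 1 ∧
      ∀ g : ℝ → ℝ → ℝ, IsAdmissible s γ c C g →
        ∀ ε : ℝ, 0 < ε → ε < ε₀ →
          c' * ε ^ rayleighExponent d γ p ≤ Rayleigh d s p (g ε) (fun _ => True) ∧
            Rayleigh d s p (g ε) (fun _ => True) ≤ C' * ε ^ rayleighExponent d γ p := by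
  have : NeZero d := ⟨by omega⟩
  have hC : 0 < C := hc.trans_le hcC
  obtain ⟨c', hc', lower⟩ := exists_le_of_mem_RayleighSet hd hs hγ hp
    (lt_two_mul_mul_div_of_lt_sobolev hs hp hps) hc hC.le
  obtain ⟨K, -, ε₀, hε₀, upper⟩ := exists_mem_RayleighSet_le (d := d) (s := s) (c := c)
    (zero_lt_one.trans hγ) hp.le hC
  refine ⟨c', max c' K, ε₀, hc', le_max_left _ _, hε₀.1, hε₀.2, fun g hg ε hε hεε₀ => ?_⟩
  have lower_bound := lower g hg ε ⟨hε, hεε₀.trans hε₀.2⟩ fun _ => True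
  obtain ⟨t, ht, htK⟩ := upper g hg ε hε hεε₀
  have htK' : t ≤ max c' K * ε ^ rayleighExponent d γ p :=
    htK.trans (by gcongr; exact le_max_right _ _)
  exact ⟨le_csInf ⟨t, ht⟩ lower_bound, (csInf_le ⟨_, lower_bound⟩ ht).trans htK'⟩

/-- Theorem 1.3, non-symmetric case: `R^∘_ε(p) ≅ ε^{1-min(1,α₁)/γ}`
as `ε → 0⁺`, where `α₁ = (d+1)(1/2 - 1/p)`. -/
theorem stmt1 (d : ℕ) (hd : 2 ≤ d) (s γ p c C : ℝ)
    (hs : (d : ℝ) / ((d : ℝ) + 1) < s) (hγ : 1 < γ)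
    (hp : 2 < p) (hps : s < (d : ℝ) / 2 → p < 2 * (d : ℝ) / ((d : ℝ) - 2 * s))
    (hc : 0 < c) (hcC : c ≤ C) :
    ∃ c' C' ε₀ : ℝ, 0 < c' ∧ c' ≤ C' ∧ 0 < ε₀ ∧ ε₀ < 1 ∧
      ∀ g : ℝ → ℝ → ℝ, IsAdmissible s γ c C g →
        ∀ ε : ℝ, 0 < ε → ε < ε₀ →
          c' * ε ^ (1 - min 1 (((d : ℝ) + 1) * (1/2 - 1/p)) / γ)
              ≤ Rayleigh d s p (g ε) (fun _ => True) ∧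
            Rayleigh d s p (g ε) (fun _ => True)
              ≤ C' * ε ^ (1 - min 1 (((d : ℝ) + 1) * (1/2 - 1/p)) / γ) :=
  stmt1_general d hd s γ p c C (lt_of_le_of_lt (by positivity) hs) hγ hp hps hc hcC
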